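/- (Theorem 2.1, equation (2.3).) For all positive integers a, b, s and all integers k_1, …, k_s with 0 < k_1 < k_2 < ⋯ < k_s ≤ a/2, the number of lozenge tilings of H_{a,2b}(k_1,…,k_s) that are invariant under rotation by 180° about the center of the region equals the square of the number of lozenge tilings of H_{a,2b}(k_1,…,k_s) that are invariant both under this 180° rotation and under reflection across the vertical symmetry axis; that is, M_⊙(H_{a,2b}(k_1,…,k_s)) = M_{⊙,|}(H_{a,2b}(k_1,…,k_s))². -/

import Mathlib

/-!
Geometric setup: the triangular lattice is drawn in the plane (identified with `ℝ × ℝ`)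
so that one family of lattice lines is vertical.  Lattice vertices are generated by
`v1 = (√3/2, 1/2)` and `v2 = (0,1)`, anchored so that the bottom vertex of the western
vertical side of the hexagon is at the origin.

The hexagon with side lengths `a, a, 2b, a, a, 2b` (clockwise from the northwestern side)
then has vertices `(0,0)`, `(0,2b)`, `(a√3/2, a/2+2b)`, `(a√3, 2b)`, `(a√3, 0)`,
`(a√3/2, -a/2)`; its center is `(a√3/2, b)` and its horizontal symmetry axis is `y = b`.
-/

noncomputable section

abbrev Pt : Type := ℝ × ℝ

namespace PP

/-- √3, the ratio of the long diagonal of a unit lozenge to its side. -/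
def s3 : ℝ := Real.sqrt 3

/-- The vertices of the triangular lattice (one family of lattice lines vertical). -/
def triLattice : Set Pt :=
  {p | ∃ m n : ℤ, p = ((m : ℝ) * (s3 / 2), (m : ℝ) / 2 + (n : ℝ))}

/-- The six unit vectors along lattice directions. -/
def unitVecs : Set Pt :=
  {(0, 1), (0, -1), (s3 / 2, 1 / 2), (-(s3 / 2), -(1 / 2)),
    (s3 / 2, -(1 / 2)), (-(s3 / 2), 1 / 2)}

/-- A (unit) lozenge of the triangular lattice: the union of two unit lattice triangles
sharing an edge, i.e. the convex hull of `p, p+u, p+v, p+u+v` for a lattice vertex `p`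
and two distinct non-opposite lattice unit vectors `u, v`. -/
def IsLozenge (L : Set Pt) : Prop :=
  ∃ p u v : Pt, p ∈ triLattice ∧ u ∈ unitVecs ∧ v ∈ unitVecs ∧ u ≠ v ∧ u ≠ -v ∧
    L = convexHull ℝ {p, p + u, p + v, p + u + v}

/-- A lozenge tiling of a region `R`: a set of lozenges covering `R` whose interiors
are pairwise disjoint. -/
def IsLozengeTiling (R : Set Pt) (T : Set (Set Pt)) : Prop :=
  (∀ L ∈ T, IsLozenge L) ∧ ⋃₀ T = R ∧
    ∀ L ∈ T, ∀ L' ∈ T, L ≠ L' → interior L ∩ interior L' = ∅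

/-- The hexagon with side lengths `A, A, 2b, A, A, 2b`, clockwise from the NW side. -/
def hexagon (A b : ℕ) : Set Pt :=
  convexHull ℝ
    {((0 : ℝ), (0 : ℝ)), ((0 : ℝ), 2 * (b : ℝ)),
      ((A : ℝ) * (s3 / 2), (A : ℝ) / 2 + 2 * (b : ℝ)),
      ((A : ℝ) * s3, 2 * (b : ℝ)), ((A : ℝ) * s3, (0 : ℝ)),
      ((A : ℝ) * (s3 / 2), -((A : ℝ) / 2))}

/-- The left-pointing triangular hole of side 2 whose vertical (right) side lies at
distance `2k` (in units of `√3` times half the lattice spacing, i.e. at `x = k√3`)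
from the left side of the hexagon, centered on the horizontal symmetry axis `y = b`. -/
def leftHole (b k : ℕ) : Set Pt :=
  convexHull ℝ
    {((k : ℝ) * s3, (b : ℝ) - 1), ((k : ℝ) * s3, (b : ℝ) + 1), (((k : ℝ) - 1) * s3, (b : ℝ))}

/-- The mirror image of `leftHole b k` across the vertical symmetry axis of the hexagon:
a right-pointing triangular hole of side 2. -/
def rightHole (A b k : ℕ) : Set Pt :=
  convexHull ℝ
    {(((A : ℝ) - k) * s3, (b : ℝ) - 1), (((A : ℝ) - k) * s3, (b : ℝ) + 1),
      (((A : ℝ) - k + 1) * s3, (b : ℝ))}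

/-- The region `H_{A,2b}(k_1,…,k_s)`: the hexagon with side lengths `A, A, 2b, A, A, 2b`,
with the (open) triangular holes `leftHole (k i)` and their mirror images removed. -/
def Hreg (A b s : ℕ) (k : Fin s → ℕ) : Set Pt :=
  hexagon A b \ ⋃ i : Fin s, (interior (leftHole b (k i)) ∪ interior (rightHole A b (k i)))

/-- The horizontal lattice rhombus of side `t` centered at the center `(A√3/2, b)`
of the hexagon. -/
def centralRhombus (A b t : ℕ) : Set Pt :=
  convexHull ℝ
    {((A : ℝ) * (s3 / 2) - (t : ℝ) * (s3 / 2), (b : ℝ)),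
      ((A : ℝ) * (s3 / 2) + (t : ℝ) * (s3 / 2), (b : ℝ)),
      ((A : ℝ) * (s3 / 2), (b : ℝ) - (t : ℝ) / 2),
      ((A : ℝ) * (s3 / 2), (b : ℝ) + (t : ℝ) / 2)}

/-- The region `H_{A,2b}(k_1,…,k_s; t)`: `H_{A,2b}(k_1,…,k_s)` with the (open) central
horizontal rhombus of side `t` also removed. -/
def HregC (A b s : ℕ) (k : Fin s → ℕ) (t : ℕ) : Set Pt :=
  Hreg A b s k \ interior (centralRhombus A b t)

/-- Rotation by `180°` about the center `(A√3/2, b)` of the hexagon. -/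
def rot180 (A b : ℕ) (p : Pt) : Pt := ((A : ℝ) * s3 - p.1, 2 * (b : ℝ) - p.2)

/-- Reflection across the vertical symmetry axis `x = A√3/2` of the hexagon. -/
def reflV (A : ℕ) (p : Pt) : Pt := ((A : ℝ) * s3 - p.1, p.2)

/-- A tiling is invariant under rotation by `180°` about the center of the region. -/
def RotInvariant (A b : ℕ) (T : Set (Set Pt)) : Prop :=
  ∀ L ∈ T, rot180 A b '' L ∈ T

/-- A tiling is invariant under reflection across the vertical symmetry axis. -/
def ReflInvariant (A : ℕ) (T : Set (Set Pt)) : Prop :=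
  ∀ L ∈ T, reflV A '' L ∈ T

/-- `M_⊙(R)`: the number of lozenge tilings of `R` invariant under rotation by `180°`
about the center (of the hexagon with parameters `A`, `b` from which `R` was built). -/
def Mrot (A b : ℕ) (R : Set Pt) : ℕ :=
  Nat.card {T : Set (Set Pt) // IsLozengeTiling R T ∧ RotInvariant A b T}

/-- `M_{⊙,|}(R)`: the number of lozenge tilings of `R` invariant both under rotation by
`180°` about the center and under reflection across the vertical symmetry axis. -/
def MrotRefl (A b : ℕ) (R : Set Pt) : ℕ :=
  Nat.card {T : Set (Set Pt) //
    IsLozengeTiling R T ∧ RotInvariant A b T ∧ ReflInvariant A T}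

end PP


section
open Finset
namespace Fock
variable {ι : Type*} [LinearOrder ι] {R : Type*} [CommRing R]

def sg (R : Type*) [CommRing R] (S : Finset ι) (x : ι) : R := (-1) ^ (S.filter (· < x)).card

def wedge (f : ι → R) (Ψ : Finset ι → R) (S : Finset ι) : R :=
  ∑ x ∈ S, sg R S x * f x * Ψ (S.erase x)

def ann (x : ι) (Ψ : Finset ι → R) (S : Finset ι) : R :=
  if x ∈ S then 0 else sg R S x * Ψ (insert x S)

def W : List (ι → R) → Finset ι → R
  | [] => fun S => if S = ∅ then 1 else 0
  | f :: l => wedge f (W l)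

theorem sg_sq (S : Finset ι) (x : ι) : sg R S x * sg R S x = 1 := by
  simp [sg, ← mul_pow]

theorem sg_insert_lt {S : Finset ι} {x y : ι} (hx : x ∉ S) (h : x < y) :
    sg R (insert x S) y = - sg R S y := by
  simp only [sg]
  rw [filter_insert, if_pos h, card_insert_of_notMem (by simp [hx]), pow_succ]; ring

theorem sg_insert_ge {S : Finset ι} {x y : ι} (h : y ≤ x) :
    sg R (insert x S) y = sg R S y := by
  simp only [sg]
  rw [filter_insert, if_neg (not_lt.2 h)]

theorem sg_erase_lt {S : Finset ι} {x y : ι} (hx : x ∈ S) (h : x < y) :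
    sg R (S.erase x) y = - sg R S y := by
  conv_rhs => rw [← insert_erase hx]
  rw [sg_insert_lt (by simp) h, neg_neg]

theorem sg_erase_ge {S : Finset ι} {x y : ι} (h : y ≤ x) :
    sg R (S.erase x) y = sg R S y := by
  by_cases hx : x ∈ S
  · conv_rhs => rw [← insert_erase hx]
    rw [sg_insert_ge h]
  · rw [erase_eq_of_notMem hx]

theorem ann_wedge (x : ι) (f : ι → R) (Ψ : Finset ι → R) (S : Finset ι) :
    ann x (wedge f Ψ) S = f x * Ψ S - wedge f (ann x Ψ) S := by
  by_cases hx : x ∈ S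
  · have : wedge f (ann x Ψ) S = f x * Ψ S := by
      unfold wedge
      rw [Finset.sum_eq_single_of_mem x hx]
      · simp only [ann, mem_erase, ne_eq, not_true, false_and, if_false]
        rw [insert_erase hx, sg_erase_ge le_rfl]
        linear_combination (f x * Ψ S) * sg_sq (R := R) S x
      · intro y _ hy
        simp [ann, mem_erase, hx, hy.symm]
    rw [this]; simp [ann, hx]
  · simp only [ann, hx, if_false, wedge]
    rw [sum_insert hx, erase_insert hx, mul_add, mul_sum, sg_insert_ge le_rfl]
    rw [sub_eq_add_neg, ← sum_neg_distrib]
    congr 1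
    · linear_combination (f x * Ψ S) * sg_sq (R := R) S x
    · apply sum_congr rfl
      intro y hy
      have hxy : x ≠ y := fun h => hx (h ▸ hy)
      have hx' : x ∉ S.erase y := fun h => hx (mem_of_mem_erase h)
      rw [if_neg hx', erase_insert_of_ne hxy]
      rcases lt_or_gt_of_ne hxy with h | h
      · rw [sg_insert_lt hx h, sg_erase_ge h.le]; ring
      · rw [sg_insert_ge h.le, sg_erase_lt hy h]; ring

theorem wedge_sum {κ : Type*} (s : Finset κ) (f : ι → R) (c : κ → R) (Ψ : κ → Finset ι → R)
    (S : Finset ι) :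
    wedge f (fun S => ∑ k ∈ s, c k * Ψ k S) S = ∑ k ∈ s, c k * wedge f (Ψ k) S := by
  simp only [wedge, mul_sum]
  rw [sum_comm]
  exact sum_congr rfl fun _ _ => sum_congr rfl fun _ _ => by ring

theorem ann_W (x : ι) : ∀ {n : ℕ} (f : Fin (n + 1) → ι → R) (S : Finset ι),
    ann x (W (List.ofFn f)) S =
      ∑ j : Fin (n + 1), ((-1) ^ (j : ℕ) * f j x) * W (List.ofFn (fun i => f (j.succAbove i))) S
  | 0, f, S => by
      simp only [List.ofFn_succ, W, ann_wedge]
      simp only [List.ofFn_zero, W, Fin.sum_univ_succ]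
      simp [wedge, ann]
  | n + 1, f, S => by
      rw [List.ofFn_succ, W, ann_wedge]
      have : ann x (W (List.ofFn fun i => f (Fin.succ i))) = fun S =>
        ∑ j : Fin (n + 1), ((-1) ^ (j : ℕ) * f j.succ x) *
          W (List.ofFn (fun i => f (j.succAbove i).succ)) S := by
        funext S; exact ann_W x (fun i => f i.succ) S
      rw [this, wedge_sum, Fin.sum_univ_succ (n := n + 1), sub_eq_add_neg, ← sum_neg_distrib]
      congr 1
      · simp
      · apply sum_congr rfl
        intro j _
        rw [List.ofFn_succ (n := n), W]
        simp only [Fin.succ_succAbove_succ, Fin.val_succ, Fin.succ_succAbove_zero]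
        ring

theorem W_card (l : List (ι → R)) (S : Finset ι) (h : S.card ≠ l.length) : W l S = 0 := by
  induction l generalizing S with
  | nil => simp only [W]; rw [if_neg]; rintro rfl; simp at h
  | cons f l ih =>
    simp only [W, wedge]
    apply sum_eq_zero
    intro x hx
    rw [ih, mul_zero]
    rw [card_erase_of_mem hx]
    have := card_pos.2 ⟨x, hx⟩
    simp at h; omega


theorem sum_pairs [Fintype ι] (g : ι → Finset ι → R) :
    ∑ S : Finset ι, ∑ x ∈ S, g x S =
      ∑ x : ι, ∑ S : Finset ι, if x ∈ S then 0 else g x (insert x S) := by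
  have h1 : ∀ S : Finset ι, ∑ x ∈ S, g x S = ∑ x : ι, if x ∈ S then g x S else 0 := by
    intro S; simp
  simp only [h1]
  rw [sum_comm]
  apply sum_congr rfl
  intro x _
  rw [← sum_filter]
  have h2 : ∀ S : Finset ι, (if x ∈ S then 0 else g x (insert x S)) =
    if x ∉ S then g x (insert x S) else 0 := by intro S; split_ifs <;> simp_all
  simp only [h2]
  rw [← sum_filter]
  refine sum_nbij' (fun S => S.erase x) (fun S => insert x S) ?_ ?_ ?_ ?_ ?_
  · intro S; simp
  · intro S; simp
  · intro S hS; exact insert_erase (by simpa using hS)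
  · intro S hS; exact erase_insert (by simpa using hS)
  · intro S hS; rw [insert_erase (by simpa using hS)]

theorem sum_wedge_mul [Fintype ι] (f : ι → R) (Ψ G : Finset ι → R) :
    ∑ S, wedge f Ψ S * G S = ∑ x, f x * ∑ S, Ψ S * ann x G S := by
  simp only [wedge, sum_mul]
  rw [sum_pairs (fun x S => sg R S x * f x * Ψ (S.erase x) * G S)]
  apply sum_congr rfl; intro x _
  rw [mul_sum]
  apply sum_congr rfl; intro S _
  unfold ann
  split_ifs with h
  · simp
  · rw [erase_insert h, sg_insert_ge le_rfl]; ring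

theorem cauchyBinet [Fintype ι] : ∀ {n : ℕ} (f g : Fin n → ι → R),
    ∑ S, W (List.ofFn f) S * W (List.ofFn g) S =
      Matrix.det (Matrix.of fun i j => ∑ x, f i x * g j x)
  | 0, f, g => by simp [W]
  | n + 1, f, g => by
    rw [List.ofFn_succ, W, sum_wedge_mul, Matrix.det_succ_row_zero]
    simp only [ann_W, mul_sum]
    rw [sum_comm' (t' := univ) (s' := fun _ => univ) (by simp)]
    rw [sum_congr rfl (fun S _ => sum_comm)]
    rw [sum_comm]
    apply sum_congr rfl; intro j _
    have := cauchyBinet (fun i => f i.succ) (fun i => g (j.succAbove i))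
    have e : (Matrix.of fun i j => ∑ x, f i x * g j x).submatrix Fin.succ j.succAbove =
      Matrix.of fun i k => ∑ x, f (Fin.succ i) x * g (j.succAbove k) x := by ext; simp
    rw [e, ← this, mul_sum]
    apply sum_congr rfl; intro S _
    simp only [Matrix.of_apply, mul_sum, sum_mul]
    apply sum_congr rfl; intro x _
    ring

theorem orderEmb_erase {n : ℕ} (S : Finset ι) (h : S.card = n + 1) (j : Fin (n + 1))
    (h' : (S.erase (S.orderEmbOfFin h j)).card = n) (i : Fin n) :
    (S.erase (S.orderEmbOfFin h j)).orderEmbOfFin h' i = S.orderEmbOfFin h (j.succAbove i) := by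
  have := Finset.orderEmbOfFin_unique h' (f := fun i => S.orderEmbOfFin h (j.succAbove i))
    (fun i => by simp [mem_erase, Fin.succAbove_ne])
    ((S.orderEmbOfFin h).strictMono.comp (Fin.strictMono_succAbove j))
  exact (congrFun this i).symm

theorem sg_orderEmb {n : ℕ} (S : Finset ι) (h : S.card = n) (j : Fin n) :
    sg R S (S.orderEmbOfFin h j) = (-1) ^ (j : ℕ) := by
  unfold sg
  congr 1
  have : S.filter (· < S.orderEmbOfFin h j) = (univ.filter (· < j)).map (S.orderEmbOfFin h).toEmbedding := by
    ext x
    simp only [mem_filter, mem_map, mem_univ, true_and]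
    constructor
    · rintro ⟨hx, hlt⟩
      have : x ∈ Set.range (S.orderEmbOfFin h) := by rw [range_orderEmbOfFin]; exact hx
      obtain ⟨i, rfl⟩ := this
      exact ⟨i, by simpa using hlt, rfl⟩
    · rintro ⟨i, hi, rfl⟩
      exact ⟨orderEmbOfFin_mem _ _ _, by simpa using hi⟩
  rw [this, card_map]; have h2 : univ.filter (· < j) = Iio j := by ext; simp
  rw [h2, Fin.card_Iio]

theorem W_eq_det : ∀ {n : ℕ} (f : Fin n → ι → R) (S : Finset ι) (h : S.card = n),
    W (List.ofFn f) S = Matrix.det (Matrix.of fun i j => f i (S.orderEmbOfFin h j))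
  | 0, f, S, h => by
    have : S = ∅ := by simpa using h
    subst this; simp [W]
  | n + 1, f, S, h => by
    rw [List.ofFn_succ, W, Matrix.det_succ_row_zero, wedge]
    have hS : S = univ.map (S.orderEmbOfFin h).toEmbedding := by
      rw [Finset.map_orderEmbOfFin_univ]
    conv_lhs => rw [sum_congr hS (fun _ _ => rfl)]
    rw [sum_map]
    apply sum_congr rfl; intro j _
    have h' : (S.erase (S.orderEmbOfFin h j)).card = n := by
      rw [card_erase_of_mem (orderEmbOfFin_mem _ _ _), h]; rfl
    rw [RelEmbedding.coe_toEmbedding, W_eq_det _ _ h', sg_orderEmb]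
    simp only [Matrix.of_apply]
    congr 2
    ext i k
    simp [orderEmb_erase]

theorem W_cons_self {n : ℕ} (f : Fin n → ι → R) (i : Fin n) (S : Finset ι) :
    W (f i :: List.ofFn f) S = 0 := by
  by_cases h : S.card = n + 1
  · have e : f i :: List.ofFn f = List.ofFn (Fin.cons (f i) f : Fin (n + 1) → ι → R) := by
      simp [List.ofFn_succ]
    rw [e, W_eq_det _ _ h]
    apply Matrix.det_zero_of_row_eq (Fin.succ_ne_zero i).symm
    ext j; simp
  · apply W_card; simpa using h

/-! ### the square identity -/

def u (R : Type*) [CommRing R] (x y : ι) : R := if x = y then 1 else if x < y then 2 else 0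

theorem sum_u_right (E : Finset ι) (x : ι) :
    ∑ y ∈ E, u R x y * sg R E y = -(-1) ^ E.card + if x ∈ E then 0 else sg R E x := by
  induction E using Finset.induction_on_max with
  | empty => simp [sg]
  | insert m E hm ih =>
    have hmE : m ∉ E := fun h => lt_irrefl _ (hm m h)
    have c1 : sg R E m = (-1) ^ E.card := by
      unfold sg; rw [filter_true_of_mem hm]
    rw [sum_insert hmE, sg_insert_ge le_rfl, c1, card_insert_of_notMem hmE, pow_succ]
    rw [sum_congr rfl (fun y hy => by rw [sg_insert_ge (hm y hy).le]), ih]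
    rcases lt_trichotomy x m with h | h | h
    · rw [u, if_neg h.ne, if_pos h, sg_insert_ge h.le]
      simp only [mem_insert, h.ne, false_or]; ring
    · subst h
      simp [u, hmE, c1]
    · have hx : x ∉ E := fun h' => lt_asymm h (hm x h')
      have c2 : sg R E x = (-1) ^ E.card := by
        unfold sg; rw [filter_true_of_mem (fun y hy => (hm y hy).trans h)]
      rw [u, if_neg h.ne', if_neg h.not_gt, sg_insert_lt hmE h]
      simp only [mem_insert, h.ne', false_or, hx, if_false, c2]; ring

theorem sum_u_left (E : Finset ι) (x : ι) :
    ∑ y ∈ E, u R y x * sg R E y = 1 - if x ∈ E then 0 else sg R E x := by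
  induction E using Finset.induction_on_max with
  | empty => simp [sg]
  | insert m E hm ih =>
    have hmE : m ∉ E := fun h => lt_irrefl _ (hm m h)
    have c1 : sg R E m = (-1) ^ E.card := by
      unfold sg; rw [filter_true_of_mem hm]
    rw [sum_insert hmE, sg_insert_ge le_rfl, c1]
    rw [sum_congr rfl (fun y hy => by rw [sg_insert_ge (hm y hy).le]), ih]
    rcases lt_trichotomy x m with h | h | h
    · rw [u, if_neg h.ne', if_neg h.not_gt, sg_insert_ge h.le]
      simp only [mem_insert, h.ne, false_or]; ring
    · subst h
      simp [u, hmE, c1]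
    · have hx : x ∉ E := fun h' => lt_asymm h (hm x h')
      have c2 : sg R E x = (-1) ^ E.card := by
        unfold sg; rw [filter_true_of_mem (fun y hy => (hm y hy).trans h)]
      rw [u, if_neg h.ne, if_pos h, sg_insert_lt hmE h]
      simp only [mem_insert, h.ne', false_or, hx, if_false, c2]; ring

variable [Fintype ι]

def F {n : ℕ} (f : Fin n → ι → R) : R := ∑ S, W (List.ofFn f) S

def wv {n : ℕ} (f : Fin (n + 1) → ι → R) (j : Fin (n + 1)) : R :=
  (-1) ^ (j : ℕ) * F (fun i => f (j.succAbove i))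

def kk {n : ℕ} (f : Fin n → ι → R) (x : ι) : R :=
  ∑ E, if x ∈ E then 0 else sg R E x * W (List.ofFn f) E

def Bm {n : ℕ} (f : Fin n → ι → R) : Matrix (Fin n) (Fin n) R :=
  Matrix.of fun i j => ∑ x, ∑ y, f i x * u R x y * f j y

theorem sum_f_wv {n : ℕ} (f : Fin (n + 1) → ι → R) (x : ι) :
    ∑ j, f j x * wv f j = ∑ S, ann x (W (List.ofFn f)) S := by
  simp only [ann_W, wv, F]
  rw [sum_comm]
  apply sum_congr rfl; intro j _
  rw [← mul_sum]; ring

theorem sum_ann (c : ι → R) (Ψ : Finset ι → R) :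
    ∑ x, c x * ∑ S, ann x Ψ S = ∑ E, Ψ E * ∑ x ∈ E, c x * sg R E x := by
  simp only [mul_sum]
  rw [sum_pairs (fun x E => Ψ E * (c x * sg R E x))]
  apply sum_congr rfl; intro x _
  apply sum_congr rfl; intro S _
  unfold ann
  split_ifs
  · simp
  · rw [sg_insert_ge le_rfl]; ring

theorem W_card_mul {n : ℕ} (f : Fin n → ι → R) (E : Finset ι) :
    W (List.ofFn f) E * (-1) ^ E.card = W (List.ofFn f) E * (-1) ^ n := by
  by_cases h : E.card = n
  · rw [h]
  · rw [W_card _ _ (by simpa using h)]; simp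

theorem u_right {n : ℕ} (f : Fin (n + 1) → ι → R) (x : ι) :
    ∑ y, u R x y * ∑ j, f j y * wv f j = (-1) ^ n * F f + kk f x := by
  simp only [sum_f_wv]
  rw [sum_ann]
  simp only [sum_u_right, kk, F, mul_sum]
  rw [← sum_add_distrib]
  apply sum_congr rfl; intro E _
  have := W_card_mul f E
  split_ifs
  · rw [pow_succ] at this; linear_combination -this
  · rw [pow_succ] at this; linear_combination -this

theorem u_left {n : ℕ} (f : Fin (n + 1) → ι → R) (x : ι) :
    ∑ y, u R y x * ∑ j, f j y * wv f j = F f - kk f x := by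
  simp only [sum_f_wv]
  rw [sum_ann]
  simp only [sum_u_left, kk, F]
  rw [← sum_sub_distrib]
  apply sum_congr rfl; intro E _
  split_ifs <;> ring

theorem sum_f_kk {n : ℕ} (f : Fin n → ι → R) (i : Fin n) : ∑ x, f i x * kk f x = 0 := by
  have h : ∑ S, W (f i :: List.ofFn f) S = 0 := sum_eq_zero fun S _ => W_cons_self f i S
  rw [← h]
  simp only [W, wedge]
  rw [sum_pairs (fun x S => sg R S x * f i x * W (List.ofFn f) (S.erase x))]
  apply sum_congr rfl; intro x _
  simp only [kk, mul_sum]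
  apply sum_congr rfl; intro S _
  split_ifs with h
  · simp
  · rw [erase_insert h, sg_insert_ge le_rfl]; ring

theorem Bw {n : ℕ} (f : Fin (n + 1) → ι → R) (i : Fin (n + 1)) :
    ∑ j, Bm f i j * wv f j = (-1) ^ n * F f * ∑ x, f i x := by
  have : ∑ j, Bm f i j * wv f j = ∑ x, f i x * ∑ y, u R x y * ∑ j, f j y * wv f j := by
    simp only [Bm, Matrix.of_apply, mul_sum, sum_mul]
    rw [sum_comm]
    apply sum_congr rfl; intro x _
    rw [sum_comm]
    apply sum_congr rfl; intro y _
    apply sum_congr rfl; intro j _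
    ring
  rw [this]
  simp only [u_right, mul_add, sum_add_distrib]
  rw [sum_f_kk, add_zero, ← sum_mul]; ring

theorem wB {n : ℕ} (f : Fin (n + 1) → ι → R) (i : Fin (n + 1)) :
    ∑ j, Bm f j i * wv f j = F f * ∑ x, f i x := by
  have : ∑ j, Bm f j i * wv f j = ∑ x, f i x * ∑ y, u R y x * ∑ j, f j y * wv f j := by
    simp only [Bm, Matrix.of_apply, mul_sum, sum_mul]
    rw [sum_comm' (t' := univ) (s' := fun _ => univ) (by simp)]
    rw [sum_congr rfl (fun y _ => sum_comm)]
    rw [sum_comm]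
    apply sum_congr rfl; intro x _
    apply sum_congr rfl; intro y _
    apply sum_congr rfl; intro j _
    ring
  rw [this]
  simp only [u_left, mul_sub, sum_sub_distrib]
  rw [sum_f_kk, sub_zero, ← sum_mul]; ring

theorem two_vw {n : ℕ} (f : Fin (n + 1) → ι → R) :
    2 * ∑ j, (∑ x, f j x) * wv f j = (1 + (-1) ^ n) * F f := by
  have : ∑ j, (∑ x, f j x) * wv f j = ∑ x, 1 * ∑ j, f j x * wv f j := by
    simp only [one_mul, sum_mul]
    rw [sum_comm]
  rw [this]
  simp only [sum_f_wv]
  rw [sum_ann, mul_sum, F, mul_sum]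
  apply sum_congr rfl; intro E _
  rcases E.eq_empty_or_nonempty with rfl | ⟨z, hz⟩
  · rw [W_card _ _ (by simp)]; simp
  have h1 := sum_u_left (R := R) E z
  have h2 := sum_u_right (R := R) E z
  have h3 : 2 * ∑ x ∈ E, 1 * sg R E x = 1 - (-1) ^ E.card := by
    have : 2 * ∑ x ∈ E, 1 * sg R E x = ∑ y ∈ E, u R y z * sg R E y + ∑ y ∈ E, u R z y * sg R E y := by
      rw [mul_sum, ← sum_add_distrib]
      apply sum_congr rfl; intro y _
      rw [← add_mul]
      have : u R y z + u R z y = 2 := by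
        unfold u
        rcases lt_trichotomy y z with h | h | h
        · simp [h, h.ne, h.ne', h.not_gt]
        · simp [h]; norm_num
        · simp [h, h.ne, h.ne', h.not_gt]
      rw [this]; ring
    rw [this, h1, h2]; simp [hz]; ring
  have h4 := W_card_mul f E
  rw [pow_succ] at h4
  linear_combination (W (List.ofFn f) E) * h3 - h4

/-! rank one perturbation of antisymmetric matrices -/

theorem det_rank_one {n : ℕ} (K : Matrix (Fin n) (Fin n) R) (v : Fin n → R) :
    ∃ d : R, (∀ t : R, (K + Matrix.of fun i j => t * (v i * v j)).det = K.det + t * d) ∧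
      ∀ a b : R, (Matrix.of (Fin.cons (Fin.cons a (fun j => b * v j))
        (fun i => Fin.cons (v i) (K i))) : Matrix (Fin (n + 1)) (Fin (n + 1)) R).det
          = a * K.det - b * d := by
  set d : R := -(Matrix.of (Fin.cons (Fin.cons 0 (fun j => v j))
        (fun i => Fin.cons (v i) (K i))) : Matrix (Fin (n + 1)) (Fin (n + 1)) R).det with hd
  have key : ∀ a b : R, (Matrix.of (Fin.cons (Fin.cons a (fun j => b * v j))
        (fun i => Fin.cons (v i) (K i))) : Matrix (Fin (n + 1)) (Fin (n + 1)) R).det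
          = a * K.det - b * d := by
    intro a b
    rw [hd, Matrix.det_succ_row_zero, Matrix.det_succ_row_zero, Fin.sum_univ_succ,
      Fin.sum_univ_succ]
    simp only [Matrix.of_apply, Fin.cons_zero, Fin.cons_succ, Fin.val_zero, pow_zero, one_mul,
      mul_zero, zero_mul, zero_add, mul_neg, sub_neg_eq_add, mul_sum]
    congr 1
    apply sum_congr rfl; intro j _
    rw [show ∀ A B C D : R, A * (b * B) * C = b * (A * B * C) by intros; ring]
    · rfl
    · exact 0
  refine ⟨d, fun t => ?_, key⟩
  have h1 := key 1 (-t)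
  have h2 : (Matrix.of (Fin.cons (Fin.cons 1 (fun j => (-t) * v j))
        (fun i => Fin.cons (v i) (K i))) : Matrix (Fin (n + 1)) (Fin (n + 1)) R).det =
      (K + Matrix.of fun i j => t * (v i * v j)).det := by
    have e : (Matrix.of (Fin.cons (Fin.cons 1 (fun j => (-t) * v j))
        (fun i => Fin.cons (v i) (K i))) : Matrix (Fin (n + 1)) (Fin (n + 1)) R) =
      (Matrix.of (Fin.cons (Fin.cons 1 (fun _ => 0))
        (fun i => Fin.cons (v i) ((1 : Matrix (Fin n) (Fin n) R) i))) : Matrix (Fin (n + 1)) (Fin (n + 1)) R) *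
      (Matrix.of (Fin.cons (Fin.cons 1 (fun j => (-t) * v j))
        (fun i => Fin.cons 0 ((K + Matrix.of fun i j => t * (v i * v j)) i))) : Matrix (Fin (n + 1)) (Fin (n + 1)) R) := by
      ext i j
      rw [Matrix.mul_apply, Fin.sum_univ_succ]
      refine Fin.cases ?_ (fun i => ?_) i <;> refine Fin.cases ?_ (fun j => ?_) j
      · simp
      · simp
      · simp
      · simp only [Matrix.of_apply, Fin.cons_succ, Fin.cons_zero]
        rw [← Matrix.mul_apply]
        simp; ring
    rw [e, Matrix.det_mul, Matrix.det_succ_row_zero, Matrix.det_succ_column_zero, Fin.sum_univ_succ,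
      Fin.sum_univ_succ]
    simp only [Matrix.of_apply, Fin.cons_zero, Fin.cons_succ]
    simp only [Fin.val_zero, pow_zero, mul_one, mul_zero, zero_mul, sum_const_zero, add_zero,
      one_mul, Fin.zero_succAbove]
    rw [show ∀ A B : Matrix (Fin n) (Fin n) R, A = 1 → A.det * B.det = B.det by
      rintro A B rfl; simp]
    · rfl
    · ext i j; rfl
  rw [← h2, h1]; ring

end Fock

end

section
open Finset
namespace Fock
variable {ι : Type*} [LinearOrder ι] {R : Type*} [CommRing R] [Fintype ι]
theorem det_antisymm [IsDomain R] [CharZero R] {n : ℕ} (K : Matrix (Fin n) (Fin n) R)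
    (v : Fin n → R) (hK : K.transpose = -K) (c e : R) (hc : 2 * c = 1 + e) (he : e = (-1) ^ n) :
    (Matrix.of (Fin.cons (Fin.cons c (fun j => v j))
        (fun i => Fin.cons (e * v i) (fun j => K i j + v i * v j))) : Matrix (Fin (n + 1)) (Fin (n + 1)) R).det
      = (K + Matrix.of fun i j => (v i * v j)).det := by
  obtain ⟨d, h1, h2⟩ := det_rank_one K v
  have ha : (K + Matrix.of fun i j => (v i * v j)).det = K.det + d := by
    have := h1 1; simpa using this
  have hb : K.det - d = (-1) ^ n * (K.det + d) := by
    have h3 := h1 (-1)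
    have : (K + Matrix.of fun i j => (-1) * (v i * v j)) =
      -(K + Matrix.of fun i j => (v i * v j)).transpose := by
      rw [Matrix.transpose_add, hK]; ext i j; simp; ring
    rw [this, Matrix.det_neg, Matrix.det_transpose, ha] at h3
    simp only [Fintype.card_fin] at h3
    rw [h3]; ring
  rw [ha]
  obtain ⟨d', h1', h2'⟩ := det_rank_one (K + Matrix.of fun i j => (v i * v j)) v
  have hd' : d' = d := by
    have a1 := h1' (-1)
    have : (K + Matrix.of fun i j => (v i * v j)) + (Matrix.of fun i j => (-1) * (v i * v j)) = K := by
      ext i j; simp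
    rw [this, ha] at a1; linear_combination a1
  have two : (2 : R) ≠ 0 := two_ne_zero
  rcases Nat.even_or_odd n with hn | hn
  · rw [hn.neg_one_pow] at hb he
    have hd : d = 0 := by
      apply mul_left_cancel₀ two; linear_combination -hb
    have hc1 : c = 1 := by apply mul_left_cancel₀ two; rw [hc, he]; norm_num
    have := h2' 1 1
    simp only [one_mul, hd', hd, ha, sub_zero, add_zero] at this
    rw [hc1, he, hd, add_zero, ← this]
    congr 1; ext i j
    refine Fin.cases ?_ (fun i => ?_) i <;> refine Fin.cases ?_ (fun j => ?_) j <;> simp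
  · rw [hn.neg_one_pow] at hb he
    have hd : K.det = 0 := by
      apply mul_left_cancel₀ two; linear_combination hb
    have hc1 : c = 0 := by apply mul_left_cancel₀ two; rw [hc, he]; norm_num
    have := h2' 0 1
    simp only [one_mul, hd', zero_mul, zero_sub] at this
    rw [hd, zero_add, ← neg_neg d, ← this, hc1, he]
    rw [Matrix.det_succ_column_zero, Matrix.det_succ_column_zero, ← sum_neg_distrib]
    apply sum_congr rfl; intro i _
    refine Fin.cases ?_ (fun i => ?_) i
    · simp
    · simp only [Matrix.of_apply, Fin.cons_succ, Fin.cons_zero]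
      rw [show ∀ A B C : R, A * (-1 * B) * C = -(A * B * C) by intros; ring]
      congr 3
      ext r c
      simp only [Matrix.submatrix_apply, Matrix.of_apply]
      refine Fin.cases ?_ (fun q => ?_) (i.succ.succAbove r) <;> simp

theorem Bm_succ {n : ℕ} (f : Fin (n + 1) → ι → R) (i j : Fin n) :
    Bm f i.succ j.succ = Bm (fun i => f i.succ) i j := rfl

theorem square_step [IsDomain R] [CharZero R] {n : ℕ} (f : Fin (n + 1) → ι → R)
    (h0 : F (fun i : Fin n => f i.succ) ≠ 0)
    (ih : (Bm (fun i : Fin n => f i.succ)).det = F (fun i : Fin n => f i.succ) ^ 2) :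
    (Bm f).det = F f ^ 2 := by
  set v : Fin (n + 1) → R := fun i => ∑ x, f i x with hv
  set C : Matrix (Fin (n + 1)) (Fin (n + 1)) R := Matrix.updateCol 1 0 (wv f) with hC
  have hdC : C.det = F (fun i : Fin n => f i.succ) := by
    rw [hC, Matrix.det_succ_row_zero, Fin.sum_univ_succ]
    simp only [Matrix.updateCol_self, Fin.val_zero, pow_zero, one_mul]
    rw [sum_eq_zero (fun j _ => by
      simp [Matrix.updateCol_apply, Matrix.one_apply, (Fin.succ_ne_zero j).symm]), add_zero]
    have : (Matrix.updateCol (1 : Matrix (Fin (n + 1)) (Fin (n + 1)) R) 0 (wv f)).submatrix Fin.succ (Fin.succAbove 0)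
      = 1 := by
      ext i j; simp [Matrix.updateCol_apply, Matrix.one_apply]
    rw [this]; simp [wv]
  set e : R := (-1) ^ n with he
  obtain ⟨c, hc, hcv⟩ : ∃ c : R, 2 * c = 1 + e ∧ ∑ j, v j * wv f j = c * F f := by
    have h2 := two_vw f
    have two : (2 : R) ≠ 0 := two_ne_zero
    rcases Nat.even_or_odd n with hn | hn
    · refine ⟨1, by rw [he, hn.neg_one_pow]; norm_num, ?_⟩
      apply mul_left_cancel₀ two; rw [h2, hn.neg_one_pow]; ring
    · refine ⟨0, by rw [he, hn.neg_one_pow]; norm_num, ?_⟩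
      apply mul_left_cancel₀ two; rw [h2, hn.neg_one_pow]; ring
  have hee : e * e = 1 := by rw [he, ← mul_pow]; simp
  set X : Matrix (Fin (n + 1)) (Fin (n + 1)) R := Matrix.of (Fin.cons (Fin.cons (e * c) (fun j => v j.succ))
        (fun i => Fin.cons (e * v i.succ) (fun j => Bm f i.succ j.succ))) with hX
  have hMC0 : ∀ i, (Bm f * C) i 0 = e * F f * v i := by
    intro i
    rw [Matrix.mul_apply, ← Bw f i]
    simp [hC]
  have hMC1 : ∀ i (j : Fin n), (Bm f * C) i j.succ = Bm f i j.succ := by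
    intro i j
    rw [Matrix.mul_apply]
    simp [hC, Matrix.updateCol_apply, Matrix.one_apply]
  have hD : C.transpose * (Bm f * C) =
      Matrix.diagonal (Fin.cons (F f) (fun _ => 1)) * X * Matrix.diagonal (Fin.cons (F f) (fun _ => 1)) := by
    ext i j
    rw [Matrix.mul_diagonal, Matrix.diagonal_mul, Matrix.mul_apply]
    simp only [Matrix.transpose_apply]
    refine Fin.cases ?_ (fun i => ?_) i <;> refine Fin.cases ?_ (fun j => ?_) j
    · simp only [hMC0]; simp only [Fin.cons_zero, hX, Matrix.of_apply, hC, Matrix.updateCol_self]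
      rw [show ∑ x, wv f x * (e * F f * v x) = e * F f * ∑ x, v x * wv f x by
        rw [mul_sum]; exact sum_congr rfl fun _ _ => by ring, hcv]
      ring
    · simp only [hMC1]; simp only [Fin.cons_zero, Fin.cons_succ, hX, Matrix.of_apply, hC, Matrix.updateCol_self]
      rw [mul_one, ← wB f j.succ]
      exact sum_congr rfl fun _ _ => by ring
    · simp only [hMC0]; simp only [Fin.cons_zero, Fin.cons_succ, hX, Matrix.of_apply, hC]
      simp [Matrix.updateCol_apply, Matrix.one_apply]
      ring
    · simp only [hMC1]; simp only [Fin.cons_succ, hX, Matrix.of_apply, hC]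
      simp [Matrix.updateCol_apply, Matrix.one_apply]
  have hdX : X.det = (Bm (fun i : Fin n => f i.succ)).det := by
    set K : Matrix (Fin n) (Fin n) R := Matrix.of fun i j => Bm f i.succ j.succ - v i.succ * v j.succ
    have hK : K.transpose = -K := by
      ext i j
      simp only [K, Matrix.transpose_apply, Matrix.of_apply, Matrix.neg_apply]
      have : Bm f i.succ j.succ + Bm f j.succ i.succ = 2 * (v i.succ * v j.succ) := by
        simp only [Bm, Matrix.of_apply, hv]
        conv_lhs => arg 2; rw [sum_comm]
        rw [← sum_add_distrib, sum_mul_sum, mul_sum]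
        apply sum_congr rfl; intro x _
        rw [← sum_add_distrib, mul_sum]
        apply sum_congr rfl; intro y _
        have : u R x y + u R y x = 2 := by
          unfold u
          rcases lt_trichotomy x y with h | h | h
          · simp [h, h.ne, h.ne', h.not_gt]
          · simp [h]; norm_num
          · simp [h, h.ne, h.ne', h.not_gt]
        linear_combination (f i.succ x * f j.succ y) * this
      linear_combination this
    have hec : e * c = c := by
      apply mul_left_cancel₀ (two_ne_zero (α := R))
      linear_combination (e - 1) * hc + hee
    have := det_antisymm K (fun i => v i.succ) hK c e hc he
    rw [hX, hec]
    convert this using 2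
    · ext i j
      refine Fin.cases ?_ (fun i => ?_) i <;> refine Fin.cases ?_ (fun j => ?_) j <;> simp [K]
    · ext i j; simp [K, Bm_succ]
  have hdd : (Matrix.diagonal (Fin.cons (F f) (fun _ : Fin n => (1 : R)))).det = F f := by
    rw [Matrix.det_diagonal, Fin.prod_univ_succ]; simp
  have := congrArg Matrix.det hD
  rw [Matrix.det_mul, Matrix.det_mul, Matrix.det_mul, Matrix.det_mul, hdd, hdX, ih,
    Matrix.det_transpose, hdC] at this
  apply mul_left_cancel₀ (pow_ne_zero 2 h0)
  linear_combination this

theorem W_map {S : Type*} [CommRing S] (φ : R →+* S) {ι : Type*} [LinearOrder ι] (l : List (ι → R)) (E : Finset ι) :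
    φ (W l E) = W (l.map (fun f x => φ (f x))) E := by
  induction l generalizing E with
  | nil => simp only [W, List.map_nil]; split_ifs <;> simp
  | cons f l ih =>
    simp [W, wedge, map_sum, ih, sg]

theorem F_map {S : Type*} [CommRing S] (φ : R →+* S) {n : ℕ} (f : Fin n → ι → R) :
    φ (F f) = F (fun i x => φ (f i x)) := by
  simp only [F, map_sum, W_map]
  simp [List.map_ofFn, Function.comp_def]

theorem Bm_map {S : Type*} [CommRing S] (φ : R →+* S) {n : ℕ} (f : Fin n → ι → R) :
    φ (Bm f).det = (Bm (fun i x => φ (f i x))).det := by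
  rw [RingHom.map_det]
  congr 1
  ext i j
  simp [Bm, u, apply_ite φ, map_ofNat]

theorem F_delta {p : ℕ} : ∀ {n : ℕ} (h : n ≤ p),
    F (fun (i : Fin n) (x : Fin p) => if (x : ℕ) = i then (1 : ℤ) else 0) = 1 := by
  intro n h
  unfold F
  rw [sum_eq_single (univ.map (Fin.castLEEmb h))]
  · rw [W_eq_det _ _ (by simp)]
    rw [← Matrix.det_one (n := Fin n)]
    congr 1
    ext i j
    have : ((univ.map (Fin.castLEEmb h)).orderEmbOfFin (by simp) : Fin n → Fin p) = Fin.castLE h :=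
      (Finset.orderEmbOfFin_unique _ (fun i => by simp) (Fin.strictMono_castLE h)).symm
    simp only [Matrix.of_apply]
    rw [this]
    simp [Matrix.one_apply, Fin.ext_iff, eq_comm]
  · intro S _ hS
    by_cases hc : S.card = n
    · rw [W_eq_det _ _ hc]
      obtain ⟨x, hx, hxn⟩ : ∃ x ∈ S, n ≤ (x : ℕ) := by
        by_contra hcon
        push Not at hcon
        apply hS
        apply Finset.eq_of_subset_of_card_le
        · intro x hx
          simp only [mem_map, mem_univ, true_and]
          exact ⟨⟨x, hcon x hx⟩, by ext; simp⟩
        · simp [hc]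
      have : x ∈ Set.range (S.orderEmbOfFin hc) := by rw [range_orderEmbOfFin]; exact hx
      obtain ⟨j, rfl⟩ := this
      apply Matrix.det_eq_zero_of_column_eq_zero j
      intro i
      simp only [Matrix.of_apply]
      rw [if_neg]
      have := i.2; omega
    · exact W_card _ _ (by simpa using hc)
  · simp

theorem square_generic {p : ℕ} : ∀ {n : ℕ} (_ : n ≤ p) (κ : Type) (g : Fin n → κ) (_ : Function.Injective g),
    (Bm (fun (i : Fin n) (x : Fin p) => (MvPolynomial.X (g i, x) : MvPolynomial (κ × Fin p) ℤ))).det =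
     F (fun (i : Fin n) (x : Fin p) => (MvPolynomial.X (g i, x) : MvPolynomial (κ × Fin p) ℤ)) ^ 2
  | 0, h, κ, g, hg => by
    simp [F, W]
  | n + 1, h, κ, g, hg => by
    apply square_step
    · intro h0
      classical
      have := congrArg (MvPolynomial.eval (fun q : κ × Fin p =>
        if ∃ i : Fin n, q.1 = g i.succ ∧ (q.2 : ℕ) = i then (1 : ℤ) else 0)) h0
      rw [F_map, map_zero] at this
      have h1 := F_delta (p := p) (n := n) (by omega)
      rw [show (fun (i : Fin n) (x : Fin p) => MvPolynomial.eval (fun q : κ × Fin p =>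
        if ∃ i : Fin n, q.1 = g i.succ ∧ (q.2 : ℕ) = i then (1 : ℤ) else 0)
          (MvPolynomial.X (g i.succ, x))) = (fun (i : Fin n) (x : Fin p) => if (x : ℕ) = i then (1 : ℤ) else 0) from ?_] at this
      · rw [h1] at this; exact one_ne_zero this
      · funext i x
        simp only [MvPolynomial.eval_X]
        congr 1
        apply propext
        constructor
        · rintro ⟨j, hj, hx⟩
          have := hg hj
          simp at this; subst this; exact hx
        · intro hx; exact ⟨i, rfl, hx⟩
    · exact square_generic (by omega) κ (fun i => g i.succ) (hg.comp (Fin.succ_injective _))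

theorem square {p n : ℕ} (h : n ≤ p) (f : Fin n → Fin p → R) : (Bm f).det = F f ^ 2 := by
  have := square_generic (p := p) h (Fin n) id Function.injective_id
  have := congrArg (MvPolynomial.eval₂Hom (Int.castRingHom R) (fun q => f q.1 q.2)) this
  rw [Bm_map, map_pow, F_map] at this
  simpa using this
end Fock

end

section
open Finset
namespace Fock

def sh (c : ℤ) (S : Finset ℤ) : Finset ℤ := S.map (addRightEmbedding c)

theorem mem_sh {c x : ℤ} {S : Finset ℤ} : x ∈ sh c S ↔ x - c ∈ S := by
  simp only [sh, mem_map, addRightEmbedding_apply]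
  constructor
  · rintro ⟨a, ha, rfl⟩; simpa using ha
  · intro h; exact ⟨_, h, by ring⟩

theorem sh_card (c : ℤ) (S : Finset ℤ) : (sh c S).card = S.card := by simp [sh]

def T (f : ℤ → ℤ) (y : ℤ) : ℤ := f (y - 1) + f (y + 1)

theorem step_W (l : List (ℤ → ℤ)) (S : Finset ℤ) (hpar : ∀ x ∈ S, ∀ y ∈ S, (x - y) % 2 = 0) :
    ∑ V ∈ S.powerset, (if Disjoint (sh (-1) V) (sh 1 (S \ V)) then
      W l (sh (-1) V ∪ sh 1 (S \ V)) else 0) = W (l.map T) S := by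
  by_cases hc : S.card = l.length
  swap
  · rw [W_card _ _ (by simpa using hc)]
    apply sum_eq_zero
    intro V hV
    rw [mem_powerset] at hV
    split_ifs with h
    · apply W_card
      rw [card_union_of_disjoint h, sh_card, sh_card, card_sdiff_of_subset hV]
      have := card_le_card hV
      omega
    · rfl
  obtain ⟨n, f, rfl⟩ : ∃ n, ∃ f : Fin n → ℤ → ℤ, l = List.ofFn f := ⟨_, _, (List.ofFn_get l).symm⟩
  rw [List.length_ofFn] at hc
  set e := S.orderEmbOfFin hc with he
  have hmap : univ.map e.toEmbedding = S := by rw [he, Finset.map_orderEmbOfFin_univ]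
  have hgap : ∀ {j j' : Fin n}, j < j' → e j + 2 ≤ e j' := by
    intro j j' h
    have h1 : e j < e j' := e.strictMono h
    have h2 := hpar _ (orderEmbOfFin_mem S hc j) _ (orderEmbOfFin_mem S hc j')
    simp only [← he] at h2
    omega
  rw [List.map_ofFn, W_eq_det _ _ hc, ← Matrix.det_transpose]
  have h2 : (Matrix.of fun i j => (T ∘ f) i (S.orderEmbOfFin hc j)).transpose.det =
      ∑ s : Finset (Fin n), Matrix.det (Matrix.of
        (s.piecewise (fun j i => f i (e j - 1)) (fun j i => f i (e j + 1)))) :=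
    MultilinearMap.map_add_univ (Matrix.detRowAlternating (n := Fin n) (R := ℤ)).toMultilinearMap
      (fun j i => f i (e j - 1)) (fun j i => f i (e j + 1))
  rw [h2]
  symm
  refine sum_bij (fun s _ => s.map e.toEmbedding) ?_ ?_ ?_ ?_
  · intro s _
    rw [mem_powerset]; conv_rhs => rw [← hmap]
    exact map_subset_map.2 (subset_univ _)
  · intro s _ t _ h; exact map_injective _ h
  · intro V hV
    rw [mem_powerset, ← hmap] at hV
    obtain ⟨s, _, rfl⟩ := subset_map_iff.1 hV
    exact ⟨s, mem_univ _, rfl⟩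
  · intro s _
    have hmem : ∀ j, e j ∈ s.map e.toEmbedding ↔ j ∈ s := by intro j; simp
    have hS : ∀ x, x ∈ S ↔ ∃ j, e j = x := by
      intro x; conv_lhs => rw [← hmap]
      simp
    set c : Fin n → ℤ := fun j => if j ∈ s then e j - 1 else e j + 1 with hcdef
    have hpw : Matrix.of (s.piecewise (fun j i => f i (e j - 1)) (fun j i => f i (e j + 1))) =
      (Matrix.of fun i j => f i (c j)).transpose := by
      ext j i
      simp only [Finset.piecewise, hcdef, Matrix.transpose_apply, Matrix.of_apply]
      split_ifs <;> rfl
    rw [hpw, Matrix.det_transpose]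
    split_ifs with h
    · have hcm : StrictMono c := by
        intro j j' hj
        have := hgap hj
        have hne : c j ≠ c j' := by
          intro hcc
          simp only [hcdef] at hcc
          split_ifs at hcc with a1 a2 a2
          · omega
          · omega
          · have hdl := disjoint_left.1 h
            refine @hdl (e j' - 1) ?_ ?_
            · rw [mem_sh]; simpa using a2
            · rw [mem_sh, ← hcc]
              simp only [mem_sdiff, add_sub_cancel_right, hmem, a1, not_false_iff, and_true]
              exact orderEmbOfFin_mem S hc j
          · omega
        simp only [hcdef] at hne ⊢
        split_ifs at hne ⊢ <;> omega
      have hcard : (sh (-1) (s.map e.toEmbedding) ∪ sh 1 (S \ s.map e.toEmbedding)).card = n := by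
        have : s.map e.toEmbedding ⊆ S := by
          conv_rhs => rw [← hmap]
          exact map_subset_map.2 (subset_univ _)
        rw [card_union_of_disjoint h, sh_card, sh_card, card_sdiff_of_subset this]
        have := card_le_card this
        omega
      rw [W_eq_det _ _ hcard]
      have := orderEmbOfFin_unique hcard (f := c) (by
        intro j
        rw [mem_union, mem_sh, mem_sh, mem_sdiff]
        by_cases hj : j ∈ s
        · left; simp [hcdef, hj]
        · right; simp [hcdef, hj]; exact orderEmbOfFin_mem S hc j) hcm
      rw [this]
    · rw [not_disjoint_iff] at h
      obtain ⟨x, hx1, hx2⟩ := h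
      rw [mem_sh] at hx1 hx2
      rw [mem_sdiff, hS] at hx2
      obtain ⟨⟨j', hj'⟩, hx2⟩ := hx2
      obtain ⟨j, hj, hj2⟩ := mem_map.1 hx1
      simp only [RelEmbedding.coe_toEmbedding] at hj2
      rw [← hj', hmem] at hx2
      apply Matrix.det_zero_of_column_eq (i := j) (j := j')
      · rintro rfl; exact hx2 hj
      · intro i
        simp only [Matrix.of_apply, hcdef, hj, hx2, if_true, if_false]
        congr 1; omega

variable (S0 : Finset ℤ) (hole : ℕ → Finset ℤ) (ok : ℤ → Prop) [DecidablePred ok]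

def P : ℕ → Finset ℤ → Finset (List (Finset ℤ × Finset ℤ))
  | 0, S => if S = S0 then {[]} else ∅
  | m + 1, S => if (∀ w ∈ S, ok w) then S.powerset.biUnion (fun V =>
      if Disjoint (sh (-1) V) (sh 1 (S \ V)) ∧ hole m ⊆ sh (-1) V ∪ sh 1 (S \ V) then
        (P m ((sh (-1) V ∪ sh 1 (S \ V)) \ hole m)).image (List.cons (sh (-1) V, sh 1 (S \ V)))
      else ∅) else ∅

theorem sh_inj {c : ℤ} {U V : Finset ℤ} (h : sh c U = sh c V) : U = V := by
  ext x
  have : x + c ∈ sh c U ↔ x + c ∈ sh c V := by rw [h]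
  simpa [mem_sh] using this

theorem card_P (m : ℕ) (S : Finset ℤ) :
    (P S0 hole ok (m + 1) S).card = if (∀ w ∈ S, ok w) then ∑ V ∈ S.powerset,
      if Disjoint (sh (-1) V) (sh 1 (S \ V)) then
        (if hole m ⊆ sh (-1) V ∪ sh 1 (S \ V) then
        (P S0 hole ok m ((sh (-1) V ∪ sh 1 (S \ V)) \ hole m)).card else 0) else 0 else 0 := by
  rw [P]
  split_ifs with h
  · rw [card_biUnion]
    · apply sum_congr rfl; intro V _
      by_cases h1 : Disjoint (sh (-1) V) (sh 1 (S \ V)) <;>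
      by_cases h2 : hole m ⊆ sh (-1) V ∪ sh 1 (S \ V)
      · simp only [h1, h2, and_self, if_true]
        rw [card_image_of_injective _ List.cons_injective]
      all_goals simp [h1, h2]
    · intro V _ V' _ hne
      rw [Function.onFun, disjoint_left]
      intro l hl hl'
      split_ifs at hl hl'
      · rw [mem_image] at hl hl'
        obtain ⟨a, _, rfl⟩ := hl
        obtain ⟨a', _, h'⟩ := hl'
        simp only [List.cons.injEq, Prod.mk.injEq] at h'
        exact hne (sh_inj h'.1.1.symm)
      all_goals simp_all
  · rfl

theorem mem_P_succ (m : ℕ) (S U D : Finset ℤ) (l : List (Finset ℤ × Finset ℤ)) :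
    (U, D) :: l ∈ P S0 hole ok (m + 1) S ↔ (∀ w ∈ S, ok w) ∧ Disjoint (sh 1 U) (sh (-1) D) ∧
      S = sh 1 U ∪ sh (-1) D ∧ Disjoint U D ∧ hole m ⊆ U ∪ D ∧
      l ∈ P S0 hole ok m ((U ∪ D) \ hole m) := by
  have e1 : ∀ c (A : Finset ℤ), sh c (sh (-c) A) = A := by
    intro c A; ext x; simp [mem_sh]
  have e2 : ∀ c (A : Finset ℤ), sh (-c) (sh c A) = A := by
    intro c A; ext x; simp [mem_sh]
  rw [P]
  constructor
  · intro h
    split_ifs at h with hok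
    · simp only [mem_biUnion, mem_powerset] at h
      obtain ⟨V, hV, h⟩ := h
      split_ifs at h with h1
      · simp only [mem_image, List.cons.injEq, Prod.mk.injEq] at h
        obtain ⟨l', hl', ⟨rfl, rfl⟩, rfl⟩ := h
        refine ⟨hok, ?_, ?_, h1.1, h1.2, hl'⟩
        · rw [e1, e2]; exact disjoint_sdiff
        · rw [e1, e2]; exact (union_sdiff_of_subset hV).symm
      · simp at h
    · simp at h
  · rintro ⟨hok, hd, rfl, hUD, hh, hl⟩
    rw [if_pos hok]
    simp only [mem_biUnion, mem_powerset]
    refine ⟨sh 1 U, subset_union_left, ?_⟩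
    have e3 : (sh 1 U ∪ sh (-1) D) \ sh 1 U = sh (-1) D := by
      rw [union_sdiff_left]; exact sdiff_eq_self_of_disjoint hd.symm
    rw [e3, e2, e1, if_pos ⟨hUD, hh⟩]
    exact mem_image_of_mem _ hl

theorem mem_P_zero (S : Finset ℤ) (l : List (Finset ℤ × Finset ℤ)) :
    l ∈ P S0 hole ok 0 S ↔ S = S0 ∧ l = [] := by
  rw [P]; split_ifs <;> simp_all

theorem mem_P_nil (m : ℕ) (S : Finset ℤ) :
    [] ∉ P S0 hole ok (m + 1) S := by
  rw [P]; split_ifs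
  · simp only [mem_biUnion, not_exists, not_and]
    intro V _
    split_ifs <;> simp
  · simp
end Fock

end

section
open Finset
namespace Fock

def dl (c : ℤ) : ℤ → ℤ := fun x => if x = c then 1 else 0
def nege (h : ℤ → ℤ) : ℤ → ℤ := fun x => h (-x)
def fullL (hs : List (ℤ → ℤ)) : List (ℤ → ℤ) := hs.flatMap fun h => [nege h, h]
def hf (h : ℤ → ℤ) : ℤ → ℤ := fun y => if 0 < y then h y - h (-y) else 0
def hsFrom : ℕ → ℤ → List (ℤ → ℤ)
  | 0, _ => []
  | n + 1, c => dl c :: hsFrom n (c + 2)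
def addh (K : ℕ → Prop) [DecidablePred K] (m : ℕ) (l : List (ℤ → ℤ)) : List (ℤ → ℤ) :=
  if K m then dl 1 :: l else l
def hsL (b : ℕ) (K : ℕ → Prop) [DecidablePred K] : ℕ → List (ℤ → ℤ)
  | 0 => hsFrom b 1
  | m + 1 => (addh K m (hsL b K m)).map T
def S0F (b : ℕ) : Finset ℤ := (Icc (-(2 * b - 1 : ℤ)) (2 * b - 1)).filter (fun x => x % 2 = 1)
def S0H (b : ℕ) : Finset ℤ := (Icc (1 : ℤ) (2 * b - 1)).filter (fun x => x % 2 = 1)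
def holeF (K : ℕ → Prop) [DecidablePred K] (m : ℕ) : Finset ℤ := if K m then {-1, 1} else ∅
def holeH (K : ℕ → Prop) [DecidablePred K] (m : ℕ) : Finset ℤ := if K m then {1} else ∅

def par (m : ℕ) (S : Finset ℤ) : Prop := ∀ x ∈ S, (x + m) % 2 = 1

theorem W_dl_cons (c : ℤ) (l : List (ℤ → ℤ)) (S : Finset ℤ) :
    W (dl c :: l) S = if c ∈ S then sg ℤ S c * W l (S.erase c) else 0 := by
  simp only [W, wedge]
  split_ifs with h
  · rw [sum_eq_single_of_mem c h]
    · simp [dl]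
    · intro x _ hx; simp [dl, hx]
  · apply sum_eq_zero
    intro x hx
    have : x ≠ c := fun hc => h (hc ▸ hx)
    simp [dl, this]

theorem nege_dl (c : ℤ) : nege (dl c) = dl (-c) := by
  funext x; simp only [nege, dl]; congr 1; apply propext; omega

theorem W_pair (c : ℤ) (hc : 0 < c) (l : List (ℤ → ℤ)) (S : Finset ℤ)
    (hS : ∀ x ∈ S, ¬ (-c < x ∧ x < c)) :
    W (nege (dl c) :: dl c :: l) S = if -c ∈ S ∧ c ∈ S then W l ((S.erase (-c)).erase c) else 0 := by
  rw [nege_dl, W_dl_cons, W_dl_cons]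
  by_cases h1 : -c ∈ S
  · by_cases h2 : c ∈ S
    · have : c ∈ S.erase (-c) := mem_erase.2 ⟨by omega, h2⟩
      rw [if_pos h1, if_pos this, if_pos ⟨h1, h2⟩, ← mul_assoc]
      have : sg ℤ (S.erase (-c)) c = sg ℤ S (-c) := by
        unfold sg
        congr 2
        ext x
        simp only [mem_filter, mem_erase]
        constructor
        · rintro ⟨⟨h3, h4⟩, h5⟩
          have := hS x h4; exact ⟨h4, by omega⟩
        · rintro ⟨h3, h4⟩
          exact ⟨⟨by omega, h3⟩, by omega⟩
      rw [this, sg_sq, one_mul]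
    · rw [if_pos h1, if_neg (by simp [h2]), if_neg (by simp [h2]), mul_zero]
  · rw [if_neg h1, if_neg (by simp [h1])]

theorem W_one (c : ℤ) (l : List (ℤ → ℤ)) (S : Finset ℤ)
    (hS : ∀ x ∈ S, c ≤ x) :
    W (dl c :: l) S = if c ∈ S then W l (S.erase c) else 0 := by
  rw [W_dl_cons]
  have : sg ℤ S c = 1 := by
    unfold sg
    rw [filter_false_of_mem (fun x hx => not_lt.2 (hS x hx))]; simp
  rw [this, one_mul]

theorem W_zero {l : List (ℤ → ℤ)} {S : Finset ℤ} {x : ℤ} (hx : x ∈ S) (h : ∀ f ∈ l, f x = 0) :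
    W l S = 0 := by
  induction l generalizing S with
  | nil => simp only [W]; rw [if_neg]; rintro rfl; simp at hx
  | cons f l ih =>
    simp only [W, wedge]
    apply sum_eq_zero
    intro y hy
    by_cases hxy : x = y
    · subst hxy; rw [h f (by simp)]; simp
    · rw [ih (mem_erase.2 ⟨hxy, hx⟩) (fun g hg => h g (by simp [hg])), mul_zero]

theorem W_congr {α : Type*} (l : List α) (p q : α → ℤ → ℤ) (S : Finset ℤ)
    (h : ∀ f ∈ l, ∀ x ∈ S, p f x = q f x) : W (l.map p) S = W (l.map q) S := by
  induction l generalizing S with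
  | nil => rfl
  | cons f l ih =>
    simp only [List.map_cons, W, wedge]
    apply sum_congr rfl
    intro y hy
    rw [h f (by simp) y hy, ih _ (fun g hg x hx => h g (by simp [hg]) x (mem_of_mem_erase hx))]

theorem init_full (n : ℕ) (c : ℤ) (hc : 0 < c) (S : Finset ℤ)
    (hS : ∀ x ∈ S, ¬ (-c < x ∧ x < c)) (hp : ∀ x ∈ S, (x - c) % 2 = 0) :
    W (fullL (hsFrom n c)) S = if S = (Icc (-(c + 2 * n - 2)) (c + 2 * n - 2)).filter
      (fun x => (x - c) % 2 = 0 ∧ ¬ (-c < x ∧ x < c)) then 1 else 0 := by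
  induction n generalizing c S with
  | zero =>
    simp only [hsFrom, fullL, List.flatMap_nil, W]
    congr 1
    apply propext
    constructor
    · rintro rfl; ext x; simp; omega
    · rintro h
      rw [h]; ext x; simp; omega
  | succ n ih =>
    have e : fullL (hsFrom (n + 1) c) = nege (dl c) :: dl c :: fullL (hsFrom n (c + 2)) := by
      simp [fullL, hsFrom]
    rw [e, W_pair c hc _ _ hS]
    by_cases h : -c ∈ S ∧ c ∈ S
    · rw [if_pos h, ih (c + 2) (by omega)]
      · congr 1
        apply propext
        constructor
        · intro h1
          ext x
          have := Finset.ext_iff.1 h1 x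
          simp only [mem_erase, mem_filter, mem_Icc] at this ⊢
          by_cases hx1 : x = c
          · subst hx1; push_cast; simp only [h.2, true_iff]; omega
          · by_cases hx2 : x = -c
            · subst hx2; push_cast; simp only [h.1, true_iff]; omega
            · rw [show x ∈ S ↔ x ≠ c ∧ x ≠ -c ∧ x ∈ S by tauto, this]
              push_cast; omega
        · intro h1
          rw [h1]; ext x
          simp only [mem_erase, mem_filter, mem_Icc]
          push_cast; omega
      · intro x hx
        simp only [mem_erase] at hx
        have := hS x hx.2.2
        have := hp x hx.2.2
        omega
      · intro x hx
        simp only [mem_erase] at hx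
        have := hp x hx.2.2
        omega
    · rw [if_neg h, if_neg]
      intro h1
      apply h
      rw [h1]; simp only [mem_filter, mem_Icc]; push_cast; omega

theorem init_half (n : ℕ) (c : ℤ) (hc : 0 < c) (S : Finset ℤ)
    (hS : ∀ x ∈ S, c ≤ x) (hp : ∀ x ∈ S, (x - c) % 2 = 0) :
    W (hsFrom n c) S = if S = (Icc c (c + 2 * n - 2)).filter
      (fun x => (x - c) % 2 = 0) then 1 else 0 := by
  induction n generalizing c S with
  | zero =>
    simp only [hsFrom, W]
    congr 1
    apply propext
    constructor
    · rintro rfl; ext x; simp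
    · rintro h
      rw [h]; ext x; simp
  | succ n ih =>
    rw [hsFrom, W_one c _ _ hS]
    by_cases h : c ∈ S
    · rw [if_pos h, ih (c + 2) (by omega)]
      · congr 1
        apply propext
        constructor
        · intro h1
          ext x
          have := Finset.ext_iff.1 h1 x
          simp only [mem_erase, mem_filter, mem_Icc] at this ⊢
          by_cases hx1 : x = c
          · subst hx1; push_cast; simp only [h, true_iff]; omega
          · rw [show x ∈ S ↔ x ≠ c ∧ x ∈ S by tauto, this]
            push_cast; omega
        · intro h1
          rw [h1]; ext x
          simp only [mem_erase, mem_filter, mem_Icc]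
          push_cast; omega
      · intro x hx
        simp only [mem_erase] at hx
        have := hS x hx.2
        have := hp x hx.2
        omega
      · intro x hx
        simp only [mem_erase] at hx
        have := hp x hx.2
        omega
    · rw [if_neg h, if_neg]
      intro h1
      apply h
      rw [h1]; simp only [mem_filter, mem_Icc]; push_cast; omega

theorem hf_hsFrom (n : ℕ) (c : ℤ) (hc : 0 < c) : (hsFrom n c).map hf = hsFrom n c := by
  induction n generalizing c with
  | zero => rfl
  | succ n ih =>
    simp only [hsFrom, List.map_cons]
    rw [ih (c + 2) (by omega)]
    congr 1
    funext x
    simp only [hf, dl]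
    split_ifs <;> omega

theorem map_T_full (l : List (ℤ → ℤ)) : (fullL l).map T = fullL (l.map T) := by
  induction l with
  | nil => rfl
  | cons h l ih =>
    have e : ∀ (h : ℤ → ℤ) l, fullL (h :: l) = nege h :: h :: fullL l := by intro h l; simp [fullL]
    rw [e, List.map_cons, List.map_cons, List.map_cons, e, ih]
    congr 1
    funext y; simp only [T, nege]
    rw [add_comm]; congr 2 <;> ring

variable (b : ℕ) (K : ℕ → Prop) [DecidablePred K]

theorem src_par {m : ℕ} {S V : Finset ℤ} (hS : par (m + 1) S) (hV : V ⊆ S) :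
    par m (sh (-1) V ∪ sh 1 (S \ V)) := by
  intro x hx
  rw [mem_union, mem_sh, mem_sh] at hx
  rcases hx with hx | hx
  · have := hS _ (hV hx); push_cast at this; omega
  · have := hS _ (mem_sdiff.1 hx).1; push_cast at this; omega

theorem par_diff {m : ℕ} {S : Finset ℤ} (hS : par m S) (A : Finset ℤ) : par m (S \ A) :=
  fun x hx => hS x (mem_sdiff.1 hx).1

theorem P_full (hK : ∀ m, K m → m % 2 = 0) (m : ℕ) (S : Finset ℤ) (hS : par m S) :
    ((P (S0F b) (holeF K) (fun _ => True) m S).card : ℤ) = W (fullL (hsL b K m)) S := by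
  induction m generalizing S with
  | zero =>
    rw [hsL, init_full b 1 one_pos S]
    · rw [P, S0F]
      have : (Icc (-(2 * b - 1 : ℤ)) (2 * b - 1)).filter (fun x => x % 2 = 1) =
         (Icc (-((1 : ℤ) + 2 * b - 2)) (1 + 2 * b - 2)).filter
           (fun x => (x - 1) % 2 = 0 ∧ ¬ (-1 < x ∧ x < 1)) := by
        ext x; simp only [mem_filter, mem_Icc]; omega
      rw [this]
      split_ifs <;> simp
    · intro x hx; have := hS x hx; push_cast at this; omega
    · intro x hx; have := hS x hx; push_cast at this; omega
  | succ m ih =>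
    rw [card_P, if_pos (by simp), hsL, ← map_T_full, ← step_W]
    · push_cast
      apply sum_congr rfl
      intro V hV
      have hsrc := src_par hS (mem_powerset.1 hV)
      set src := sh (-1) V ∪ sh 1 (S \ V)
      congr 1
      rw [ih _ (par_diff hsrc _)]
      simp only [holeF, addh]
      by_cases hm : K m
      · have e : fullL (dl 1 :: hsL b K m) = nege (dl 1) :: dl 1 :: fullL (hsL b K m) := by simp [fullL]
        simp only [hm, if_true]
        rw [e, W_pair 1 one_pos]
        · simp only [insert_subset_iff, singleton_subset_iff]
          congr 2
          ext x; simp only [mem_sdiff, mem_erase, mem_insert, mem_singleton]; tauto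
        · intro x hx; have := hsrc x hx; have := hK m hm; omega
      · simp [hm]
    · intro x hx y hy; have := hS x hx; have := hS y hy; omega

theorem P_pos {S0 : Finset ℤ} {hole : ℕ → Finset ℤ} (h0 : ∀ x ∈ S0, 0 < x) (m : ℕ) (S : Finset ℤ)
    {x : ℤ} (hx : x ∈ S) (hx0 : ¬ 0 < x) : P S0 hole (fun x => 0 < x) m S = ∅ := by
  cases m with
  | zero => rw [P, if_neg]; rintro rfl; exact hx0 (h0 _ hx)
  | succ m => rw [P, if_neg]; intro h; exact hx0 (h x hx)

theorem P_half (hK : ∀ m, K m → m % 2 = 0) (m : ℕ) (S : Finset ℤ) (hS : par m S) :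
    ((P (S0H b) (holeH K) (fun x => 0 < x) m S).card : ℤ) = W ((hsL b K m).map hf) S := by
  have h0 : ∀ x ∈ S0H b, 0 < x := by
    intro x; simp only [S0H, mem_filter, mem_Icc]; omega
  induction m generalizing S with
  | zero =>
    by_cases hpos : ∀ x ∈ S, 0 < x
    · rw [hsL, hf_hsFrom _ _ one_pos, init_half b 1 one_pos S]
      · rw [P, S0H]
        have : (Icc (1 : ℤ) (2 * b - 1)).filter (fun x => x % 2 = 1) =
          (Icc (1 : ℤ) (1 + 2 * b - 2)).filter (fun x => (x - 1) % 2 = 0) := by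
          ext x; simp only [mem_filter, mem_Icc]; omega
        rw [this]
        split_ifs <;> simp
      · intro x hx; have := hpos x hx; omega
      · intro x hx; have := hS x hx; push_cast at this; omega
    · push Not at hpos
      obtain ⟨x, hx, hx0⟩ := hpos
      rw [P_pos h0 _ _ hx (by omega), W_zero hx]
      · simp
      · intro f hf'
        obtain ⟨g, _, rfl⟩ := List.mem_map.1 hf'
        simp [hf, hx0.not_gt]
  | succ m ih =>
    by_cases hpos : ∀ x ∈ S, 0 < x
    · rw [card_P, if_pos hpos, hsL]
      have e : W (((addh K m (hsL b K m)).map T).map hf) S =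
          W (((addh K m (hsL b K m)).map hf).map T) S := by
        rw [List.map_map, List.map_map]
        apply W_congr
        intro f _ x hx
        have := hpos x hx
        simp only [Function.comp, hf, T, this, if_true, show 0 < x + 1 by omega]
        by_cases h1 : 0 < x - 1
        · simp only [h1, if_true]
          rw [show -x - 1 = -(x + 1) by ring, show -x + 1 = -(x - 1) by ring]; ring
        · have : x = 1 := by omega
          subst this; simp; ring
      rw [e, ← step_W]
      · push_cast
        apply sum_congr rfl
        intro V hV
        have hsrc := src_par hS (mem_powerset.1 hV)
        set src := sh (-1) V ∪ sh 1 (S \ V)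
        congr 1
        by_cases hps : ∀ x ∈ src, 0 < x
        · rw [ih _ (par_diff hsrc _)]
          simp only [holeH, addh]
          by_cases hm : K m
          · simp only [hm, if_true, List.map_cons]
            rw [show hf (dl 1) = dl 1 by
              have := hf_hsFrom 1 1 one_pos
              simpa [hsFrom] using this]
            rw [W_one 1 _ _ (fun x hx => by have := hps x hx; omega)]
            simp only [singleton_subset_iff, sdiff_singleton_eq_erase]
          · simp [hm]
        · push Not at hps
          obtain ⟨x, hx, hx0⟩ := hps
          rw [P_pos h0 m (x := x) _ _ (by omega), W_zero hx]
          · simp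
          · intro f hf'
            obtain ⟨g, _, rfl⟩ := List.mem_map.1 hf'
            simp [hf, hx0.not_gt]
          · rw [mem_sdiff]; refine ⟨hx, ?_⟩
            simp only [holeH]; split_ifs
            · simp; omega
            · simp
      · intro x hx y hy; have := hS x hx; have := hS y hy; omega
    · push Not at hpos
      obtain ⟨x, hx, hx0⟩ := hpos
      rw [P_pos h0 _ _ hx (by omega), W_zero hx]
      · simp
      · intro f hf'
        obtain ⟨g, _, rfl⟩ := List.mem_map.1 hf'
        simp [hf, hx0.not_gt]
end Fock

end

section
open Finset
namespace Fock

theorem W_emb {ι κ R : Type*} [LinearOrder ι] [LinearOrder κ] [CommRing R] (e : ι ↪o κ)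
    (l : List (κ → R)) (S : Finset ι) :
    W l (S.map e.toEmbedding) = W (l.map (fun f x => f (e x))) S := by
  induction l generalizing S with
  | nil => simp [W]
  | cons f l ih =>
    simp only [List.map_cons, W, wedge]
    rw [sum_map]
    apply sum_congr rfl; intro x _
    rw [← ih, map_erase]
    congr 2
    unfold sg
    rw [filter_map, card_map]
    congr 3
    ext y; simp

theorem wedge_add_left {ι R : Type*} [LinearOrder ι] [CommRing R] (f g : ι → R)
    (Ψ : Finset ι → R) (S : Finset ι) : wedge (f + g) Ψ S = wedge f Ψ S + wedge g Ψ S := by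
  simp only [wedge, ← sum_add_distrib, Pi.add_apply]
  exact sum_congr rfl fun _ _ => by ring

theorem wedge_add_right {ι R : Type*} [LinearOrder ι] [CommRing R] (f : ι → R)
    (Ψ Φ : Finset ι → R) (S : Finset ι) : wedge f (fun S => Ψ S + Φ S) S = wedge f Ψ S + wedge f Φ S := by
  simp only [wedge, ← sum_add_distrib]
  exact sum_congr rfl fun _ _ => by ring

theorem W_self {ι R : Type*} [LinearOrder ι] [CommRing R] (f : ι → R) (l : List (ι → R))
    (S : Finset ι) : W (f :: f :: l) S = 0 := by
  have := W_cons_self (fun i => (f :: l).get i) ⟨0, by simp⟩ S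
  simpa using this

theorem W_swap {ι R : Type*} [LinearOrder ι] [CommRing R] (f g : ι → R) (l : List (ι → R))
    (S : Finset ι) : W (f :: g :: l) S = - W (g :: f :: l) S := by
  have h := W_self (f + g) l S
  have h1 : W ((f + g) :: l) = fun S => W (f :: l) S + W (g :: l) S := by
    funext S; simp only [W, wedge_add_left]
  rw [W, wedge_add_left, h1, wedge_add_right, wedge_add_right] at h
  have a1 := W_self f l S
  have a2 := W_self g l S
  simp only [W] at *
  linear_combination h - a1 - a2

theorem W_perm {ι : Type*} [LinearOrder ι] {l l' : List (ι → ℤ)} (h : l.Perm l') :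
    ∃ ε : ℤ, (ε = 1 ∨ ε = -1) ∧ ∀ S, W l S = ε * W l' S := by
  induction h with
  | nil => exact ⟨1, by simp⟩
  | cons x _ ih =>
    obtain ⟨ε, h1, h2⟩ := ih
    refine ⟨ε, h1, fun S => ?_⟩
    simp only [W, wedge, h2, mul_sum]
    exact sum_congr rfl fun _ _ => by ring
  | swap x y l => exact ⟨-1, by simp, fun S => by rw [W_swap]; ring⟩
  | trans _ _ ih1 ih2 =>
    obtain ⟨ε, h1, h2⟩ := ih1
    obtain ⟨δ, h3, h4⟩ := ih2
    refine ⟨ε * δ, ?_, fun S => by rw [h2, h4]; ring⟩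
    rcases h1 with rfl | rfl <;> rcases h3 with rfl | rfl <;> simp

theorem det_sym_blocks {n : ℕ} (A B : Matrix (Fin n) (Fin n) ℤ) :
    (Matrix.fromBlocks A B B A).det = (A + B).det * (A - B).det := by
  have h : Matrix.fromBlocks 1 0 1 1 * Matrix.fromBlocks A B B A *
      Matrix.fromBlocks 1 0 (-1) 1 = Matrix.fromBlocks (A - B) B 0 (A + B) := by
    rw [Matrix.fromBlocks_multiply, Matrix.fromBlocks_multiply]
    congr 1 <;> simp <;> abel
  have := congrArg Matrix.det h
  rw [Matrix.det_mul, Matrix.det_mul, Matrix.det_fromBlocks_zero₁₂, Matrix.det_fromBlocks_zero₁₂,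
    Matrix.det_fromBlocks_zero₂₁] at this
  simp at this
  rw [this]; ring

def pe (c p : ℕ) : Fin p ↪o ℤ := OrderEmbedding.ofStrictMono (fun j => 2 * (j : ℤ) + 1 + c)
  (by intro i j h; have : (i : ℕ) < j := h; simp only; omega)

theorem pe_apply (c p : ℕ) (j : Fin p) : pe c p j = 2 * (j : ℤ) + 1 + c := rfl

theorem pe_pos (c p : ℕ) (j : Fin p) : 0 < pe c p j := by rw [pe_apply]; omega

def ng (S : Finset ℤ) : Finset ℤ := S.map (Equiv.neg ℤ).toEmbedding

theorem mem_ng {S : Finset ℤ} {x : ℤ} : x ∈ ng S ↔ -x ∈ S := by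
  simp only [ng, mem_map]
  constructor
  · rintro ⟨y, hy, rfl⟩; simpa using hy
  · intro h; exact ⟨-x, h, by simp⟩

def sy {p : ℕ} (c : ℕ) (E : Finset (Fin p)) : Finset ℤ :=
  ng (E.map (pe c p).toEmbedding) ∪ E.map (pe c p).toEmbedding

theorem sy_card {p : ℕ} (c : ℕ) (E : Finset (Fin p)) : (sy c E).card = E.card + E.card := by
  rw [sy, card_union_of_disjoint]
  · simp [ng]
  · rw [disjoint_left]
    intro x hx
    rw [mem_ng] at hx
    simp only [mem_map, RelEmbedding.coe_toEmbedding] at hx ⊢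
    rintro ⟨j, _, hj⟩
    obtain ⟨i, _, hi⟩ := hx
    have := pe_pos c p i
    have := pe_pos c p j
    omega

theorem strictMono_append {n : ℕ} (f g : Fin n → ℤ) (hf : StrictMono f) (hg : StrictMono g)
    (h : ∀ i j, f i < g j) : StrictMono (Fin.append f g) := by
  intro i j
  refine Fin.addCases (fun i => ?_) (fun i => ?_) i <;> refine Fin.addCases (fun j => ?_) (fun j => ?_) j
  · intro hij; rw [Fin.append_left, Fin.append_left]; apply hf; rw [Fin.lt_def] at hij ⊢; simpa only [Fin.val_castAdd] using hij
  · intro hij; rw [Fin.append_left, Fin.append_right]; exact h _ _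
  · intro hij; rw [Fin.lt_def] at hij; simp only [Fin.val_natAdd, Fin.val_castAdd] at hij; omega
  · intro hij; rw [Fin.append_right, Fin.append_right]; apply hg; rw [Fin.lt_def] at hij ⊢; simp only [Fin.val_natAdd] at hij; omega

theorem W_sym {n p : ℕ} (c : ℕ) (h : Fin n → ℤ → ℤ) : ∃ ε : ℤ, (ε = 1 ∨ ε = -1) ∧
    ∀ E : Finset (Fin p), W (fullL (List.ofFn h)) (sy c E) =
      ε * (W (List.ofFn fun i (x : Fin p) => h i (pe c p x) + h i (-pe c p x)) E *
        W (List.ofFn fun i (x : Fin p) => h i (pe c p x) - h i (-pe c p x)) E) := by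
  have hperm : (fullL (List.ofFn h)).Perm (List.ofFn (Fin.append (fun i => nege (h i)) h)) := by
    rw [List.ofFn_fin_append]
    have := (List.map_append_flatMap_perm (List.ofFn h) nege (fun x => [x])).symm
    rw [List.map_ofFn] at this
    simpa [fullL, Function.comp_def] using this
  obtain ⟨ε, h1, h2⟩ := W_perm hperm
  set σ : Equiv.Perm (Fin n ⊕ Fin n) := Equiv.sumCongr Fin.revPerm (Equiv.refl _) with hσ
  refine ⟨ε * (Equiv.Perm.sign σ : ℤ), ?_, ?_⟩
  · rcases h1 with rfl | rfl <;> rcases Int.units_eq_one_or (Equiv.Perm.sign σ) with h | h <;> simp [h]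
  intro E
  rw [h2, mul_assoc]
  congr 1
  by_cases hE : E.card = n
  swap
  · rw [W_card _ E (by simpa using hE), W_card _ (sy c E)]
    · simp
    · rw [sy_card]; simp; omega
  have hcard : (sy c E).card = n + n := by rw [sy_card, hE]
  rw [W_eq_det _ _ hcard, W_eq_det _ _ hE, W_eq_det _ _ hE]
  set eE := E.orderEmbOfFin hE
  have hcol : Fin.append (fun j => -pe c p (eE (Fin.rev j))) (fun j => pe c p (eE j)) =
      (sy c E).orderEmbOfFin hcard := by
    apply orderEmbOfFin_unique
    · intro j
      rw [sy, mem_union]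
      refine Fin.addCases (fun j => ?_) (fun j => ?_) j
      · left; rw [Fin.append_left, mem_ng, neg_neg]
        exact mem_map_of_mem _ (orderEmbOfFin_mem _ _ _)
      · right; rw [Fin.append_right]
        exact mem_map_of_mem _ (orderEmbOfFin_mem _ _ _)
    · apply strictMono_append
      · intro i j hij
        have : pe c p (eE j.rev) < pe c p (eE i.rev) :=
          (pe c p).strictMono (eE.strictMono (Fin.rev_lt_rev.2 hij))
        simp only; omega
      · intro i j hij; exact (pe c p).strictMono (eE.strictMono hij)
      · intro i j
        have := pe_pos c p (eE i.rev)
        have := pe_pos c p (eE j)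
        omega
  rw [← hcol, ← Matrix.det_submatrix_equiv_self finSumFinEquiv]
  set A : Matrix (Fin n) (Fin n) ℤ := Matrix.of fun i j => h i (pe c p (eE j)) with hA
  set B : Matrix (Fin n) (Fin n) ℤ := Matrix.of fun i j => h i (-pe c p (eE j)) with hB
  have e1 : (Matrix.of fun i j => (Fin.append (fun i => nege (h i)) h i)
      (Fin.append (fun j => -pe c p (eE (Fin.rev j))) (fun j => pe c p (eE j)) j)).submatrix
        finSumFinEquiv finSumFinEquiv = (Matrix.fromBlocks A B B A).submatrix id σ := by
    ext i j
    rcases i with i | i <;> rcases j with j | j <;>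
      simp only [Matrix.submatrix_apply, Matrix.of_apply, finSumFinEquiv_apply_left,
        finSumFinEquiv_apply_right, Fin.append_left, Fin.append_right] <;>
      simp [hσ, hA, hB, nege]
  rw [e1, Matrix.det_permute', det_sym_blocks]
  congr 2
end Fock

end

section
open Finset
namespace Fock

def qq (h : ℤ → ℤ) (y : ℤ) : ℤ := h y - h (-y)
def pq (h : ℤ → ℤ) (y : ℤ) : ℤ := h y + h (-y)

def Good (B : ℤ) {n : ℕ} (h : Fin n → ℤ → ℤ) : Prop :=
  (∀ i y, (B ≤ y ∨ y ≤ -B) → h i y = 0) ∧ ∃ M : Matrix (Fin n) (Fin n) ℤ, M.det = 1 ∧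
    ∀ i y, qq (h i) (y - 1) + qq (h i) (y + 1) = ∑ j, M i j * (pq (h j) (y - 1) - pq (h j) (y + 1))

theorem hsFrom_ofFn (n : ℕ) (c : ℤ) : hsFrom n c = List.ofFn fun i : Fin n => dl (c + 2 * i) := by
  induction n generalizing c with
  | zero => simp [hsFrom]
  | succ n ih =>
    rw [hsFrom, ih, List.ofFn_succ]
    congr 1
    · simp
    · congr 1; funext i; congr 1; rw [Fin.val_succ]; push_cast; ring

theorem tele (G : ℕ → ℤ) (i n : ℕ) (h0 : G 0 = 0) :
    ∑ j ∈ range n, (if i = j then 1 else if j < i then 2 else 0) * (G (j + 1) - G j) =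
      if n ≤ i then 2 * G n else G (i + 1) + G i := by
  induction n with
  | zero => simp [h0]
  | succ n ih =>
    rw [sum_range_succ, ih]
    rcases lt_trichotomy i n with h | h | h
    · rw [if_neg (by omega), if_neg (by omega), if_neg (by omega), if_neg (by omega)]; ring
    · subst h; simp; ring
    · rw [if_pos (by omega), if_neg (by omega), if_pos (by omega), if_pos (by omega)]; ring

theorem good_init (b : ℕ) : Good (2 * b) (fun i : Fin b => dl (1 + 2 * i)) := by
  constructor
  · intro i y hy
    simp only [dl]
    rw [if_neg]
    have := i.2
    omega
  · refine ⟨Matrix.of fun i j => if (i : ℕ) = j then 1 else if (j : ℕ) < i then 2 else 0, ?_, ?_⟩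
    · rw [Matrix.det_of_lowerTriangular]
      · simp
      · intro i j hij
        have : (i : ℕ) < j := hij
        simp only [Matrix.of_apply]
        rw [if_neg (by omega), if_neg (by omega)]
    · intro i y
      set G : ℕ → ℤ := fun j => dl (2 * j) y - dl (-(2 * j)) y with hG
      have h1 := tele G i b (by simp [hG])
      rw [if_neg (by have := i.2; omega), ← Fin.sum_univ_eq_sum_range (fun j =>
        (if (i : ℕ) = j then 1 else if j < i then 2 else 0) * (G (j + 1) - G j)) b] at h1
      have h2 : ∑ j : Fin b, (Matrix.of fun (i j : Fin b) => if (i : ℕ) = j then (1 : ℤ) else if (j : ℕ) < i then 2 else 0) i j *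
          (pq (dl (1 + 2 * j)) (y - 1) - pq (dl (1 + 2 * j)) (y + 1)) = G (i + 1) + G i := by
        rw [← h1]
        apply sum_congr rfl; intro j _
        simp only [Matrix.of_apply]
        congr 1
        simp only [pq, hG, dl]; push_cast
        split_ifs <;> omega
      rw [h2]
      simp only [qq, hG, dl]; push_cast
      split_ifs <;> omega

theorem good_T {B : ℤ} {n : ℕ} {h : Fin n → ℤ → ℤ} (hg : Good B h) :
    Good (B + 1) (fun i => T (h i)) := by
  obtain ⟨h1, M, h2, h3⟩ := hg
  refine ⟨fun i y hy => ?_, M, h2, fun i y => ?_⟩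
  · simp only [T]; rw [h1 i _ (by omega), h1 i _ (by omega), add_zero]
  · have hq : ∀ (f : ℤ → ℤ) y, qq (T f) y = qq f (y - 1) + qq f (y + 1) := by
      intro f y; simp only [qq, T]
      rw [show -(y - 1) = -y + 1 by ring, show -(y + 1) = -y - 1 by ring]; ring
    have hp : ∀ (f : ℤ → ℤ) y, pq (T f) y = pq f (y - 1) + pq f (y + 1) := by
      intro f y; simp only [pq, T]
      rw [show -(y - 1) = -y + 1 by ring, show -(y + 1) = -y - 1 by ring]; ring
    simp only [hq, hp]
    have a1 := h3 i (y - 1)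
    have a2 := h3 i (y + 1)
    rw [show qq (h i) (y - 1 - 1) + qq (h i) (y - 1 + 1) + (qq (h i) (y + 1 - 1) + qq (h i) (y + 1 + 1)) =
      ∑ j, M i j * (pq (h j) (y - 1 - 1) - pq (h j) (y - 1 + 1)) +
      ∑ j, M i j * (pq (h j) (y + 1 - 1) - pq (h j) (y + 1 + 1)) by rw [a1, a2], ← sum_add_distrib]
    apply sum_congr rfl; intro j _; ring

theorem good_cons {B : ℤ} (hB : 2 ≤ B) {n : ℕ} {h : Fin n → ℤ → ℤ} (hg : Good B h) :
    Good B (Fin.cons (dl 1) h : Fin (n + 1) → ℤ → ℤ) := by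
  obtain ⟨h1, M, h2, h3⟩ := hg
  refine ⟨fun i y hy => ?_, Matrix.of (Fin.cons (Fin.cons 1 (fun _ => 0)) (fun i => Fin.cons 0 (M i))), ?_, ?_⟩
  · refine Fin.cases ?_ (fun i => ?_) i
    · simp only [Fin.cons_zero, dl]; rw [if_neg]; omega
    · simpa using h1 i y hy
  · rw [Matrix.det_succ_row_zero, Fin.sum_univ_succ]
    simp only [Matrix.of_apply, Fin.cons_zero, Fin.cons_succ]
    simp only [Fin.val_zero, pow_zero, mul_one, mul_zero, zero_mul, sum_const_zero, add_zero,
      one_mul]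
    rw [← h2]; congr 1
  · intro i y
    rw [Fin.sum_univ_succ]
    refine Fin.cases ?_ (fun i => ?_) i
    · simp only [Matrix.of_apply, Fin.cons_zero, Fin.cons_succ, one_mul, zero_mul, sum_const_zero, add_zero]
      simp only [qq, pq, dl]
      split_ifs <;> omega
    · simp only [Matrix.of_apply, Fin.cons_zero, Fin.cons_succ, zero_mul, zero_add]
      exact h3 i y

theorem good_hs (b : ℕ) (hb : 0 < b) (K : ℕ → Prop) [DecidablePred K] (m : ℕ) :
    ∃ n ≤ b + m, ∃ h : Fin n → ℤ → ℤ, hsL b K m = List.ofFn h ∧ Good (2 * b + m) h := by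
  induction m with
  | zero => exact ⟨b, le_rfl, _, hsFrom_ofFn b 1, by simpa using good_init b⟩
  | succ m ih =>
    obtain ⟨n, hn, h, h1, h2⟩ := ih
    rw [hsL, addh]
    split_ifs
    · refine ⟨n + 1, by omega, fun i => T ((Fin.cons (dl 1) h : Fin (n + 1) → ℤ → ℤ) i), ?_, ?_⟩
      · rw [h1, List.ofFn_succ]; simp [List.map_ofFn, Function.comp_def]
      · have := good_T (good_cons (by omega) h2)
        convert this using 1; push_cast; ring
    · refine ⟨n, by omega, fun i => T (h i), ?_, ?_⟩
      · rw [h1]; simp [List.map_ofFn, Function.comp_def]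
      · have := good_T h2
        convert this using 1; push_cast; ring

theorem solve_u (p : ℕ) (g q : ℕ → ℤ) (h : ∀ j, g j - g (j + 1) = q j + q (j + 1))
    (hg : ∀ j, p ≤ j → g j = 0) (hq : ∀ j, p ≤ j → q j = 0) (d j : ℕ) (hd : p ≤ j + d) :
    g j = ∑ y ∈ range p, (if j = y then 1 else if j < y then 2 else 0) * q y := by
  induction d generalizing j with
  | zero =>
    rw [hg j hd]; symm; apply sum_eq_zero
    intro y hy; rw [mem_range] at hy
    rw [if_neg (by omega), if_neg (by omega), zero_mul]
  | succ d ih =>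
    have := ih (j + 1) (by omega)
    have h1 : g j = g (j + 1) + (q j + q (j + 1)) := by linarith [h j]
    have h2 : ∀ i, ∑ y ∈ range p, (if i = y then q y else 0) = q i := by
      intro i
      rw [sum_ite_eq]
      split_ifs with hi
      · rfl
      · rw [hq]; simpa using hi
    rw [h1, this, ← h2 j, ← h2 (j + 1), ← sum_add_distrib, ← sum_add_distrib]
    apply sum_congr rfl; intro y _
    split_ifs <;> first | omega | (simp; try ring)

theorem count_W (b a : ℕ) (hb : 0 < b) (K : ℕ → Prop) [DecidablePred K] :
    ∃ ε : ℤ, (ε = 1 ∨ ε = -1) ∧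
      ∑ E : Finset (Fin (a + b)), W (fullL (hsL b K a)) (sy (a % 2) E) =
      ε * (∑ E : Finset (Fin (a + b)), W ((hsL b K a).map hf) (E.map (pe (a % 2) (a + b)).toEmbedding)) ^ 2 := by
  obtain ⟨n, hn, h, h1, h2, M, hM, h3⟩ := good_hs b hb K a
  obtain ⟨ε, he, hW⟩ := W_sym (p := a + b) (a % 2) h
  refine ⟨ε, he, ?_⟩
  rw [h1]
  simp only [hW]
  rw [← mul_sum, cauchyBinet]
  congr 1
  set p := a + b with hp
  set c := a % 2 with hc
  set Q : Fin n → Fin p → ℤ := fun i x => h i (pe c p x) - h i (-pe c p x) with hQ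
  have hF : ∑ E : Finset (Fin p), W ((List.ofFn h).map hf) (E.map (pe c p).toEmbedding) = F Q := by
    unfold F
    apply sum_congr rfl; intro E _
    rw [W_emb, List.map_ofFn, List.map_ofFn]
    congr 2
    funext i x
    simp only [Function.comp, hf, pe_pos, if_true, hQ]
  rw [hF, ← square (by omega) Q, ← Matrix.det_transpose (Bm Q)]
  have hsol : ∀ i (x : Fin p), ∑ j, M i j * (h j (pe c p x) + h j (-pe c p x)) =
      ∑ y, u ℤ x y * Q i y := by
    intro i x
    have := solve_u p (fun k => ∑ j, M i j * pq (h j) (2 * (k : ℤ) + 1 + c))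
      (fun k => qq (h i) (2 * (k : ℤ) + 1 + c)) ?_ ?_ ?_ p x (by omega)
    · simp only [pq] at this
      simp only [pe_apply]
      rw [this, ← Fin.sum_univ_eq_sum_range (fun y => (if (x : ℕ) = y then 1 else if (x : ℕ) < y then 2 else 0) *
        qq (h i) (2 * (y : ℤ) + 1 + c)) p]
      apply sum_congr rfl; intro y _
      simp only [u, hQ, pe_apply, qq, Fin.ext_iff, Fin.lt_def]
    · intro k
      have := h3 i (2 * (k : ℤ) + 1 + c + 1)
      simp only [add_sub_cancel_right, mul_sub, sum_sub_distrib] at this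
      push_cast
      rw [show 2 * ((k : ℤ) + 1) + 1 + c = 2 * (k : ℤ) + 1 + c + 1 + 1 by ring]
      exact this.symm
    · intro k hk
      apply sum_eq_zero; intro j _
      simp only [pq]
      rw [h2 j _ (by omega), h2 j _ (by omega)]; simp
    · intro k hk
      simp only [qq]
      rw [h2 i _ (by omega), h2 i _ (by omega)]; simp
  have hmul : M * (Matrix.of fun i j => ∑ x, (h i (pe c p x) + h i (-pe c p x)) * Q j x) =
      (Bm Q).transpose := by
    ext i j
    rw [Matrix.mul_apply]
    simp only [Matrix.of_apply, Bm, Matrix.transpose_apply]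
    simp only [mul_sum]
    rw [sum_comm]
    apply sum_congr rfl; intro x _
    have := hsol i x
    calc ∑ k, M i k * ((h k (pe c p x) + h k (-pe c p x)) * Q j x) =
        (∑ k, M i k * (h k (pe c p x) + h k (-pe c p x))) * Q j x := by
          rw [sum_mul]; exact sum_congr rfl fun _ _ => by ring
      _ = _ := by
        rw [this, sum_mul]; exact sum_congr rfl fun _ _ => by ring
  rw [← hmul, Matrix.det_mul, hM, one_mul]

theorem count_main (b a : ℕ) (hb : 0 < b) (K : ℕ → Prop) [DecidablePred K]
    (hK : ∀ m, K m → m % 2 = 0) :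
    ∑ E : Finset (Fin (a + b)), (P (S0F b) (holeF K) (fun _ => True) a (sy (a % 2) E)).card =
      (∑ E : Finset (Fin (a + b)), (P (S0H b) (holeH K) (fun x => 0 < x) a
        (E.map (pe (a % 2) (a + b)).toEmbedding)).card) ^ 2 := by
  obtain ⟨ε, he, h⟩ := count_W b a hb K
  have h1 : ∀ E : Finset (Fin (a + b)), par a (E.map (pe (a % 2) (a + b)).toEmbedding) := by
    intro E x hx
    obtain ⟨j, _, rfl⟩ := mem_map.1 hx
    simp only [RelEmbedding.coe_toEmbedding, pe_apply]; omega
  have h2 : ∀ E : Finset (Fin (a + b)), par a (sy (a % 2) E) := by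
    intro E x hx
    rw [sy, mem_union, mem_ng] at hx
    rcases hx with hx | hx
    · have := h1 E _ hx; omega
    · exact h1 E _ hx
  simp only [← P_full b K hK _ _ (h2 _), ← P_half b K hK _ _ (h1 _)] at h
  zify
  rcases he with rfl | rfl
  · rw [h, one_mul]
  · have e1 : (0 : ℤ) ≤ ∑ E : Finset (Fin (a + b)), ((P (S0F b) (holeF K) (fun _ => True) a (sy (a % 2) E)).card : ℤ) :=
      sum_nonneg fun _ _ => by positivity
    have e2 := sq_nonneg (∑ E : Finset (Fin (a + b)), ((P (S0H b) (holeH K) (fun x => 0 < x) a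
        (E.map (pe (a % 2) (a + b)).toEmbedding)).card : ℤ))
    linarith

theorem P_even (b a : ℕ) (hb : 0 < b) (K : ℕ → Prop) [DecidablePred K]
    (hK : ∀ m, K m → m % 2 = 0) (S : Finset ℤ) (hS : par a S) (hne : S.card % 2 = 1) :
    P (S0F b) (holeF K) (fun _ => True) a S = ∅ := by
  have h := P_full b K hK a S hS
  rw [W_card] at h
  · simpa using h
  · have : ∀ l : List (ℤ → ℤ), (fullL l).length % 2 = 0 := by
      intro l; induction l with
      | nil => rfl
      | cons f l ih => simp [fullL]; omega
    have := this (hsL b K a)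
    omega
end Fock

end

section
open Finset
namespace Fock

def lst (u d : ℕ → Finset ℤ) : ℕ → List (Finset ℤ × Finset ℤ)
  | 0 => []
  | m + 1 => (u m, d m) :: lst u d m

def ar (S0 : Finset ℤ) (u d : ℕ → Finset ℤ) : ℕ → Finset ℤ
  | 0 => S0
  | m + 1 => sh 1 (u m) ∪ sh (-1) (d m)

theorem mem_ar_succ {S0 : Finset ℤ} {u d : ℕ → Finset ℤ} {m : ℕ} {w : ℤ} :
    w ∈ ar S0 u d (m + 1) ↔ w - 1 ∈ u m ∨ w + 1 ∈ d m := by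
  simp [ar, mem_sh]

def PC (S0 : Finset ℤ) (hole : ℕ → Finset ℤ) (ok : ℤ → Prop) (u d : ℕ → Finset ℤ) (a : ℕ) : Prop :=
  ∀ m < a, ∀ w : ℤ, ¬ (w ∈ u m ∧ w ∈ d m) ∧
    (w ∈ u m ∨ w ∈ d m ↔ w ∈ ar S0 u d m ∨ w ∈ hole m) ∧
    ¬ (w ∈ ar S0 u d m ∧ w ∈ hole m) ∧ ¬ (w - 1 ∈ u m ∧ w + 1 ∈ d m) ∧
    (w ∈ ar S0 u d (m + 1) → ok w)

theorem lst_mem (S0 : Finset ℤ) (hole : ℕ → Finset ℤ) (ok : ℤ → Prop) [DecidablePred ok]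
    (u d : ℕ → Finset ℤ) (m : ℕ) (S : Finset ℤ) :
    lst u d m ∈ P S0 hole ok m S ↔ S = ar S0 u d m ∧ PC S0 hole ok u d m := by
  induction m generalizing S with
  | zero => simp [lst, mem_P_zero, ar, PC]
  | succ m ih =>
    rw [lst, mem_P_succ, ih]
    constructor
    · rintro ⟨h1, h2, rfl, h4, h5, h6, h7⟩
      refine ⟨rfl, fun j hj w => ?_⟩
      rcases Nat.lt_succ_iff_lt_or_eq.1 hj with h | rfl
      · exact h7 j h w
      · rw [← h6]
        refine ⟨fun h => disjoint_left.1 h4 h.1 h.2, ?_, by simp, ?_, fun h => h1 w h⟩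
        · have := @h5 w
          simp only [mem_sdiff, mem_union] at this ⊢; tauto
        · intro h
          have e1 : w ∈ sh 1 (u j) := by rw [mem_sh]; exact h.1
          have e2 : w ∈ sh (-1) (d j) := by rw [mem_sh]; simpa using h.2
          exact disjoint_left.1 h2 e1 e2
    · rintro ⟨rfl, h⟩
      have h' := h m (Nat.lt_succ_self m)
      refine ⟨fun w hw => (h' w).2.2.2.2 hw, ?_, rfl, ?_, ?_, ?_, fun j hj w => h j (by omega) w⟩
      · rw [disjoint_left]; intro w h1 h2
        rw [mem_sh] at h1 h2
        exact (h' w).2.2.2.1 ⟨h1, by simpa using h2⟩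
      · rw [disjoint_left]; intro w h1 h2; exact (h' w).1 ⟨h1, h2⟩
      · intro w hw; rw [mem_union]; exact (h' w).2.1.2 (Or.inr hw)
      · ext w
        have := h' w
        simp only [mem_sdiff, mem_union]; tauto

theorem lst_congr {u d u' d' : ℕ → Finset ℤ} {m : ℕ} :
    lst u d m = lst u' d' m ↔ ∀ j < m, u j = u' j ∧ d j = d' j := by
  induction m with
  | zero => simp [lst]
  | succ m ih =>
    simp only [lst, List.cons.injEq, Prod.mk.injEq, ih]
    constructor
    · rintro ⟨h1, h2⟩ j hj
      rcases Nat.lt_succ_iff_lt_or_eq.1 hj with h | rfl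
      · exact h2 j h
      · exact h1
    · intro h
      exact ⟨h m (by omega), fun j hj => h j (by omega)⟩

theorem exists_lst (S0 : Finset ℤ) (hole : ℕ → Finset ℤ) (ok : ℤ → Prop) [DecidablePred ok]
    (m : ℕ) (S : Finset ℤ) (l) (h : l ∈ P S0 hole ok m S) : ∃ u d, l = lst u d m := by
  induction m generalizing S l with
  | zero => rw [mem_P_zero] at h; exact ⟨fun _ => ∅, fun _ => ∅, h.2⟩
  | succ m ih =>
    match l, h with
    | [], h => exact absurd h (mem_P_nil _ _ _ _ _)
    | (U, D) :: l, h =>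
      rw [mem_P_succ] at h
      obtain ⟨u, d, rfl⟩ := ih _ _ h.2.2.2.2.2
      refine ⟨fun j => if j = m then U else u j, fun j => if j = m then D else d j, ?_⟩
      simp only [lst, if_true]
      congr 1
      rw [lst_congr]
      intro j hj
      simp [hj.ne]

/-- The count as a biUnion. -/
theorem card_bi (S0 : Finset ℤ) (hole : ℕ → Finset ℤ) (ok : ℤ → Prop) [DecidablePred ok]
    (a : ℕ) {ι : Type*} [Fintype ι] [DecidableEq ι] (g : ι → Finset ℤ)
    (hg : Function.Injective g) :
    (univ.biUnion fun E => P S0 hole ok a (g E)).card = ∑ E, (P S0 hole ok a (g E)).card := by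
  rw [card_biUnion]
  intro E _ E' _ hne
  rw [Function.onFun, disjoint_left]
  intro l h1 h2
  obtain ⟨u, d, rfl⟩ := exists_lst _ _ _ _ _ _ h1
  rw [lst_mem] at h1 h2
  exact hne (hg (h1.1.trans h2.1.symm))

theorem PC_inv {b : ℕ} (hb : 0 < b) {K : ℕ → Prop} [DecidablePred K] (hK : ∀ m, K m → m % 2 = 0)
    {u d : ℕ → Finset ℤ} {a : ℕ} (h : PC (S0F b) (holeF K) (fun _ => True) u d a) (m : ℕ) (hm : m ≤ a)
    (w : ℤ) (hw : w ∈ ar (S0F b) u d m) : (w + m) % 2 = 1 ∧ -(2 * b - 1 + m : ℤ) ≤ w ∧ w ≤ 2 * b - 1 + m := by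
  induction m generalizing w with
  | zero => simp only [ar, S0F, mem_filter, mem_Icc] at hw; push_cast; omega
  | succ m ih =>
    have key : ∀ v, v ∈ u m ∨ v ∈ d m → (v + m) % 2 = 1 ∧ -(2 * b - 1 + m : ℤ) ≤ v ∧ v ≤ 2 * b - 1 + m := by
      intro v hv
      rcases ((h m (by omega) v).2.1.1 hv) with h1 | h1
      · exact ih (by omega) v h1
      · rw [holeF] at h1
        split_ifs at h1 with hk
        · have := hK m hk
          simp at h1
          omega
        · simp at h1
    rw [mem_ar_succ] at hw
    rcases hw with hw | hw
    · have := key _ (Or.inl hw); push_cast; omega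
    · have := key _ (Or.inr hw); push_cast; omega

theorem exists_E (c n : ℕ) (hc : c < 2) (S : Finset ℤ) (h : ∀ w ∈ S, 0 < w ∧ (w + c) % 2 = 1 ∧ w < 2 * n + c) :
    ∃ E : Finset (Fin n), S = E.map (pe c n).toEmbedding := by
  refine ⟨univ.filter fun j => pe c n j ∈ S, ?_⟩
  ext w
  simp only [mem_map, mem_filter, mem_univ, true_and, RelEmbedding.coe_toEmbedding]
  constructor
  · intro hw
    have := h w hw
    refine ⟨⟨((w - 1 - c) / 2).toNat, by omega⟩, ?_, ?_⟩
    all_goals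
      have : pe c n ⟨((w - 1 - c) / 2).toNat, by omega⟩ = w := by
        rw [pe_apply]; simp only; omega
      rw [this]
    exact hw
  · rintro ⟨j, hj, rfl⟩; exact hj

theorem mem_sy_iff {p : ℕ} (c : ℕ) (E : Finset (Fin p)) (x : ℤ) :
    x ∈ E.map (pe c p).toEmbedding ↔ 0 < x ∧ x ∈ sy c E := by
  have hp : ∀ x, x ∈ E.map (pe c p).toEmbedding → 0 < x := by
    intro x hx
    obtain ⟨j, _, rfl⟩ := mem_map.1 hx
    exact pe_pos c p j
  rw [sy, mem_union, mem_ng]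
  constructor
  · intro h; exact ⟨hp x h, Or.inr h⟩
  · rintro ⟨h1, h2 | h2⟩
    · have := hp _ h2; omega
    · exact h2

theorem map_pe_inj (c p : ℕ) : Function.Injective fun E : Finset (Fin p) => E.map (pe c p).toEmbedding :=
  fun _ _ h => Finset.map_injective _ h

theorem sy_inj (c p : ℕ) : Function.Injective fun E : Finset (Fin p) => sy c E := by
  intro E E' h
  apply map_pe_inj c p
  ext x
  simp only at h ⊢
  rw [mem_sy_iff, mem_sy_iff, h]

theorem mem_sy_neg {p : ℕ} (c : ℕ) (E : Finset (Fin p)) (x : ℤ) : x ∈ sy c E ↔ -x ∈ sy c E := by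
  rw [sy, mem_union, mem_union, mem_ng, mem_ng, neg_neg, or_comm]

theorem zero_not_mem_sy {p : ℕ} (c : ℕ) (E : Finset (Fin p)) : (0 : ℤ) ∉ sy c E := by
  intro h
  have hp : ∀ x, x ∈ E.map (pe c p).toEmbedding → 0 < x := by
    intro x hx
    obtain ⟨j, _, rfl⟩ := mem_map.1 hx
    exact pe_pos c p j
  rw [sy, mem_union, mem_ng] at h
  rcases h with h | h <;> have := hp _ h <;> omega

theorem exists_sy (b a : ℕ) (hb : 0 < b) (K : ℕ → Prop) [DecidablePred K]
    (hK : ∀ m, K m → m % 2 = 0) (u d : ℕ → Finset ℤ) (h : PC (S0F b) (holeF K) (fun _ => True) u d a)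
    (hs : ∀ w, w ∈ ar (S0F b) u d a ↔ -w ∈ ar (S0F b) u d a) :
    ∃ E : Finset (Fin (a + b)), ar (S0F b) u d a = sy (a % 2) E := by
  have inv := PC_inv hb hK h a le_rfl
  set S := ar (S0F b) u d a with hS
  obtain ⟨E, hE⟩ := exists_E (a % 2) (a + b) (by omega) (S.filter (0 < ·)) (by
    intro w hw
    rw [mem_filter] at hw
    have := inv w hw.1
    push_cast
    omega)
  have hmem : ∀ w, w ∈ sy (a % 2) E ↔ w ≠ 0 ∧ w ∈ S := by
    intro w
    rw [sy, mem_union, mem_ng, ← hE, mem_filter, mem_filter, ← hs w]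
    constructor
    · rintro (h | h)
      · exact ⟨by omega, h.1⟩
      · exact ⟨by omega, h.1⟩
    · rintro ⟨h1, h2⟩
      rcases lt_or_gt_of_ne h1 with h | h
      · exact Or.inl ⟨h2, by omega⟩
      · exact Or.inr ⟨h2, by omega⟩
  refine ⟨E, ?_⟩
  by_cases h0 : (0 : ℤ) ∈ S
  · exfalso
    have e : S = insert 0 (sy (a % 2) E) := by
      ext w; rw [mem_insert, hmem]
      by_cases hw : w = 0 <;> simp [hw, h0]
    have hcard : S.card % 2 = 1 := by
      rw [e, card_insert_of_notMem (zero_not_mem_sy _ _), sy_card]; omega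
    have hp := P_even b a hb K hK S (fun x hx => (inv x hx).1) hcard
    have : lst u d a ∈ P (S0F b) (holeF K) (fun _ => True) a S := by
      rw [lst_mem]; exact ⟨hS, h⟩
    rw [hp] at this
    simp at this
  · ext w; rw [hmem]
    constructor
    · intro hw; exact ⟨fun h => h0 (h ▸ hw), hw⟩
    · exact fun h => h.2

end Fock

end

section
open Finset
namespace Fock

inductive Code where
  | up (m w : ℤ) : Code
  | dn (m w : ℤ) : Code
  | hz (m w : ℤ) : Code

open Code

def RR (a b : ℕ) (KZ : ℤ → Prop) (m w : ℤ) : Prop :=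
  (m + w) % 2 = 1 ∧ 0 ≤ m ∧ m < 2 * a ∧ w ≤ 2 * b - 1 + m ∧ -w ≤ 2 * b - 1 + m ∧
    w ≤ 2 * b - 1 + (2 * a - m) ∧ -w ≤ 2 * b - 1 + (2 * a - m) ∧
    ¬ (w = 0 ∧ KZ (m + 1)) ∧ ¬ ((w = 1 ∨ w = -1) ∧ KZ (2 * a - m)) ∧ ¬ (w = 0 ∧ KZ (2 * a - m + 1))

def LL (a b : ℕ) (KZ : ℤ → Prop) (m w : ℤ) : Prop :=
  (m + w) % 2 = 1 ∧ 0 < m ∧ m ≤ 2 * a ∧ w ≤ 2 * b - 1 + m ∧ -w ≤ 2 * b - 1 + m ∧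
    w ≤ 2 * b - 1 + (2 * a - m) ∧ -w ≤ 2 * b - 1 + (2 * a - m) ∧
    ¬ (w = 0 ∧ KZ (m + 1)) ∧ ¬ ((w = 1 ∨ w = -1) ∧ KZ m) ∧ ¬ (w = 0 ∧ KZ (2 * a - m + 1))

def ex1 (p q r : Prop) : Prop := (p ∨ q ∨ r) ∧ ¬ (p ∧ q) ∧ ¬ (p ∧ r) ∧ ¬ (q ∧ r)

structure Cov (a b : ℕ) (KZ : ℤ → Prop) (C : Set Code) : Prop where
  hup : ∀ m w, up m w ∈ C → RR a b KZ m w ∧ LL a b KZ (m + 1) (w + 1)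
  hdn : ∀ m w, dn m w ∈ C → RR a b KZ m w ∧ LL a b KZ (m + 1) (w - 1)
  hhz : ∀ m w, hz m w ∈ C → RR a b KZ m w ∧ LL a b KZ m w
  hR : ∀ m w, RR a b KZ m w → ex1 (up m w ∈ C) (dn m w ∈ C) (hz m w ∈ C)
  hL : ∀ m w, LL a b KZ m w → ex1 (up (m - 1) (w - 1) ∈ C) (dn (m - 1) (w + 1) ∈ C) (hz m w ∈ C)

def rotc (a : ℕ) : Code → Code
  | up m w => up (2 * a - m - 1) (-w - 1)
  | dn m w => dn (2 * a - m - 1) (-w + 1)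
  | hz m w => hz (2 * a - m) (-w)

def reflc (a : ℕ) : Code → Code
  | up m w => dn (2 * a - m - 1) (w + 1)
  | dn m w => up (2 * a - m - 1) (w - 1)
  | hz m w => hz (2 * a - m) w

def flipc : Code → Code
  | up m w => dn m (-w)
  | dn m w => up m (-w)
  | hz m w => hz m (-w)

def Rot (a : ℕ) (C : Set Code) : Prop := ∀ c ∈ C, rotc a c ∈ C
def Refl (a : ℕ) (C : Set Code) : Prop := ∀ c ∈ C, reflc a c ∈ C

theorem rotc_rotc (a : ℕ) (c : Code) : rotc a (rotc a c) = c := by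
  cases c <;> simp only [rotc] <;> congr 1 <;> ring
theorem reflc_reflc (a : ℕ) (c : Code) : reflc a (reflc a c) = c := by
  cases c <;> simp only [reflc] <;> congr 1 <;> ring
theorem rotc_reflc (a : ℕ) (c : Code) : rotc a (reflc a c) = flipc c := by
  cases c <;> simp only [reflc, rotc, flipc] <;> congr 1 <;> ring
theorem rotc_flipc (a : ℕ) (c : Code) : rotc a (flipc c) = reflc a c := by
  cases c <;> simp only [reflc, rotc, flipc] <;> congr 1 <;> ring
theorem flipc_rotc (a : ℕ) (c : Code) : flipc (rotc a c) = rotc a (flipc c) := by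
  cases c <;> simp only [reflc, rotc, flipc] <;> congr 1 <;> ring
theorem flipc_flipc (c : Code) : flipc (flipc c) = c := by
  cases c <;> simp only [flipc] <;> congr 1 <;> ring

theorem Rot.iff {a : ℕ} {C : Set Code} (h : Rot a C) (c : Code) : rotc a c ∈ C ↔ c ∈ C :=
  ⟨fun hc => by simpa [rotc_rotc] using h _ hc, h c⟩

theorem Rot.flip {a : ℕ} {C : Set Code} (h : Rot a C) (h' : Refl a C) (c : Code) :
    flipc c ∈ C ↔ c ∈ C := by
  have : ∀ c ∈ C, flipc c ∈ C := by
    intro c hc; rw [← rotc_reflc a]; exact h _ (h' _ hc)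
  exact ⟨fun hc => by simpa [flipc_flipc] using this _ hc, this c⟩

theorem Refl_of_flip {a : ℕ} {C : Set Code} (h : Rot a C) (h' : ∀ c ∈ C, flipc c ∈ C) : Refl a C := by
  intro c hc
  rw [← rotc_flipc]
  exact h _ (h' _ hc)

section
variable {a b : ℕ} {KZ : ℤ → Prop} 

theorem RR_rot (m w : ℤ) : RR a b KZ (2 * a - m) (-w) ↔ LL a b KZ m w := by
  simp only [RR, LL]
  rw [show (2 * (a : ℤ) - (2 * a - m)) = m by ring, show 2 * (a : ℤ) - m + -w = 2 * a - (m + w) by ring,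
    show 2 * (a : ℤ) - m + 1 = 2 * a - m + 1 by rfl]
  have e1 : (2 * (a : ℤ) - (m + w)) % 2 = 1 ↔ (m + w) % 2 = 1 := by omega
  have e2 : (0 ≤ 2 * (a : ℤ) - m) ↔ m ≤ 2 * a := by omega
  have e3 : (2 * (a : ℤ) - m < 2 * a) ↔ 0 < m := by omega
  have e4 : (-w = 0) ↔ w = 0 := by omega
  have e5 : (-w = 1) ↔ w = -1 := by omega
  have e6 : (-w = -1) ↔ w = 1 := by omega
  rw [e1, e2, e3, e4, e5, e6, neg_neg]
  constructor
  · rintro ⟨h1, h2, h3, h4, h5, h6, h7, h8, h9, h10⟩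
    exact ⟨h1, h3, h2, h7, h6, h5, h4, h10, fun h => h9 ⟨h.1.symm, h.2⟩, h8⟩
  · rintro ⟨h1, h3, h2, h7, h6, h5, h4, h10, h9, h8⟩
    exact ⟨h1, h2, h3, h4, h5, h6, h7, h8, fun h => h9 ⟨h.1.symm, h.2⟩, h10⟩

theorem LL_rot (m w : ℤ) : LL a b KZ (2 * a - m) (-w) ↔ RR a b KZ m w := by
  rw [← RR_rot]
  rw [show (2 * (a : ℤ) - (2 * a - m)) = m by ring, neg_neg]

theorem RR_flip (m w : ℤ) : RR a b KZ m (-w) ↔ RR a b KZ m w := by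
  simp only [RR]
  have e1 : (m + -w) % 2 = 1 ↔ (m + w) % 2 = 1 := by omega
  have e4 : (-w = 0) ↔ w = 0 := by omega
  have e5 : (-w = 1) ↔ w = -1 := by omega
  have e6 : (-w = -1) ↔ w = 1 := by omega
  rw [e1, e4, e5, e6, neg_neg]
  constructor <;>
  · rintro ⟨h1, h2, h3, h4, h5, h6, h7, h8, h9, h10⟩
    exact ⟨h1, h2, h3, h5, h4, h7, h6, h8, fun h => h9 ⟨h.1.symm, h.2⟩, h10⟩

theorem LL_flip (m w : ℤ) : LL a b KZ m (-w) ↔ LL a b KZ m w := by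
  rw [← RR_rot, ← RR_rot, RR_flip]

theorem cov_of_rot {C : Set Code} (h : Rot a C)
    (hup : ∀ m w : ℤ, m < a → up m w ∈ C → RR a b KZ m w ∧ LL a b KZ (m + 1) (w + 1))
    (hdn : ∀ m w : ℤ, m < a → dn m w ∈ C → RR a b KZ m w ∧ LL a b KZ (m + 1) (w - 1))
    (hhz : ∀ m w : ℤ, m ≤ a → hz m w ∈ C → RR a b KZ m w ∧ LL a b KZ m w)
    (hR : ∀ m w : ℤ, m < a → RR a b KZ m w → ex1 (up m w ∈ C) (dn m w ∈ C) (hz m w ∈ C))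
    (hL : ∀ m w : ℤ, m ≤ a → LL a b KZ m w → ex1 (up (m - 1) (w - 1) ∈ C) (dn (m - 1) (w + 1) ∈ C) (hz m w ∈ C)) :
    Cov a b KZ C := by
  have eu : ∀ m w, up (2 * a - m - 1) (-w - 1) ∈ C ↔ up m w ∈ C := fun m w => h.iff (up m w)
  have ed : ∀ m w, dn (2 * a - m - 1) (-w + 1) ∈ C ↔ dn m w ∈ C := fun m w => h.iff (dn m w)
  have eh : ∀ m w, hz (2 * a - m) (-w) ∈ C ↔ hz m w ∈ C := fun m w => h.iff (hz m w)
  constructor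
  · intro m w hc
    rcases lt_or_ge m a with hm | hm
    · exact hup m w hm hc
    · rw [← eu] at hc
      have := hup _ _ (by omega) hc
      rw [← LL_rot m, ← RR_rot (m + 1)]
      constructor
      · convert this.2 using 1 <;> ring
      · convert this.1 using 1 <;> ring
  · intro m w hc
    rcases lt_or_ge m a with hm | hm
    · exact hdn m w hm hc
    · rw [← ed] at hc
      have := hdn _ _ (by omega) hc
      rw [← LL_rot m, ← RR_rot (m + 1)]
      constructor
      · convert this.2 using 1 <;> ring
      · convert this.1 using 1 <;> ring
  · intro m w hc
    rcases le_or_gt m a with hm | hm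
    · exact hhz m w hm hc
    · rw [← eh] at hc
      have := hhz _ _ (by omega) hc
      rw [← LL_rot m, ← RR_rot m]
      exact this.symm
  · intro m w hc
    rcases lt_or_ge m a with hm | hm
    · exact hR m w hm hc
    · rw [← LL_rot] at hc
      have := hL _ _ (by omega) hc
      rw [← eu, ← ed, ← eh]
      exact this
  · intro m w hc
    rcases le_or_gt m a with hm | hm
    · exact hL m w hm hc
    · rw [← RR_rot] at hc
      have := hR _ _ (by omega) hc
      rw [← eu, ← ed, ← eh m]
      rw [show 2 * (a : ℤ) - (m - 1) - 1 = 2 * a - m by ring, show -(w - 1) - 1 = -w by ring,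
        show -(w + 1) + 1 = -w by ring]
      exact this

theorem cov_ext {C C' : Set Code} (h : Cov a b KZ C) (hr : Rot a C) (h' : Cov a b KZ C') (hr' : Rot a C')
    (hu : ∀ (m : ℕ) (w : ℤ), m < a → (up m w ∈ C ↔ up m w ∈ C'))
    (hd : ∀ (m : ℕ) (w : ℤ), m < a → (dn m w ∈ C ↔ dn m w ∈ C')) : C = C' := by
  have eu : ∀ (m w : ℤ), m < a → (up m w ∈ C ↔ up m w ∈ C') := by
    intro m w hm
    rcases lt_or_ge m 0 with h0 | h0
    · have e1 : up m w ∉ C := fun hc => by have := (h.hup _ _ hc).1.2.1; omega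
      have e2 : up m w ∉ C' := fun hc => by have := (h'.hup _ _ hc).1.2.1; omega
      tauto
    · lift m to ℕ using h0
      exact hu m w (by omega)
  have ed : ∀ (m w : ℤ), m < a → (dn m w ∈ C ↔ dn m w ∈ C') := by
    intro m w hm
    rcases lt_or_ge m 0 with h0 | h0
    · have e1 : dn m w ∉ C := fun hc => by have := (h.hdn _ _ hc).1.2.1; omega
      have e2 : dn m w ∉ C' := fun hc => by have := (h'.hdn _ _ hc).1.2.1; omega
      tauto
    · lift m to ℕ using h0
      exact hd m w (by omega)
  have eh : ∀ (m w : ℤ), m ≤ a → (hz m w ∈ C ↔ hz m w ∈ C') := by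
    intro m w hm
    have a1 := h.hhz m w
    have a2 := h'.hhz m w
    have a3 := h.hL m w
    have a4 := h'.hL m w
    have a5 := eu (m - 1) (w - 1) (by omega)
    have a6 := ed (m - 1) (w + 1) (by omega)
    rw [a5, a6] at a3
    simp only [ex1] at a3 a4
    constructor
    · intro hc
      have b3 := a3 (a1 hc).2
      have b4 := a4 (a1 hc).2
      clear a1 a2 a3 a4 a5 a6
      tauto
    · intro hc
      have b3 := a3 (a2 hc).2
      have b4 := a4 (a2 hc).2
      clear a1 a2 a3 a4 a5 a6
      tauto
  ext c
  rcases c with ⟨m, w⟩ | ⟨m, w⟩ | ⟨m, w⟩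
  · rcases lt_or_ge m a with hm | hm
    · exact eu m w hm
    · rw [← hr.iff, ← hr'.iff]; exact eu _ _ (by omega)
  · rcases lt_or_ge m a with hm | hm
    · exact ed m w hm
    · rw [← hr.iff, ← hr'.iff]; exact ed _ _ (by omega)
  · rcases le_or_gt m a with hm | hm
    · exact eh m w hm
    · rw [← hr.iff, ← hr'.iff]; exact eh _ _ (by omega)

theorem cov_flip {C : Set Code} (h : Cov a b KZ C) : Cov a b KZ {c | flipc c ∈ C} := by
  constructor
  · intro m w hc
    have := h.hdn _ _ hc
    rw [RR_flip, show -w - 1 = -(w + 1) by ring, LL_flip] at this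
    exact this
  · intro m w hc
    have := h.hup _ _ hc
    rw [RR_flip, show -w + 1 = -(w - 1) by ring, LL_flip] at this
    exact this
  · intro m w hc
    have := h.hhz _ _ hc
    rw [RR_flip, LL_flip] at this
    exact this
  · intro m w hc
    rw [← RR_flip] at hc
    have := h.hR _ _ hc
    simp only [ex1, Set.mem_setOf_eq, flipc] at this ⊢
    tauto
  · intro m w hc
    rw [← LL_flip] at hc
    have := h.hL _ _ hc
    simp only [ex1, Set.mem_setOf_eq, flipc] at this ⊢
    rw [show -(w - 1) = -w + 1 by ring, show -(w + 1) = -w - 1 by ring]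
    tauto
end
end Fock

end

section
open Finset
namespace Fock
open Code
section
variable {a b : ℕ} {KZ : ℤ → Prop} {K : ℕ → Prop} [DecidablePred K]

theorem mem_holeF {m : ℕ} {w : ℤ} : w ∈ holeF K m ↔ K m ∧ (w = 1 ∨ w = -1) := by
  rw [holeF]; split_ifs with h <;> simp [h]; tauto

theorem mem_holeH {m : ℕ} {w : ℤ} : w ∈ holeH K m ↔ K m ∧ w = 1 := by
  rw [holeH]; split_ifs with h <;> simp [h]

theorem mem_S0F {w : ℤ} : w ∈ S0F b ↔ w % 2 = 1 ∧ w ≤ 2 * b - 1 ∧ -w ≤ 2 * b - 1 := by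
  simp only [S0F, mem_filter, mem_Icc]; omega

theorem mem_S0H {w : ℤ} : w ∈ S0H b ↔ w % 2 = 1 ∧ w ≤ 2 * b - 1 ∧ 0 < w := by
  simp only [S0H, mem_filter, mem_Icc]; omega

theorem RR_left (ha : 0 < a) (hKZ : ∀ m, KZ m → 0 < m ∧ m < a ∧ m % 2 = 0) {m w : ℤ} (hm : m ≤ a) :
    RR a b KZ m w ↔ (m + w) % 2 = 1 ∧ 0 ≤ m ∧ w ≤ 2 * b - 1 + m ∧ -w ≤ 2 * b - 1 + m ∧
      ¬ (w = 0 ∧ KZ (m + 1)) := by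
  simp only [RR]
  constructor
  · rintro ⟨h1, h2, h3, h4, h5, h6, h7, h8, h9, h10⟩
    exact ⟨h1, h2, h4, h5, h8⟩
  · rintro ⟨h1, h2, h4, h5, h8⟩
    refine ⟨h1, h2, by omega, h4, h5, by omega, by omega, h8, fun h => ?_, fun h => ?_⟩
    · have := hKZ _ h.2; omega
    · have := hKZ _ h.2; omega

theorem LL_left (ha : 0 < a) (hKZ : ∀ m, KZ m → 0 < m ∧ m < a ∧ m % 2 = 0) {m w : ℤ} (hm : m ≤ a) :
    LL a b KZ m w ↔ RR a b KZ m w ∧ 0 < m ∧ ¬ ((w = 1 ∨ w = -1) ∧ KZ m) := by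
  rw [RR_left ha hKZ hm]
  simp only [LL]
  constructor
  · rintro ⟨h1, h2, h3, h4, h5, h6, h7, h8, h9, h10⟩
    exact ⟨⟨h1, by omega, h4, h5, h8⟩, h2, h9⟩
  · rintro ⟨⟨h1, h2, h4, h5, h8⟩, h3, h9⟩
    refine ⟨h1, h3, by omega, h4, h5, by omega, by omega, h8, h9, fun h => ?_⟩
    have := hKZ _ h.2; omega

theorem prop_aux {U D H AU AD R L hole : Prop} (h1 : U → R) (h2 : D → R) (h3 : H → R ∧ L)
    (h4 : R → ex1 U D H) (h5 : AU → L) (h6 : AD → L) (h7 : L → ex1 AU AD H) (h8 : L ↔ R ∧ ¬ hole)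
    (h9 : hole → R) : ¬ (U ∧ D) ∧ (U ∨ D ↔ (AU ∨ AD) ∨ hole) ∧ ¬ ((AU ∨ AD) ∧ hole) := by
  unfold ex1 at *
  by_cases hr : R
  · have h4 := h4 hr
    by_cases hl : L
    · have h7 := h7 hl
      have h8 := h8.1 hl
      grind
    · have : hole := by_contra fun hh => hl (h8.2 ⟨hr, hh⟩)
      have e1 : ¬ AU := fun h => hl (h5 h)
      have e2 : ¬ AD := fun h => hl (h6 h)
      have e3 : ¬ H := fun h => hl (h3 h).2
      clear h1 h2 h3 h5 h6 h7 h8 h9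
      tauto
  · have hl : ¬ L := fun h => hr (h8.1 h).1
    have e1 : ¬ AU := fun h => hl (h5 h)
    have e2 : ¬ AD := fun h => hl (h6 h)
    have e3 : ¬ U := fun h => hr (h1 h)
    have e4 : ¬ D := fun h => hr (h2 h)
    have e5 : ¬ hole := fun h => hr (h9 h)
    clear h1 h2 h3 h4 h5 h6 h7 h8 h9
    tauto

theorem prop_aux2 {U D A hole p : Prop} (h1 : ¬ (U ∧ D)) (h2 : U ∨ D ↔ A ∨ hole) (h3 : ¬ (A ∧ hole))
    (h4 : ¬ p → A) : ex1 U D ((p ∧ ¬ hole) ∧ ¬ A) := by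
  unfold ex1
  by_cases p <;> by_cases A <;> by_cases hole <;> simp_all <;> tauto

theorem prop_aux3 {U D R : Prop} (h1 : ¬ (U ∧ D)) (hR : R) :
    ex1 U D (R ∧ ¬ (U ∨ D)) := by
  unfold ex1; tauto

theorem prop_aux4 {U D H R k : Prop} (h1 : U → R) (h2 : D → R) (h3 : ¬ H) (h4 : R → ex1 U D H)
    (hk : ¬ k) (q : Prop) :
    ¬ (U ∧ D) ∧ (U ∨ D ↔ R ∨ k ∧ q) ∧ ¬ (R ∧ k ∧ q) := by
  unfold ex1 at h4; tauto

theorem prop_aux5 {AU AD L H : Prop} (h5 : AU → L) (h6 : AD → L) (h7 : L → ex1 AU AD H) :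
    AU ∨ AD ↔ L ∧ ¬ H := by
  unfold ex1 at h7; tauto

theorem cov_to_PC (ha : 0 < a) (hb : 0 < b) (hKZ : ∀ m, KZ m → 0 < m ∧ m < a ∧ m % 2 = 0)
    (hKK : ∀ m : ℕ, K m ↔ KZ m) {C : Set Code} (h : Cov a b KZ C) (u d : ℕ → Finset ℤ)
    (hu : ∀ (m : ℕ) (w : ℤ), m < a → (w ∈ u m ↔ up m w ∈ C))
    (hd : ∀ (m : ℕ) (w : ℤ), m < a → (w ∈ d m ↔ dn m w ∈ C)) :
    PC (S0F b) (holeF K) (fun _ => True) u d a := by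
  intro m hm w
  have key : ¬ (w ∈ u m ∧ w ∈ d m) ∧ (w ∈ u m ∨ w ∈ d m ↔ w ∈ ar (S0F b) u d m ∨ w ∈ holeF K m) ∧
      ¬ (w ∈ ar (S0F b) u d m ∧ w ∈ holeF K m) := by
    rw [hu m w hm, hd m w hm, mem_holeF, hKK]
    have a1 := fun hc => (h.hup m w hc).1
    have a2 := fun hc => (h.hdn m w hc).1
    have a3 := h.hhz m w
    have a4 := h.hR m w
    rcases m with _ | j
    · have h0 : ¬ KZ (0 : ℕ) := fun hk => by have := hKZ _ hk; omega
      have h1 : ¬ LL a b KZ (0 : ℕ) w := fun hl => by have := hl.2.1; omega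
      have h2 : w ∈ S0F b ↔ RR a b KZ (0 : ℕ) w := by
        rw [RR_left ha hKZ (by positivity), mem_S0F]
        have : ¬ KZ ((0 : ℕ) + 1 : ℤ) := fun hk => by have := hKZ _ hk; simp at this
        simp only [this, and_false, not_false_eq_true, and_true]
        push_cast; simp only [true_and, add_zero, zero_add]
      rw [ar, h2]
      exact prop_aux4 a1 a2 (fun hc => h1 (a3 hc).2) a4 h0 _
    · rw [mem_ar_succ, hu j _ (by omega), hd j _ (by omega)]
      have e : ((j + 1 : ℕ) : ℤ) - 1 = j := by push_cast; ring
      have a5 := fun hc => (h.hup j (w - 1) hc).2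
      have a6 := fun hc => (h.hdn j (w + 1) hc).2
      have a7 := h.hL (j + 1 : ℕ) w
      rw [e] at a7
      rw [sub_add_cancel] at a5
      rw [add_sub_cancel_right] at a6
      refine prop_aux (R := RR a b KZ (j + 1 : ℕ) w) (L := LL a b KZ (j + 1 : ℕ) w) a1 a2 a3 a4 ?_ ?_ a7 ?_ ?_
      · intro hc; push_cast; exact a5 hc
      · intro hc; push_cast; exact a6 hc
      · rw [LL_left ha hKZ (by omega)]
        have : (0 : ℤ) < (j + 1 : ℕ) := by omega
        rw [and_comm (a := KZ _)]
        simp only [this, true_and]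
      · intro hk
        have := hKZ _ hk.1
        rw [RR_left ha hKZ (by omega)]
        refine ⟨by omega, by omega, by omega, by omega, fun h' => by omega⟩
  refine ⟨key.1, key.2.1, key.2.2, ?_, fun _ => trivial⟩
  rw [hu m _ hm, hd m _ hm]
  rintro ⟨h1, h2⟩
  have h3 := (h.hup _ _ h1).2
  rw [sub_add_cancel] at h3
  have h4 := h.hL _ _ h3
  rw [add_sub_cancel_right] at h4
  exact h4.2.1 ⟨h1, h2⟩

theorem cov_ar_symm (ha : 0 < a) (hKZ : ∀ m, KZ m → 0 < m ∧ m < a ∧ m % 2 = 0)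
    {C : Set Code} (h : Cov a b KZ C) (hr : Rot a C) (u d : ℕ → Finset ℤ)
    (hu : ∀ (m : ℕ) (w : ℤ), m < a → (w ∈ u m ↔ up m w ∈ C))
    (hd : ∀ (m : ℕ) (w : ℤ), m < a → (w ∈ d m ↔ dn m w ∈ C)) (w : ℤ) :
    w ∈ ar (S0F b) u d a ↔ -w ∈ ar (S0F b) u d a := by
  have key : ∀ w, w ∈ ar (S0F b) u d a ↔ LL a b KZ a w ∧ hz a w ∉ C := by
    intro w
    obtain ⟨j, rfl⟩ : ∃ j, a = j + 1 := ⟨a - 1, by omega⟩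
    rw [mem_ar_succ, hu j _ (by omega), hd j _ (by omega)]
    have e : ((j + 1 : ℕ) : ℤ) - 1 = j := by push_cast; ring
    have e' : ((j + 1 : ℕ) : ℤ) = j + 1 := by push_cast; ring
    have a5 := fun hc => (h.hup j (w - 1) hc).2
    have a6 := fun hc => (h.hdn j (w + 1) hc).2
    have a7 := h.hL (j + 1 : ℕ) w
    rw [e] at a7
    rw [sub_add_cancel, ← e'] at a5
    rw [add_sub_cancel_right, ← e'] at a6
    exact prop_aux5 a5 a6 a7
  rw [key, key, LL_flip]
  have := hr.iff (hz a w)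
  rw [rotc, show 2 * (a : ℤ) - a = a by ring] at this
  rw [this]

theorem PC_to_cov (ha : 0 < a) (hb : 0 < b) (hKZ : ∀ m, KZ m → 0 < m ∧ m < a ∧ m % 2 = 0)
    (hKK : ∀ m : ℕ, K m ↔ KZ m) (u d : ℕ → Finset ℤ)
    (h : PC (S0F b) (holeF K) (fun _ => True) u d a)
    (hs : ∀ w, w ∈ ar (S0F b) u d a ↔ -w ∈ ar (S0F b) u d a) :
    ∃ C, Cov a b KZ C ∧ Rot a C ∧ (∀ (m : ℕ) (w : ℤ), m < a → (w ∈ u m ↔ up m w ∈ C)) ∧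
    (∀ (m : ℕ) (w : ℤ), m < a → (w ∈ d m ↔ dn m w ∈ C)) := by
  have hK2 : ∀ m, K m → m % 2 = 0 := fun m hm => by
    rw [hKK] at hm; have := hKZ _ hm; omega
  have inv := PC_inv hb hK2 h
  set C : Set Code := {c | match c with
    | up m w => (0 ≤ m ∧ m < a ∧ w ∈ u m.toNat) ∨ (a ≤ m ∧ m < 2 * a ∧ -w - 1 ∈ u (2 * a - m - 1).toNat)
    | dn m w => (0 ≤ m ∧ m < a ∧ w ∈ d m.toNat) ∨ (a ≤ m ∧ m < 2 * a ∧ -w + 1 ∈ d (2 * a - m - 1).toNat)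
    | hz m w => RR a b KZ m w ∧ LL a b KZ m w ∧ ((m ≤ a ∧ w ∉ ar (S0F b) u d m.toNat) ∨
        (a < m ∧ -w ∉ ar (S0F b) u d (2 * a - m).toNat))} with hC
  have hu : ∀ (m : ℕ) (w : ℤ), m < a → (w ∈ u m ↔ up m w ∈ C) := by
    intro m w hm
    simp only [hC, Set.mem_setOf_eq, Int.toNat_natCast]
    constructor
    · intro h; exact Or.inl ⟨by omega, by omega, h⟩
    · rintro (h | h)
      · exact h.2.2
      · omega
  have hd : ∀ (m : ℕ) (w : ℤ), m < a → (w ∈ d m ↔ dn m w ∈ C) := by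
    intro m w hm
    simp only [hC, Set.mem_setOf_eq, Int.toNat_natCast]
    constructor
    · intro h; exact Or.inl ⟨by omega, by omega, h⟩
    · rintro (h | h)
      · exact h.2.2
      · omega
  have hh : ∀ (m : ℕ) (w : ℤ), m ≤ a → (hz m w ∈ C ↔ RR a b KZ m w ∧ LL a b KZ m w ∧ w ∉ ar (S0F b) u d m) := by
    intro m w hm
    simp only [hC, Set.mem_setOf_eq, Int.toNat_natCast]
    constructor
    · rintro ⟨h1, h2, h | h⟩
      · exact ⟨h1, h2, h.2⟩
      · omega
    · rintro ⟨h1, h2, h3⟩; exact ⟨h1, h2, Or.inl ⟨by omega, h3⟩⟩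
  have hneg : ∀ m w : ℤ, m < 0 → up m w ∉ C ∧ dn m w ∉ C ∧ hz m w ∉ C := by
    intro m w hm
    simp only [hC, Set.mem_setOf_eq]
    refine ⟨by omega, by omega, fun h => ?_⟩
    have := h.1.2.1; omega
  have hrot : Rot a C := by
    intro c hc
    rcases c with ⟨m, w⟩ | ⟨m, w⟩ | ⟨m, w⟩
    · simp only [hC, rotc, Set.mem_setOf_eq] at hc ⊢
      rw [show 2 * (a : ℤ) - (2 * a - m - 1) - 1 = m by ring, show -(-w - 1) - 1 = w by ring]
      rcases hc with hc | hc
      · right; exact ⟨by omega, by omega, hc.2.2⟩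
      · left; exact ⟨by omega, by omega, hc.2.2⟩
    · simp only [hC, rotc, Set.mem_setOf_eq] at hc ⊢
      rw [show 2 * (a : ℤ) - (2 * a - m - 1) - 1 = m by ring, show -(-w + 1) + 1 = w by ring]
      rcases hc with hc | hc
      · right; exact ⟨by omega, by omega, hc.2.2⟩
      · left; exact ⟨by omega, by omega, hc.2.2⟩
    · simp only [hC, rotc, Set.mem_setOf_eq] at hc ⊢
      rw [RR_rot, LL_rot, show 2 * (a : ℤ) - (2 * a - m) = m by ring, neg_neg]
      refine ⟨hc.2.1, hc.1, ?_⟩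
      rcases hc.2.2 with h1 | h1
      · rcases lt_or_eq_of_le h1.1 with h2 | h2
        · right; exact ⟨by omega, h1.2⟩
        · left
          subst h2
          rw [show 2 * (a : ℤ) - a = a by ring]
          refine ⟨le_rfl, ?_⟩
          rw [Int.toNat_natCast, ← hs]
          simpa using h1.2
      · left; exact ⟨by omega, h1.2⟩
  -- facts
  have hS : ∀ (m : ℕ) w, m < a → (w ∈ u m ∨ w ∈ d m) → RR a b KZ m w := by
    intro m w hm hw
    have hrange : (m + w) % 2 = 1 ∧ w ≤ 2 * b - 1 + m ∧ -w ≤ 2 * b - 1 + m := by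
      rcases (h m hm w).2.1.1 hw with h1 | h1
      · have := inv m hm.le w h1; omega
      · rw [mem_holeF] at h1
        have := hK2 _ h1.1
        omega
    rw [RR_left ha hKZ (by omega)]
    refine ⟨hrange.1, by omega, hrange.2.1, hrange.2.2, ?_⟩
    rintro ⟨rfl, hk⟩
    have hm1 : m + 1 < a := by have := hKZ _ hk; omega
    have hk' : K (m + 1) := by rw [hKK]; exact_mod_cast hk
    rcases hw with hw | hw
    · refine (h (m + 1) hm1 1).2.2.1 ⟨?_, ?_⟩
      · rw [mem_ar_succ]; left; simpa using hw
      · rw [mem_holeF]; exact ⟨hk', by simp⟩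
    · refine (h (m + 1) hm1 (-1)).2.2.1 ⟨?_, ?_⟩
      · rw [mem_ar_succ]; right; simpa using hw
      · rw [mem_holeF]; exact ⟨hk', by simp⟩
  have hA : ∀ (m : ℕ) w, 0 < m → m ≤ a → w ∈ ar (S0F b) u d m → LL a b KZ m w := by
    intro m w h0 hm hw
    rw [LL_left ha hKZ (by omega)]
    rcases lt_or_eq_of_le hm with hm | rfl
    · refine ⟨hS m w hm ((h m hm w).2.1.2 (Or.inl hw)), by omega, fun hk => ?_⟩
      refine (h m hm w).2.2.1 ⟨hw, ?_⟩
      rw [mem_holeF, hKK]; exact hk.symm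
    · have := inv m le_rfl w hw
      rw [RR_left ha hKZ le_rfl]
      refine ⟨⟨by omega, by omega, by omega, by omega, fun hk => ?_⟩, by omega, fun hk => ?_⟩
      · have := hKZ _ hk.2; omega
      · have := hKZ _ hk.2; omega
  refine ⟨C, cov_of_rot hrot ?_ ?_ ?_ ?_ ?_, hrot, hu, hd⟩
  · intro m w hm hc
    rcases lt_or_ge m 0 with h0 | h0
    · exact absurd hc (hneg _ _ h0).1
    lift m to ℕ using h0
    have hm' : m < a := by omega
    rw [← hu m w hm'] at hc
    refine ⟨hS m w hm' (Or.inl hc), ?_⟩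
    have := hA (m + 1) (w + 1) (by omega) (by omega) (by rw [mem_ar_succ]; left; simpa using hc)
    exact_mod_cast this
  · intro m w hm hc
    rcases lt_or_ge m 0 with h0 | h0
    · exact absurd hc (hneg _ _ h0).2.1
    lift m to ℕ using h0
    have hm' : m < a := by omega
    rw [← hd m w hm'] at hc
    refine ⟨hS m w hm' (Or.inr hc), ?_⟩
    have := hA (m + 1) (w - 1) (by omega) (by omega) (by rw [mem_ar_succ]; right; simpa using hc)
    exact_mod_cast this
  · intro m w hm hc
    exact ⟨hc.1, hc.2.1⟩
  · intro m w hm hc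
    have h0 := hc.2.1
    lift m to ℕ using h0
    have hm' : m < a := by omega
    rw [← hd m w hm', ← hu m w hm', hh m w hm'.le]
    have hp := h m hm' w
    have : LL a b KZ m w ↔ 0 < m ∧ w ∉ holeF K m := by
      rw [LL_left ha hKZ hm.le, mem_holeF, hKK]
      simp only [hc, true_and]
      rw [and_comm (a := KZ _)]
      refine and_congr (by omega) Iff.rfl
    rw [this]
    have h00 : ¬ 0 < m → w ∈ ar (S0F b) u d m := by
      intro h00
      have h00 : m = 0 := by omega
      subst h00
      rw [ar, mem_S0F]
      rw [RR_left ha hKZ (by omega)] at hc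
      have e1 := hc.1
      have e2 := hc.2.2.1
      have e3 := hc.2.2.2.1
      push_cast at e1 e2 e3
      omega
    simp only [hc, true_and]
    exact prop_aux2 hp.1 hp.2.1 hp.2.2.1 h00
  · intro m w hm hc
    have h0 := hc.2.1.le
    have hpos := hc.2.1
    lift m to ℕ using h0
    have hm' : m ≤ a := by omega
    have hr := ((LL_left ha hKZ hm).1 hc).1
    rw [hh m w hm']
    obtain ⟨j, rfl⟩ : ∃ j, m = j + 1 := ⟨m - 1, by omega⟩
    rw [show ((j + 1 : ℕ) : ℤ) - 1 = j by push_cast; ring, ← hu j _ (by omega), ← hd j _ (by omega), mem_ar_succ]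
    have := (h j (by omega) w).2.2.2.1
    simp only [hr, hc, true_and]
    have := prop_aux3 this trivial
    simpa using this
end
end Fock

end

section
open Finset
namespace Fock
open Code
section
variable {a b : ℕ} {KZ : ℤ → Prop} {K : ℕ → Prop} [DecidablePred K]

theorem half_pos {u d : ℕ → Finset ℤ} (h : PC (S0H b) (holeH K) (fun x => 0 < x) u d a) :
    (∀ m ≤ a, ∀ w ∈ ar (S0H b) u d m, 0 < w) ∧ ∀ m < a, ∀ w, w ∈ u m ∨ w ∈ d m → 0 < w := by
  have h1 : ∀ m ≤ a, ∀ w ∈ ar (S0H b) u d m, 0 < w := by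
    intro m hm w hw
    rcases m with _ | m
    · rw [ar, mem_S0H] at hw; exact hw.2.2
    · exact (h m (by omega) w).2.2.2.2 hw
  refine ⟨h1, fun m hm w hw => ?_⟩
  rcases (h m hm w).2.1.1 hw with hw | hw
  · exact h1 m hm.le w hw
  · rw [mem_holeH] at hw; omega

theorem half_to_full {u d : ℕ → Finset ℤ} (h : PC (S0H b) (holeH K) (fun x => 0 < x) u d a) :
    ∃ U D : ℕ → Finset ℤ, PC (S0F b) (holeF K) (fun _ => True) U D a ∧
      (∀ w, w ∈ ar (S0F b) U D a ↔ -w ∈ ar (S0F b) U D a) ∧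
      (∀ m w, m < a → (w ∈ u m ↔ 0 < w ∧ w ∈ U m)) ∧
      (∀ m w, m < a → (w ∈ d m ↔ 0 < w ∧ w ∈ D m)) ∧
      (∀ m w, m < a → (w ∈ U m ↔ -w ∈ D m)) := by
  obtain ⟨pa, ps⟩ := half_pos h
  have hU : ∀ m w, w ∈ (fun m => u m ∪ ng (d m)) m ↔ w ∈ u m ∨ -w ∈ d m := by
    intro m w; simp only [mem_union, mem_ng]
  have hD : ∀ m w, w ∈ (fun m => d m ∪ ng (u m)) m ↔ w ∈ d m ∨ -w ∈ u m := by
    intro m w; simp only [mem_union, mem_ng]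
  refine ⟨fun m => u m ∪ ng (d m), fun m => d m ∪ ng (u m), ?_⟩
  generalize (fun m => u m ∪ ng (d m)) = U at *
  generalize (fun m => d m ∪ ng (u m)) = D at *
  have hA : ∀ m ≤ a, ∀ w, w ∈ ar (S0F b) U D m ↔ w ∈ ar (S0H b) u d m ∨ -w ∈ ar (S0H b) u d m := by
    intro m hm w
    rcases m with _ | m
    · simp only [ar, mem_S0F, mem_S0H]; omega
    · simp only [mem_ar_succ, hU, hD]
      rw [show -(w - 1) = -w + 1 by ring, show -(w + 1) = -w - 1 by ring]
      tauto
  refine ⟨?_, ?_, ?_, ?_, ?_⟩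
  · intro m hm w
    have pu : ∀ w, w ∈ u m → 0 < w := fun w hw => ps m hm w (Or.inl hw)
    have pd : ∀ w, w ∈ d m → 0 < w := fun w hw => ps m hm w (Or.inr hw)
    have pA := pa m hm.le
    refine ⟨?_, ?_, ?_, ?_, fun _ => trivial⟩
    · rw [hU, hD]
      rintro ⟨h1 | h1, h2 | h2⟩
      · exact (h m hm w).1 ⟨h1, h2⟩
      · have := pu _ h1; have := pu _ h2; omega
      · have := pd _ h1; have := pd _ h2; omega
      · exact (h m hm (-w)).1 ⟨h2, h1⟩
    · rw [hU, hD, hA m hm.le, mem_holeF]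
      have e1 := (h m hm w).2.1
      have e2 := (h m hm (-w)).2.1
      rw [mem_holeH] at e1 e2
      rw [show (-w = 1) ↔ w = -1 by omega] at e2
      generalize K m = k at *
      generalize (w ∈ ar (S0H b) u d m) = A1 at *
      generalize (-w ∈ ar (S0H b) u d m) = A2 at *
      constructor
      · rintro ((h | h) | (h | h))
        · rcases e1.1 (Or.inl h) with h | h
          · exact Or.inl (Or.inl h)
          · exact Or.inr ⟨h.1, Or.inl h.2⟩
        · rcases e2.1 (Or.inr h) with h | h
          · exact Or.inl (Or.inr h)
          · exact Or.inr ⟨h.1, Or.inr h.2⟩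
        · rcases e1.1 (Or.inr h) with h | h
          · exact Or.inl (Or.inl h)
          · exact Or.inr ⟨h.1, Or.inl h.2⟩
        · rcases e2.1 (Or.inl h) with h | h
          · exact Or.inl (Or.inr h)
          · exact Or.inr ⟨h.1, Or.inr h.2⟩
      · rintro ((h | h) | ⟨h1, h | h⟩)
        · rcases e1.2 (Or.inl h) with h | h
          · exact Or.inl (Or.inl h)
          · exact Or.inr (Or.inl h)
        · rcases e2.2 (Or.inl h) with h | h
          · exact Or.inr (Or.inr h)
          · exact Or.inl (Or.inr h)
        · rcases e1.2 (Or.inr ⟨h1, h⟩) with h | h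
          · exact Or.inl (Or.inl h)
          · exact Or.inr (Or.inl h)
        · rcases e2.2 (Or.inr ⟨h1, h⟩) with h | h
          · exact Or.inr (Or.inr h)
          · exact Or.inl (Or.inr h)
    · rw [hA m hm.le, mem_holeF]
      rintro ⟨h1 | h1, hk, h2⟩
      · refine (h m hm w).2.2.1 ⟨h1, ?_⟩
        rw [mem_holeH]; have := pA _ h1; exact ⟨hk, by omega⟩
      · refine (h m hm (-w)).2.2.1 ⟨h1, ?_⟩
        rw [mem_holeH]; have := pA _ h1; exact ⟨hk, by omega⟩
    · rw [hU, hD]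
      rintro ⟨h1 | h1, h2 | h2⟩
      · exact (h m hm w).2.2.2.1 ⟨h1, h2⟩
      · have := pu _ h1; have := pu _ h2; omega
      · have i1 := pd _ h1; have i2 := pd _ h2
        have : w = 0 := by omega
        subst this
        have := (h m hm 0).2.2.2.2 (by rw [mem_ar_succ]; exact Or.inr h2)
        omega
      · refine (h m hm (-w)).2.2.2.1 ⟨?_, ?_⟩
        · convert h2 using 1; ring
        · convert h1 using 1; ring
  · intro w
    rw [hA a le_rfl, hA a le_rfl, neg_neg, or_comm]
  · intro m w hm
    rw [hU]
    constructor
    · intro h1; exact ⟨ps m hm w (Or.inl h1), Or.inl h1⟩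
    · rintro ⟨h1, h2 | h2⟩
      · exact h2
      · have := ps m hm _ (Or.inr h2); omega
  · intro m w hm
    rw [hD]
    constructor
    · intro h1; exact ⟨ps m hm w (Or.inr h1), Or.inl h1⟩
    · rintro ⟨h1, h2 | h2⟩
      · exact h2
      · have := ps m hm _ (Or.inl h2); omega
  · intro m w hm
    rw [hU, hD, neg_neg, or_comm]

theorem full_to_half {U D u d : ℕ → Finset ℤ} (h : PC (S0F b) (holeF K) (fun _ => True) U D a)
    (hu : ∀ m w, m < a → (w ∈ u m ↔ 0 < w ∧ w ∈ U m))
    (hd : ∀ m w, m < a → (w ∈ d m ↔ 0 < w ∧ w ∈ D m))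
    (hf : ∀ m w, m < a → (w ∈ U m ↔ -w ∈ D m)) :
    PC (S0H b) (holeH K) (fun x => 0 < x) u d a ∧
    ∀ m ≤ a, ∀ w, w ∈ ar (S0H b) u d m ↔ 0 < w ∧ w ∈ ar (S0F b) U D m := by
  have z1 : ∀ m < a, (0 : ℤ) ∉ U m := by
    intro m hm hz
    exact (h m hm 0).1 ⟨hz, by rw [hf m 0 hm] at hz; simpa using hz⟩
  have z2 : ∀ m < a, (1 : ℤ) ∉ D m := by
    intro m hm hz
    refine (h m hm 0).2.2.2.1 ⟨?_, by simpa using hz⟩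
    rw [hf m _ hm]; simpa using hz
  have hA : ∀ m ≤ a, ∀ w, w ∈ ar (S0H b) u d m ↔ 0 < w ∧ w ∈ ar (S0F b) U D m := by
    intro m hm w
    rcases m with _ | m
    · simp only [ar, mem_S0F, mem_S0H]; omega
    · rw [mem_ar_succ, mem_ar_succ, hu m _ (by omega), hd m _ (by omega)]
      constructor
      · rintro (h1 | h1)
        · exact ⟨by omega, Or.inl h1.2⟩
        · have : w ≠ 0 := by
            rintro rfl; exact z2 m (by omega) (by simpa using h1.2)
          exact ⟨by omega, Or.inr h1.2⟩
      · rintro ⟨h1, h2 | h2⟩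
        · have : w ≠ 1 := by
            rintro rfl; exact z1 m (by omega) (by simpa using h2)
          exact Or.inl ⟨by omega, h2⟩
        · exact Or.inr ⟨by omega, h2⟩
  refine ⟨fun m hm w => ?_, hA⟩
  have h' := h m hm w
  rw [mem_holeF] at h'
  rw [hA m hm.le, mem_holeH, hu m w hm, hd m w hm, hu m _ hm, hd m _ hm]
  refine ⟨fun h1 => h'.1 ⟨h1.1.2, h1.2.2⟩, ?_, ?_, fun h1 => h'.2.2.2.1 ⟨h1.1.2, h1.2.2⟩, ?_⟩
  · constructor
    · intro h1
      have hw : 0 < w := by rcases h1 with h1 | h1 <;> exact h1.1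
      rcases h'.2.1.1 (by rcases h1 with h1 | h1; exact Or.inl h1.2; exact Or.inr h1.2) with h2 | h2
      · exact Or.inl ⟨hw, h2⟩
      · exact Or.inr ⟨h2.1, by omega⟩
    · rintro (h1 | h1)
      · rcases h'.2.1.2 (Or.inl h1.2) with h2 | h2
        · exact Or.inl ⟨h1.1, h2⟩
        · exact Or.inr ⟨h1.1, h2⟩
      · have hw : 0 < w := by omega
        rcases h'.2.1.2 (Or.inr ⟨h1.1, Or.inl h1.2⟩) with h2 | h2
        · exact Or.inl ⟨hw, h2⟩
        · exact Or.inr ⟨hw, h2⟩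
  · rintro ⟨h1, h2⟩
    exact h'.2.2.1 ⟨h1.2, h2.1, Or.inl h2.2⟩
  · intro h1
    exact ((hA (m + 1) (by omega) w).1 h1).1

open Classical in
def uf (b : ℕ) (C : Set Code) (m : ℕ) : Finset ℤ :=
  (Icc (-(2 * b + m : ℤ)) (2 * b + m)).filter fun w => up m w ∈ C
open Classical in
def df (b : ℕ) (C : Set Code) (m : ℕ) : Finset ℤ :=
  (Icc (-(2 * b + m : ℤ)) (2 * b + m)).filter fun w => dn m w ∈ C

theorem mem_uf {C : Set Code} (h : Cov a b KZ C) (m : ℕ) (w : ℤ) : w ∈ uf b C m ↔ up m w ∈ C := by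
  simp only [uf, mem_filter, mem_Icc]
  constructor
  · exact fun h => h.2
  · intro hc
    obtain ⟨⟨_, _, _, h4, h5, _⟩, _⟩ := h.hup _ _ hc
    exact ⟨⟨by omega, by omega⟩, hc⟩

theorem mem_df {C : Set Code} (h : Cov a b KZ C) (m : ℕ) (w : ℤ) : w ∈ df b C m ↔ dn m w ∈ C := by
  simp only [df, mem_filter, mem_Icc]
  constructor
  · exact fun h => h.2
  · intro hc
    obtain ⟨⟨_, _, _, h4, h5, _⟩, _⟩ := h.hdn _ _ hc
    exact ⟨⟨by omega, by omega⟩, hc⟩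

end

theorem card_of_bij {α β : Type*} (p : α → Prop) (s : Finset β) (f : α → β) (h1 : ∀ x, p x → f x ∈ s)
    (h2 : ∀ x y, p x → p y → f x = f y → x = y) (h3 : ∀ y ∈ s, ∃ x, p x ∧ f x = y) :
    Nat.card {x // p x} = s.card := by
  have e : Function.Bijective (fun x : {x // p x} => (⟨f x.1, h1 x.1 x.2⟩ : {y // y ∈ s})) := by
    constructor
    · intro x y h
      exact Subtype.ext (h2 _ _ x.2 y.2 (congrArg Subtype.val h))
    · rintro ⟨y, hy⟩
      obtain ⟨x, hx, rfl⟩ := h3 y hy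
      exact ⟨⟨x, hx⟩, rfl⟩
  rw [Nat.card_congr (Equiv.ofBijective _ e), Nat.card_eq_fintype_card, Fintype.card_coe]

section
variable {a b : ℕ} {KZ : ℤ → Prop} {K : ℕ → Prop} [DecidablePred K]

theorem card_full (ha : 0 < a) (hb : 0 < b) (hKZ : ∀ m, KZ m → 0 < m ∧ m < a ∧ m % 2 = 0)
    (hKK : ∀ m : ℕ, K m ↔ KZ m) :
    Nat.card {C : Set Code // Cov a b KZ C ∧ Rot a C} =
      ∑ E : Finset (Fin (a + b)), (P (S0F b) (holeF K) (fun _ => True) a (sy (a % 2) E)).card := by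
  have hK2 : ∀ m, K m → m % 2 = 0 := fun m hm => by
    rw [hKK] at hm; have := hKZ _ hm; omega
  rw [← card_bi _ _ _ _ _ (sy_inj (a % 2) (a + b))]
  refine card_of_bij _ _ (fun C => lst (uf b C) (df b C) a) ?_ ?_ ?_
  · rintro C ⟨h1, h2⟩
    have hp := cov_to_PC ha hb hKZ hKK h1 (uf b C) (df b C) (fun m w _ => mem_uf h1 m w) (fun m w _ => mem_df h1 m w)
    have hs := cov_ar_symm ha hKZ h1 h2 (uf b C) (df b C) (fun m w _ => mem_uf h1 m w) (fun m w _ => mem_df h1 m w)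
    obtain ⟨E, hE⟩ := exists_sy b a hb K hK2 _ _ hp hs
    rw [mem_biUnion]
    exact ⟨E, mem_univ _, by rw [lst_mem]; exact ⟨hE.symm, hp⟩⟩
  · rintro C C' ⟨h1, h2⟩ ⟨h1', h2'⟩ he
    rw [lst_congr] at he
    refine cov_ext h1 h2 h1' h2' ?_ ?_
    · intro m w hm; rw [← mem_uf h1, ← mem_uf h1', (he m hm).1]
    · intro m w hm; rw [← mem_df h1, ← mem_df h1', (he m hm).2]
  · intro l hl
    rw [mem_biUnion] at hl
    obtain ⟨E, -, hl⟩ := hl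
    obtain ⟨u, d, rfl⟩ := exists_lst _ _ _ _ _ _ hl
    rw [lst_mem] at hl
    obtain ⟨C, h1, h2, hu, hd⟩ := PC_to_cov ha hb hKZ hKK u d hl.2 (by
      intro w; rw [← hl.1]; exact mem_sy_neg _ _ _)
    refine ⟨C, ⟨h1, h2⟩, ?_⟩
    rw [lst_congr]
    intro m hm
    constructor
    · ext w; rw [mem_uf h1, hu m w hm]
    · ext w; rw [mem_df h1, hd m w hm]

theorem card_half (ha : 0 < a) (hb : 0 < b) (hKZ : ∀ m, KZ m → 0 < m ∧ m < a ∧ m % 2 = 0)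
    (hKK : ∀ m : ℕ, K m ↔ KZ m) :
    Nat.card {C : Set Code // Cov a b KZ C ∧ Rot a C ∧ Refl a C} =
      ∑ E : Finset (Fin (a + b)), (P (S0H b) (holeH K) (fun x => 0 < x) a
        (E.map (pe (a % 2) (a + b)).toEmbedding)).card := by
  have hK2 : ∀ m, K m → m % 2 = 0 := fun m hm => by
    rw [hKK] at hm; have := hKZ _ hm; omega
  rw [← card_bi _ _ _ _ _ (map_pe_inj (a % 2) (a + b))]
  have key : ∀ C, Cov a b KZ C → Rot a C → Refl a C → ∀ (m : ℕ) (w : ℤ), up m w ∈ C ↔ dn m (-w) ∈ C :=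
    fun C _ h1 h2 m w => (h1.flip h2 (up m w)).symm
  refine card_of_bij _ _ (fun C => lst (fun m => (uf b C m).filter (0 < ·)) (fun m => (df b C m).filter (0 < ·)) a) ?_ ?_ ?_
  · rintro C ⟨h1, h2, h3⟩
    have hp := cov_to_PC ha hb hKZ hKK h1 (uf b C) (df b C) (fun m w _ => mem_uf h1 m w) (fun m w _ => mem_df h1 m w)
    have hs := cov_ar_symm ha hKZ h1 h2 (uf b C) (df b C) (fun m w _ => mem_uf h1 m w) (fun m w _ => mem_df h1 m w)
    obtain ⟨E, hE⟩ := exists_sy b a hb K hK2 _ _ hp hs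
    obtain ⟨hq, hq'⟩ := full_to_half (u := fun m => (uf b C m).filter (0 < ·))
      (d := fun m => (df b C m).filter (0 < ·)) hp (fun m w _ => by simp [and_comm])
      (fun m w _ => by simp [and_comm]) (fun m w _ => by
        rw [mem_uf h1, mem_df h1]; exact key C h1 h2 h3 m w)
    rw [mem_biUnion]
    refine ⟨E, mem_univ _, ?_⟩
    rw [lst_mem]
    refine ⟨?_, hq⟩
    ext w
    rw [hq' a le_rfl, mem_sy_iff, hE]
  · rintro C C' ⟨h1, h2, h3⟩ ⟨h1', h2', h3'⟩ he
    rw [lst_congr] at he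
    have e1 : ∀ (m : ℕ) (w : ℤ), m < a → 0 < w → (up m w ∈ C ↔ up m w ∈ C') := by
      intro m w hm hw
      have := (he m hm).1
      rw [Finset.ext_iff] at this
      have := this w
      simpa [mem_uf h1, mem_uf h1', hw] using this
    have e2 : ∀ (m : ℕ) (w : ℤ), m < a → 0 < w → (dn m w ∈ C ↔ dn m w ∈ C') := by
      intro m w hm hw
      have := (he m hm).2
      rw [Finset.ext_iff] at this
      have := this w
      simpa [mem_df h1, mem_df h1', hw] using this
    have z : ∀ C, Cov a b KZ C → Rot a C → Refl a C → ∀ m : ℕ, up m 0 ∉ C := by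
      intro C h1 h2 h3 m hc
      have hc' := hc
      rw [key C h1 h2 h3, neg_zero] at hc'
      exact (h1.hR _ _ (h1.hup _ _ hc).1).2.1 ⟨hc, hc'⟩
    have e3 : ∀ (m : ℕ) (w : ℤ), m < a → (up m w ∈ C ↔ up m w ∈ C') := by
      intro m w hm
      rcases lt_trichotomy w 0 with hw | rfl | hw
      · rw [key C h1 h2 h3, key C' h1' h2' h3']; exact e2 _ _ hm (by omega)
      · have := z C h1 h2 h3 m; have := z C' h1' h2' h3' m; tauto
      · exact e1 m w hm hw
    refine cov_ext h1 h2 h1' h2' e3 ?_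
    intro m w hm
    have := e3 m (-w) hm
    rw [key C h1 h2 h3, key C' h1' h2' h3', neg_neg] at this
    exact this
  · intro l hl
    rw [mem_biUnion] at hl
    obtain ⟨E, -, hl⟩ := hl
    obtain ⟨u, d, rfl⟩ := exists_lst _ _ _ _ _ _ hl
    rw [lst_mem] at hl
    obtain ⟨U, D, g1, g2, g3, g4, g5⟩ := half_to_full hl.2
    obtain ⟨C, h1, h2, hu, hd⟩ := PC_to_cov ha hb hKZ hKK U D g1 g2
    have hC : {c | flipc c ∈ C} = C := by
      refine cov_ext (cov_flip h1) ?_ h1 h2 ?_ ?_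
      · intro c hc
        change flipc (rotc a c) ∈ C
        rw [flipc_rotc]; exact h2 _ hc
      · intro m w hm
        change dn m (-w) ∈ C ↔ _
        rw [← hu m w hm, ← hd m _ hm, g5 m w hm]
      · intro m w hm
        change up m (-w) ∈ C ↔ _
        rw [← hu m _ hm, ← hd m _ hm, g5 m _ hm, neg_neg]
    refine ⟨C, ⟨h1, h2, Refl_of_flip h2 ?_⟩, ?_⟩
    · intro c hc; rw [← hC] at hc; exact hc
    · rw [lst_congr]
      intro m hm
      constructor
      · ext w; rw [mem_filter, mem_uf h1, ← hu m w hm, g3 m w hm, and_comm]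
      · ext w; rw [mem_filter, mem_df h1, ← hd m w hm, g4 m w hm, and_comm]

theorem discrete (ha : 0 < a) (hb : 0 < b) (hKZ : ∀ m, KZ m → 0 < m ∧ m < a ∧ m % 2 = 0) :
    Nat.card {C : Set Code // Cov a b KZ C ∧ Rot a C} =
    Nat.card {C : Set Code // Cov a b KZ C ∧ Rot a C ∧ Refl a C} ^ 2 := by
  classical
  rw [card_full (K := fun m : ℕ => KZ m) ha hb hKZ (fun _ => Iff.rfl),
    card_half (K := fun m : ℕ => KZ m) ha hb hKZ (fun _ => Iff.rfl)]
  exact count_main b a hb _ (fun m hm => by have := hKZ _ hm; omega)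
end
end Fock

end

section
open Finset
namespace Fock
open Code PP

theorem s3_pos : 0 < s3 := by unfold s3; positivity

def xx (p : Pt) : ℝ := 2 * p.1 / s3
def yy (b : ℕ) (p : Pt) : ℝ := 2 * (p.2 - b)
def pt (b : ℕ) (x y : ℝ) : Pt := (x * s3 / 2, b + y / 2)

theorem xx_pt (b : ℕ) (x y : ℝ) : xx (pt b x y) = x := by
  have := s3_pos
  simp only [xx, pt]; field_simp
theorem yy_pt (b : ℕ) (x y : ℝ) : yy b (pt b x y) = y := by
  simp only [yy, pt]; ring
theorem pt_xy (b : ℕ) (p : Pt) : pt b (xx p) (yy b p) = p := by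
  have := s3_pos
  simp only [xx, yy, pt]; ext
  · simp only; field_simp
  · simp only; ring
theorem eq_pt {b : ℕ} {p : Pt} {x y : ℝ} (h1 : p.1 = x * s3 / 2) (h2 : p.2 = b + y / 2) : p = pt b x y :=
  Prod.ext h1 h2

theorem cont_xx : Continuous xx := by unfold xx; fun_prop
theorem cont_yy (b : ℕ) : Continuous (yy b) := by unfold yy; fun_prop

theorem int_lt (b : ℕ) {S : Set Pt} (α β γ : ℝ) (h0 : 0 < α ^ 2 + β ^ 2)
    (hS : ∀ p ∈ S, α * xx p + β * yy b p + γ ≤ 0) {p : Pt} (hp : p ∈ interior S) :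
    α * xx p + β * yy b p + γ < 0 := by
  have hc : Continuous fun ε : ℝ => pt b (xx p + ε * α) (yy b p + ε * β) := by
    unfold pt; fun_prop
  have h1 : ∀ᶠ ε in nhds (0 : ℝ), pt b (xx p + ε * α) (yy b p + ε * β) ∈ S := by
    apply hc.continuousAt
    simp only [zero_mul, add_zero, pt_xy]
    exact mem_interior_iff_mem_nhds.1 hp
  obtain ⟨δ, hδ, h2⟩ := Metric.eventually_nhds_iff.1 h1
  have h3 := hS _ (h2 (y := δ / 2) (by rw [Real.dist_eq, sub_zero, abs_of_pos (by positivity)]; linarith))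
  rw [xx_pt, yy_pt] at h3
  nlinarith [mul_pos (_root_.half_pos hδ) h0]

def tile (b : ℕ) : Code → Set Pt
  | up m w => {p | m ≤ xx p ∧ xx p ≤ m + 1 ∧ yy b p - w - (xx p - m) ≤ 1 ∧ -1 ≤ yy b p - w - (xx p - m)}
  | dn m w => {p | m ≤ xx p ∧ xx p ≤ m + 1 ∧ yy b p - w + (xx p - m) ≤ 1 ∧ -1 ≤ yy b p - w + (xx p - m)}
  | hz m w => {p | yy b p - w - (xx p - m) ≤ 1 ∧ -1 ≤ yy b p - w - (xx p - m) ∧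
      yy b p - w + (xx p - m) ≤ 1 ∧ -1 ≤ yy b p - w + (xx p - m)}

def tileo (b : ℕ) : Code → Set Pt
  | up m w => {p | m < xx p ∧ xx p < m + 1 ∧ yy b p - w - (xx p - m) < 1 ∧ -1 < yy b p - w - (xx p - m)}
  | dn m w => {p | m < xx p ∧ xx p < m + 1 ∧ yy b p - w + (xx p - m) < 1 ∧ -1 < yy b p - w + (xx p - m)}
  | hz m w => {p | yy b p - w - (xx p - m) < 1 ∧ -1 < yy b p - w - (xx p - m) ∧
      yy b p - w + (xx p - m) < 1 ∧ -1 < yy b p - w + (xx p - m)}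

theorem tileo_open (b : ℕ) (c : Code) : IsOpen (tileo b c) := by
  have h1 := cont_xx
  have h2 := cont_yy b
  rcases c with ⟨m, w⟩ | ⟨m, w⟩ | ⟨m, w⟩ <;> simp only [tileo] <;>
  · refine IsOpen.and (isOpen_lt (by fun_prop) (by fun_prop)) <|
      IsOpen.and (isOpen_lt (by fun_prop) (by fun_prop)) <|
      IsOpen.and (isOpen_lt (by fun_prop) (by fun_prop)) (isOpen_lt (by fun_prop) (by fun_prop))

theorem tile_int (b : ℕ) (c : Code) : interior (tile b c) = tileo b c := by
  apply Set.Subset.antisymm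
  · intro p hp
    rcases c with ⟨m, w⟩ | ⟨m, w⟩ | ⟨m, w⟩
    · refine ⟨?_, ?_, ?_, ?_⟩
      · have := int_lt b (-1) 0 m (by norm_num) (fun q hq => by linarith [hq.1]) hp; linarith
      · have := int_lt b (1) 0 (-m - 1) (by norm_num) (fun q hq => by linarith [hq.2.1]) hp; linarith
      · have := int_lt b (-1) 1 (m - w - 1) (by norm_num) (fun q hq => by linarith [hq.2.2.1]) hp; linarith
      · have := int_lt b 1 (-1) (-m + w - 1) (by norm_num) (fun q hq => by linarith [hq.2.2.2]) hp; linarith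
    · refine ⟨?_, ?_, ?_, ?_⟩
      · have := int_lt b (-1) 0 m (by norm_num) (fun q hq => by linarith [hq.1]) hp; linarith
      · have := int_lt b (1) 0 (-m - 1) (by norm_num) (fun q hq => by linarith [hq.2.1]) hp; linarith
      · have := int_lt b 1 1 (-m - w - 1) (by norm_num) (fun q hq => by linarith [hq.2.2.1]) hp; linarith
      · have := int_lt b (-1) (-1) (m + w - 1) (by norm_num) (fun q hq => by linarith [hq.2.2.2]) hp; linarith
    · refine ⟨?_, ?_, ?_, ?_⟩
      · have := int_lt b (-1) 1 (m - w - 1) (by norm_num) (fun q hq => by linarith [hq.1]) hp; linarith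
      · have := int_lt b 1 (-1) (-m + w - 1) (by norm_num) (fun q hq => by linarith [hq.2.1]) hp; linarith
      · have := int_lt b 1 1 (-m - w - 1) (by norm_num) (fun q hq => by linarith [hq.2.2.1]) hp; linarith
      · have := int_lt b (-1) (-1) (m + w - 1) (by norm_num) (fun q hq => by linarith [hq.2.2.2]) hp; linarith
  · apply interior_maximal _ (tileo_open b c)
    rcases c with ⟨m, w⟩ | ⟨m, w⟩ | ⟨m, w⟩ <;>
    · intro p hp
      exact ⟨hp.1.le, hp.2.1.le, hp.2.2.1.le, hp.2.2.2.le⟩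

/-- Parity condition on codes. -/
def good : Code → Prop
  | up m w => (m + w) % 2 = 1
  | dn m w => (m + w) % 2 = 1
  | hz m w => (m + w) % 2 = 1

def para (p u v : Pt) : Set Pt := {q | ∃ s t : ℝ, 0 ≤ s ∧ s ≤ 1 ∧ 0 ≤ t ∧ t ≤ 1 ∧ q = p + s • u + t • v}

theorem hull_para (p u v : Pt) : convexHull ℝ {p, p + u, p + v, p + u + v} = para p u v := by
  apply Set.Subset.antisymm
  · apply convexHull_min
    · rintro q (rfl | rfl | rfl | rfl)
      · exact ⟨0, 0, by norm_num, by norm_num, by norm_num, by norm_num, by simp⟩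
      · exact ⟨1, 0, by norm_num, by norm_num, by norm_num, by norm_num, by simp⟩
      · exact ⟨0, 1, by norm_num, by norm_num, by norm_num, by norm_num, by simp⟩
      · exact ⟨1, 1, by norm_num, by norm_num, by norm_num, by norm_num, by simp⟩
    · rintro _ ⟨s, t, h1, h2, h3, h4, rfl⟩ _ ⟨s', t', h1', h2', h3', h4', rfl⟩ α β hα hβ hab
      refine ⟨α * s + β * s', α * t + β * t', by positivity, ?_, by positivity, ?_, ?_⟩
      · nlinarith
      · nlinarith
      · have : β = 1 - α := by linarith
        subst this
        ext
        · simp only [Prod.fst_add, Prod.smul_fst, smul_eq_mul]; ring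
        · simp only [Prod.snd_add, Prod.smul_snd, smul_eq_mul]; ring
  · rintro _ ⟨s, t, h1, h2, h3, h4, rfl⟩
    have hc := convex_convexHull ℝ {p, p + u, p + v, p + u + v}
    have hs := subset_convexHull ℝ {p, p + u, p + v, p + u + v}
    have e1 := hc (hs (show p ∈ _ by simp)) (hs (show p + u ∈ _ by simp))
      (show 0 ≤ 1 - s by linarith) h1 (by ring)
    have e2 := hc (hs (show p + v ∈ _ by simp)) (hs (show p + u + v ∈ _ by simp))
      (show 0 ≤ 1 - s by linarith) h1 (by ring)
    have e3 := hc e1 e2 (show 0 ≤ 1 - t by linarith) h3 (by ring)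
    convert e3 using 1
    ext
    · simp only [Prod.fst_add, Prod.smul_fst, smul_eq_mul]; ring
    · simp only [Prod.snd_add, Prod.smul_snd, smul_eq_mul]; ring

theorem para_swap (p u v : Pt) : para p u v = para p v u := by
  ext q
  constructor <;>
  · rintro ⟨s, t, h1, h2, h3, h4, rfl⟩
    exact ⟨t, s, h3, h4, h1, h2, by abel⟩

theorem para_neg (p u v : Pt) : para p (-u) v = para (p - u) u v := by
  ext q
  constructor <;>
  · rintro ⟨s, t, h1, h2, h3, h4, rfl⟩
    refine ⟨1 - s, t, by linarith, by linarith, h3, h4, ?_⟩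
    ext
    · simp only [Prod.fst_add, Prod.smul_fst, smul_eq_mul, Prod.fst_neg, Prod.fst_sub]; ring
    · simp only [Prod.snd_add, Prod.smul_snd, smul_eq_mul, Prod.snd_neg, Prod.snd_sub]; ring

def e1 : Pt := (0, 1)
def e2 : Pt := (s3 / 2, 1 / 2)
def e3 : Pt := (s3 / 2, -(1 / 2))

def latp (m n : ℤ) : Pt := ((m : ℝ) * (s3 / 2), (m : ℝ) / 2 + (n : ℝ))

theorem latp_xx (m n : ℤ) : xx (latp m n) = m := by
  have := s3_pos; simp only [xx, latp]; field_simp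
theorem latp_yy (b : ℕ) (m n : ℤ) : yy b (latp m n) = m + 2 * n - 2 * b := by
  simp only [yy, latp]; ring

theorem xx_comb (p u v : Pt) (s t : ℝ) : xx (p + s • u + t • v) = xx p + s * xx u + t * xx v := by
  simp only [xx, Prod.fst_add, Prod.smul_fst, smul_eq_mul]; ring
theorem yy_comb (b : ℕ) (p u v : Pt) (s t : ℝ) : yy b (p + s • u + t • v) = yy b p + s * (2 * u.2) + t * (2 * v.2) := by
  simp only [yy, Prod.snd_add, Prod.smul_snd, smul_eq_mul]; ring
theorem xx_e1 : xx e1 = 0 := by simp [xx, e1]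
theorem xx_e2 : xx e2 = 1 := by have := s3_pos; simp only [xx, e2]; field_simp
theorem xx_e3 : xx e3 = 1 := by have := s3_pos; simp only [xx, e3]; field_simp

theorem ext_xy {b : ℕ} {p q : Pt} (h1 : xx p = xx q) (h2 : yy b p = yy b q) : p = q := by
  rw [← pt_xy b p, ← pt_xy b q, h1, h2]

theorem mem_para12 (b : ℕ) (p q : Pt) : q ∈ para p e1 e2 ↔ 0 ≤ xx q - xx p ∧ xx q - xx p ≤ 1 ∧
    0 ≤ yy b q - yy b p - (xx q - xx p) ∧ yy b q - yy b p - (xx q - xx p) ≤ 2 := by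
  constructor
  · rintro ⟨s, t, h1, h2, h3, h4, rfl⟩
    rw [xx_comb, yy_comb, xx_e1, xx_e2]
    simp only [e1, e2]
    refine ⟨?_, ?_, ?_, ?_⟩ <;> linarith
  · rintro ⟨h1, h2, h3, h4⟩
    refine ⟨(yy b q - yy b p - (xx q - xx p)) / 2, xx q - xx p, by linarith, by linarith, h1, h2, ?_⟩
    apply ext_xy (b := b)
    · rw [xx_comb, xx_e1, xx_e2]; ring
    · rw [yy_comb]; simp only [e1, e2]; ring

theorem mem_para13 (b : ℕ) (p q : Pt) : q ∈ para p e1 e3 ↔ 0 ≤ xx q - xx p ∧ xx q - xx p ≤ 1 ∧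
    0 ≤ yy b q - yy b p + (xx q - xx p) ∧ yy b q - yy b p + (xx q - xx p) ≤ 2 := by
  constructor
  · rintro ⟨s, t, h1, h2, h3, h4, rfl⟩
    rw [xx_comb, yy_comb, xx_e1, xx_e3]
    simp only [e1, e3]
    refine ⟨?_, ?_, ?_, ?_⟩ <;> linarith
  · rintro ⟨h1, h2, h3, h4⟩
    refine ⟨(yy b q - yy b p + (xx q - xx p)) / 2, xx q - xx p, by linarith, by linarith, h1, h2, ?_⟩
    apply ext_xy (b := b)
    · rw [xx_comb, xx_e1, xx_e3]; ring
    · rw [yy_comb]; simp only [e1, e3]; ring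

theorem mem_para23 (b : ℕ) (p q : Pt) : q ∈ para p e2 e3 ↔ 0 ≤ (xx q - xx p) + (yy b q - yy b p) ∧
    (xx q - xx p) + (yy b q - yy b p) ≤ 2 ∧
    0 ≤ (xx q - xx p) - (yy b q - yy b p) ∧ (xx q - xx p) - (yy b q - yy b p) ≤ 2 := by
  constructor
  · rintro ⟨s, t, h1, h2, h3, h4, rfl⟩
    rw [xx_comb, yy_comb, xx_e2, xx_e3]
    simp only [e2, e3]
    refine ⟨?_, ?_, ?_, ?_⟩ <;> linarith
  · rintro ⟨h1, h2, h3, h4⟩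
    refine ⟨((xx q - xx p) + (yy b q - yy b p)) / 2, ((xx q - xx p) - (yy b q - yy b p)) / 2,
      by linarith, by linarith, by linarith, by linarith, ?_⟩
    apply ext_xy (b := b)
    · rw [xx_comb, xx_e2, xx_e3]; ring
    · rw [yy_comb]; simp only [e2, e3]; ring

theorem tile_up (b : ℕ) (m n : ℤ) : para (latp m n) e1 e2 = tile b (up m (m + 2 * n - 2 * b + 1)) := by
  ext q
  rw [mem_para12 b, latp_xx, latp_yy]
  simp only [tile, Set.mem_setOf_eq]
  push_cast
  constructor <;> rintro ⟨h1, h2, h3, h4⟩ <;> refine ⟨?_, ?_, ?_, ?_⟩ <;> linarith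

theorem tile_dn (b : ℕ) (m n : ℤ) : para (latp m n) e1 e3 = tile b (dn m (m + 2 * n - 2 * b + 1)) := by
  ext q
  rw [mem_para13 b, latp_xx, latp_yy]
  simp only [tile, Set.mem_setOf_eq]
  push_cast
  constructor <;> rintro ⟨h1, h2, h3, h4⟩ <;> refine ⟨?_, ?_, ?_, ?_⟩ <;> linarith

theorem tile_hz (b : ℕ) (m n : ℤ) : para (latp m n) e2 e3 = tile b (hz (m + 1) (m + 2 * n - 2 * b)) := by
  ext q
  rw [mem_para23 b, latp_xx, latp_yy]
  simp only [tile, Set.mem_setOf_eq]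
  push_cast
  constructor <;> rintro ⟨h1, h2, h3, h4⟩ <;> refine ⟨?_, ?_, ?_, ?_⟩ <;> linarith

def QQ (b : ℕ) (u v : Pt) : Prop := ∀ p ∈ triLattice, ∃ c, good c ∧ para p u v = tile b c

theorem QQ_swap {b : ℕ} {u v : Pt} (h : QQ b u v) : QQ b v u := by
  intro p hp; rw [para_swap]; exact h p hp

theorem lat_sub {u : Pt} (hu : u = e1 ∨ u = e2 ∨ u = e3) {p : Pt} (hp : p ∈ triLattice) : p - u ∈ triLattice := by
  obtain ⟨m, n, rfl⟩ := hp
  rcases hu with rfl | rfl | rfl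
  · refine ⟨m, n - 1, ?_⟩
    simp only [e1, Prod.mk_sub_mk, Prod.mk.injEq]; push_cast; constructor <;> ring
  · refine ⟨m - 1, n, ?_⟩
    simp only [e2, Prod.mk_sub_mk, Prod.mk.injEq]; push_cast; constructor <;> ring
  · refine ⟨m - 1, n + 1, ?_⟩
    simp only [e3, Prod.mk_sub_mk, Prod.mk.injEq]; push_cast; constructor <;> ring

theorem QQ_neg {b : ℕ} {u v : Pt} (hu : u = e1 ∨ u = e2 ∨ u = e3) (h : QQ b u v) : QQ b (-u) v := by
  intro p hp; rw [para_neg]; exact h _ (lat_sub hu hp)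

theorem QQ_base {b : ℕ} {u v : Pt} (hu : u = e1 ∨ u = e2 ∨ u = e3) (hv : v = e1 ∨ v = e2 ∨ v = e3)
    (h : u ≠ v) : QQ b u v := by
  have h12 : QQ b e1 e2 := by
    rintro p ⟨m, n, rfl⟩
    exact ⟨_, by simp only [good]; omega, tile_up b m n⟩
  have h13 : QQ b e1 e3 := by
    rintro p ⟨m, n, rfl⟩
    exact ⟨_, by simp only [good]; omega, tile_dn b m n⟩
  have h23 : QQ b e2 e3 := by
    rintro p ⟨m, n, rfl⟩
    exact ⟨_, by simp only [good]; omega, tile_hz b m n⟩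
  rcases hu with rfl | rfl | rfl <;> rcases hv with rfl | rfl | rfl
  · exact absurd rfl h
  · exact h12
  · exact h13
  · exact QQ_swap h12
  · exact absurd rfl h
  · exact h23
  · exact QQ_swap h13
  · exact QQ_swap h23
  · exact absurd rfl h

theorem unit_cases {u : Pt} (h : u ∈ unitVecs) : ∃ e : Pt, (e = e1 ∨ e = e2 ∨ e = e3) ∧ (u = e ∨ u = -e) := by
  rcases h with rfl | rfl | rfl | rfl | rfl | rfl
  · exact ⟨e1, by simp, by simp [e1]⟩
  · exact ⟨e1, by simp, by simp [e1]⟩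
  · exact ⟨e2, by simp, by simp [e2]⟩
  · exact ⟨e2, by simp, by simp [e2]⟩
  · exact ⟨e3, by simp, by simp [e3]⟩
  · exact ⟨e3, by simp, by simp [e3]⟩

theorem e_unit : e1 ∈ unitVecs ∧ e2 ∈ unitVecs ∧ e3 ∈ unitVecs := by
  simp [unitVecs, e1, e2, e3]

theorem lozenge_iff (b : ℕ) (L : Set Pt) : IsLozenge L ↔ ∃ c, good c ∧ L = tile b c := by
  constructor
  · rintro ⟨p, u, v, hp, hu, hv, h1, h2, rfl⟩
    rw [hull_para]
    obtain ⟨e, he, hue⟩ := unit_cases hu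
    obtain ⟨f, hf, hvf⟩ := unit_cases hv
    have hne : e ≠ f := by
      rintro rfl
      rcases hue with rfl | rfl <;> rcases hvf with rfl | rfl <;> simp_all
    have hq := QQ_base (b := b) he hf hne
    have hq1 : QQ b u f := by
      rcases hue with rfl | rfl
      · exact hq
      · exact QQ_neg he hq
    have hq2 : QQ b u v := by
      rcases hvf with rfl | rfl
      · exact hq1
      · exact QQ_swap (QQ_neg hf (QQ_swap hq1))
    exact hq2 p hp
  · rintro ⟨c, hc, rfl⟩
    have hs := s3_pos
    obtain ⟨u1, u2, u3⟩ := e_unit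
    rcases c with ⟨m, w⟩ | ⟨m, w⟩ | ⟨m, w⟩
    · simp only [good] at hc
      refine ⟨latp m ((w - 1 - m) / 2 + b), e1, e2, ⟨_, _, rfl⟩, u1, u2, ?_, ?_, ?_⟩
      · intro h; have := congrArg Prod.fst h; simp [e1, e2] at this; linarith
      · intro h; have := congrArg Prod.fst h; simp [e1, e2] at this; linarith
      · rw [hull_para, tile_up b]; congr 2; omega
    · simp only [good] at hc
      refine ⟨latp m ((w - 1 - m) / 2 + b), e1, e3, ⟨_, _, rfl⟩, u1, u3, ?_, ?_, ?_⟩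
      · intro h; have := congrArg Prod.fst h; simp [e1, e3] at this; linarith
      · intro h; have := congrArg Prod.fst h; simp [e1, e3] at this; linarith
      · rw [hull_para, tile_dn b]; congr 2; omega
    · simp only [good] at hc
      refine ⟨latp (m - 1) ((w - (m - 1)) / 2 + b), e2, e3, ⟨_, _, rfl⟩, u2, u3, ?_, ?_, ?_⟩
      · intro h; have := congrArg Prod.snd h; simp [e2, e3] at this; linarith
      · intro h; have := congrArg Prod.fst h; simp [e2, e3] at this; linarith
      · rw [hull_para, tile_hz b]; congr 2
        · omega
        · omega
end Fock

end

section
open Finset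
namespace Fock
open Code PP

theorem pt_seg {b : ℕ} {S : Set Pt} (hS : Convex ℝ S) {x1 y1 x2 y2 : ℝ} (h1 : pt b x1 y1 ∈ S)
    (h2 : pt b x2 y2 ∈ S) (t : ℝ) (h0 : 0 ≤ t) (ht : t ≤ 1) :
    pt b (x1 + t * (x2 - x1)) (y1 + t * (y2 - y1)) ∈ S := by
  have := hS h1 h2 (show 0 ≤ 1 - t by linarith) h0 (by ring)
  convert this using 1
  simp only [pt]
  ext
  · simp only [Prod.fst_add, Prod.smul_fst, smul_eq_mul]; ring
  · simp only [Prod.snd_add, Prod.smul_snd, smul_eq_mul]; ring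

theorem pt_vert {b : ℕ} {S : Set Pt} (hS : Convex ℝ S) {x y1 y2 y : ℝ} (h1 : pt b x y1 ∈ S)
    (h2 : pt b x y2 ∈ S) (h : y1 ≤ y) (h' : y ≤ y2) : pt b x y ∈ S := by
  rcases eq_or_lt_of_le (h.trans h') with e | e
  · have : y = y1 := by linarith
    rw [this]; exact h1
  · have := pt_seg hS h1 h2 ((y - y1) / (y2 - y1)) (div_nonneg (by linarith) (by linarith))
      ((div_le_one (by linarith)).2 (by linarith))
    convert this using 1
    have : y2 - y1 ≠ 0 := by linarith
    congr 1
    · ring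
    · field_simp; ring

theorem half_convex (b : ℕ) (α β γ : ℝ) : Convex ℝ {p : Pt | α * xx p + β * yy b p + γ ≤ 0} := by
  intro p hp q hq s t hs ht hst
  simp only [Set.mem_setOf_eq] at *
  have e1 : xx (s • p + t • q) = s * xx p + t * xx q := by
    simp only [xx, Prod.fst_add, Prod.smul_fst, smul_eq_mul]; ring
  have e2 : yy b (s • p + t • q) = s * yy b p + t * yy b q := by
    have : s = 1 - t := by linarith
    subst this
    simp only [yy, Prod.snd_add, Prod.smul_snd, smul_eq_mul]; ring
  rw [e1, e2]
  have : s = 1 - t := by linarith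
  subst this
  nlinarith [mul_nonneg hs (neg_nonneg.2 hp), mul_nonneg ht (neg_nonneg.2 hq)]

theorem hull_le {b : ℕ} {S : Set Pt} (α β γ : ℝ) (h : ∀ p ∈ S, α * xx p + β * yy b p + γ ≤ 0)
    {p : Pt} (hp : p ∈ convexHull ℝ S) : α * xx p + β * yy b p + γ ≤ 0 :=
  convexHull_min (t := {p : Pt | α * xx p + β * yy b p + γ ≤ 0}) h (half_convex b α β γ) hp

theorem leftHole_eq (b k : ℕ) : leftHole b k = convexHull ℝ {pt b (2 * k) (-2), pt b (2 * k) 2, pt b (2 * k - 2) 0} := by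
  unfold leftHole pt
  congr 1
  congr 1
  · ext <;> simp only <;> ring
  congr 1
  · ext <;> simp only <;> ring
  congr 1
  · ext <;> simp only <;> ring

theorem rightHole_eq (A b k : ℕ) : rightHole A b k =
    convexHull ℝ {pt b (2 * A - 2 * k) (-2), pt b (2 * A - 2 * k) 2, pt b (2 * A - 2 * k + 2) 0} := by
  unfold rightHole pt
  congr 1
  congr 1
  · ext <;> simp only <;> ring
  congr 1
  · ext <;> simp only <;> ring
  congr 1
  · ext <;> simp only <;> ring

theorem hexagon_eq (A b : ℕ) : hexagon A b = convexHull ℝ {pt b 0 (-2*b), pt b 0 (2 * b), pt b A (2 * b + A),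
    pt b (2 * A) (2 * b), pt b (2 * A) (-2 * b), pt b A (-2 * b - A)} := by
  unfold hexagon pt
  congr 1
  congr 1
  · ext <;> simp only <;> ring
  congr 1
  · ext <;> simp only <;> ring
  congr 1
  · ext <;> simp only <;> ring
  congr 1
  · ext <;> simp only <;> ring
  congr 1
  · ext <;> simp only <;> ring
  congr 1
  · ext <;> simp only <;> ring

theorem mem_leftHole (b k : ℕ) (p : Pt) : p ∈ leftHole b k ↔
    xx p ≤ 2 * k ∧ yy b p ≤ xx p - 2 * k + 2 ∧ -yy b p ≤ xx p - 2 * k + 2 := by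
  rw [leftHole_eq]
  constructor
  · intro h
    have a1 := hull_le (b := b) 1 0 (-2 * k) (by rintro q (rfl | rfl | rfl) <;> rw [xx_pt, yy_pt] <;> linarith) h
    have a2 := hull_le (b := b) (-1) 1 (2 * k - 2) (by rintro q (rfl | rfl | rfl) <;> rw [xx_pt, yy_pt] <;> linarith) h
    have a3 := hull_le (b := b) (-1) (-1) (2 * k - 2) (by rintro q (rfl | rfl | rfl) <;> rw [xx_pt, yy_pt] <;> linarith) h
    refine ⟨?_, ?_, ?_⟩ <;> linarith
  · rintro ⟨h1, h2, h3⟩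
    rw [← pt_xy b p]
    set S : Set Pt := {pt b (2 * k) (-2), pt b (2 * k) 2, pt b (2 * k - 2) 0}
    have hc := convex_convexHull ℝ S
    have u1 : pt b (2 * k) (-2) ∈ convexHull ℝ S := subset_convexHull ℝ S (by simp [S])
    have u2 : pt b (2 * k) (2) ∈ convexHull ℝ S := subset_convexHull ℝ S (by simp [S])
    have u3 : pt b (2 * k - 2) 0 ∈ convexHull ℝ S := subset_convexHull ℝ S (by simp [S])
    have v1 := pt_seg hc u3 u1 ((xx p - 2 * k + 2) / 2) (by linarith) (by linarith)
    have v2 := pt_seg hc u3 u2 ((xx p - 2 * k + 2) / 2) (by linarith) (by linarith)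
    rw [show (2 * k - 2 : ℝ) + (xx p - 2 * k + 2) / 2 * (2 * k - (2 * k - 2)) = xx p by ring] at v1 v2
    exact pt_vert hc v1 v2 (by linarith) (by linarith)

theorem mem_rightHole (A b k : ℕ) (p : Pt) : p ∈ rightHole A b k ↔
    2 * A - 2 * k ≤ xx p ∧ yy b p ≤ 2 * A - 2 * k + 2 - xx p ∧ -yy b p ≤ 2 * A - 2 * k + 2 - xx p := by
  rw [rightHole_eq]
  constructor
  · intro h
    have a1 := hull_le (b := b) (-1) 0 (2 * A - 2 * k) (by rintro q (rfl | rfl | rfl) <;> rw [xx_pt, yy_pt] <;> linarith) h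
    have a2 := hull_le (b := b) 1 1 (-2 * A + 2 * k - 2) (by rintro q (rfl | rfl | rfl) <;> rw [xx_pt, yy_pt] <;> linarith) h
    have a3 := hull_le (b := b) 1 (-1) (-2 * A + 2 * k - 2) (by rintro q (rfl | rfl | rfl) <;> rw [xx_pt, yy_pt] <;> linarith) h
    refine ⟨?_, ?_, ?_⟩ <;> linarith
  · rintro ⟨h1, h2, h3⟩
    rw [← pt_xy b p]
    set S : Set Pt := {pt b (2 * A - 2 * k) (-2), pt b (2 * A - 2 * k) 2, pt b (2 * A - 2 * k + 2) 0}
    have hc := convex_convexHull ℝ S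
    have u1 : pt b (2 * A - 2 * k) (-2) ∈ convexHull ℝ S := subset_convexHull ℝ S (by simp [S])
    have u2 : pt b (2 * A - 2 * k) (2) ∈ convexHull ℝ S := subset_convexHull ℝ S (by simp [S])
    have u3 : pt b (2 * A - 2 * k + 2) 0 ∈ convexHull ℝ S := subset_convexHull ℝ S (by simp [S])
    have v1 := pt_seg hc u3 u1 ((2 * A - 2 * k + 2 - xx p) / 2) (by linarith) (by linarith)
    have v2 := pt_seg hc u3 u2 ((2 * A - 2 * k + 2 - xx p) / 2) (by linarith) (by linarith)
    rw [show (2 * A - 2 * k + 2 : ℝ) + (2 * A - 2 * k + 2 - xx p) / 2 * (2 * A - 2 * k - (2 * A - 2 * k + 2)) = xx p by ring] at v1 v2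
    exact pt_vert hc v1 v2 (by linarith) (by linarith)

theorem mem_hexagon (A b : ℕ) (hA : 0 < A) (p : Pt) : p ∈ hexagon A b ↔
    0 ≤ xx p ∧ xx p ≤ 2 * A ∧ yy b p ≤ 2 * b + xx p ∧ -yy b p ≤ 2 * b + xx p ∧
    yy b p ≤ 2 * b + 2 * A - xx p ∧ -yy b p ≤ 2 * b + 2 * A - xx p := by
  rw [hexagon_eq]
  have hA' : (0 : ℝ) < A := by exact_mod_cast hA
  constructor
  · intro h
    have a1 := hull_le (b := b) (-1) 0 0 (by rintro q (rfl | rfl | rfl | rfl | rfl | rfl) <;> rw [xx_pt, yy_pt] <;> linarith) h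
    have a2 := hull_le (b := b) 1 0 (-2 * A) (by rintro q (rfl | rfl | rfl | rfl | rfl | rfl) <;> rw [xx_pt, yy_pt] <;> linarith) h
    have a3 := hull_le (b := b) (-1) 1 (-2 * b) (by rintro q (rfl | rfl | rfl | rfl | rfl | rfl) <;> rw [xx_pt, yy_pt] <;> linarith) h
    have a4 := hull_le (b := b) (-1) (-1) (-2 * b) (by rintro q (rfl | rfl | rfl | rfl | rfl | rfl) <;> rw [xx_pt, yy_pt] <;> linarith) h
    have a5 := hull_le (b := b) 1 1 (-2 * b - 2 * A) (by rintro q (rfl | rfl | rfl | rfl | rfl | rfl) <;> rw [xx_pt, yy_pt] <;> linarith) h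
    have a6 := hull_le (b := b) 1 (-1) (-2 * b - 2 * A) (by rintro q (rfl | rfl | rfl | rfl | rfl | rfl) <;> rw [xx_pt, yy_pt] <;> linarith) h
    refine ⟨?_, ?_, ?_, ?_, ?_, ?_⟩ <;> linarith
  · rintro ⟨h1, h2, h3, h4, h5, h6⟩
    rw [← pt_xy b p]
    set S : Set Pt := {pt b 0 (-2*b), pt b 0 (2 * b), pt b A (2 * b + A),
      pt b (2 * A) (2 * b), pt b (2 * A) (-2 * b), pt b A (-2 * b - A)}
    have hc := convex_convexHull ℝ S
    have hs := subset_convexHull ℝ S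
    have u1 : pt b 0 (-2*b) ∈ convexHull ℝ S := hs (by simp [S])
    have u2 : pt b 0 (2*b) ∈ convexHull ℝ S := hs (by simp [S])
    have u3 : pt b A (2*b + A) ∈ convexHull ℝ S := hs (by simp [S])
    have u4 : pt b (2 * A) (2*b) ∈ convexHull ℝ S := hs (by simp [S])
    have u5 : pt b (2 * A) (-2*b) ∈ convexHull ℝ S := hs (by simp [S])
    have u6 : pt b A (-2*b - A) ∈ convexHull ℝ S := hs (by simp [S])
    have hne : (A : ℝ) ≠ 0 := by linarith
    rcases le_total (xx p) A with hx | hx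
    · have v1 := pt_seg hc u1 u6 (xx p / A) (by positivity) ((div_le_one hA').2 hx)
      have v2 := pt_seg hc u2 u3 (xx p / A) (by positivity) ((div_le_one hA').2 hx)
      rw [show 0 + xx p / A * (A - 0) = xx p by field_simp; ring] at v1 v2
      rw [show -2 * (b : ℝ) + xx p / A * (-2 * b - A - -2 * b) = -2 * b - xx p by field_simp; ring] at v1
      rw [show 2 * (b : ℝ) + xx p / A * (2 * b + A - 2 * b) = 2 * b + xx p by field_simp; ring] at v2
      exact pt_vert hc v1 v2 (by linarith) (by linarith)
    · have v1 := pt_seg hc u5 u6 ((2 * A - xx p) / A) (div_nonneg (by linarith) hA'.le) ((div_le_one hA').2 (by linarith))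
      have v2 := pt_seg hc u4 u3 ((2 * A - xx p) / A) (div_nonneg (by linarith) hA'.le) ((div_le_one hA').2 (by linarith))
      rw [show 2 * A + (2 * A - xx p) / A * (A - 2 * A) = xx p by field_simp; ring] at v1 v2
      rw [show -2 * (b : ℝ) + (2 * A - xx p) / A * (-2 * b - A - -2 * b) = -2 * b - 2 * A + xx p by field_simp; ring] at v1
      rw [show 2 * (b : ℝ) + (2 * A - xx p) / A * (2 * b + A - 2 * b) = 2 * b + 2 * A - xx p by field_simp; ring] at v2
      exact pt_vert hc v1 v2 (by linarith) (by linarith)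

theorem mem_int_left (b k : ℕ) (p : Pt) : p ∈ interior (leftHole b k) ↔
    xx p < 2 * k ∧ yy b p < xx p - 2 * k + 2 ∧ -yy b p < xx p - 2 * k + 2 := by
  constructor
  · intro h
    have a1 := int_lt b 1 0 (-2 * k) (by norm_num) (fun q hq => by rw [mem_leftHole] at hq; linarith) h
    have a2 := int_lt b (-1) 1 (2 * k - 2) (by norm_num) (fun q hq => by rw [mem_leftHole] at hq; linarith) h
    have a3 := int_lt b (-1) (-1) (2 * k - 2) (by norm_num) (fun q hq => by rw [mem_leftHole] at hq; linarith) h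
    refine ⟨?_, ?_, ?_⟩ <;> linarith
  · intro h
    have h1 := cont_xx
    have h2 := cont_yy b
    have ho : IsOpen {p : Pt | xx p < 2 * k ∧ yy b p < xx p - 2 * k + 2 ∧ -yy b p < xx p - 2 * k + 2} :=
      IsOpen.and (isOpen_lt (by fun_prop) (by fun_prop)) <|
      IsOpen.and (isOpen_lt (by fun_prop) (by fun_prop)) (isOpen_lt (by fun_prop) (by fun_prop))
    refine interior_maximal (fun q hq => ?_) ho h
    rw [mem_leftHole]
    exact ⟨hq.1.le, hq.2.1.le, hq.2.2.le⟩

theorem mem_int_right (A b k : ℕ) (p : Pt) : p ∈ interior (rightHole A b k) ↔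
    2 * A - 2 * k < xx p ∧ yy b p < 2 * A - 2 * k + 2 - xx p ∧ -yy b p < 2 * A - 2 * k + 2 - xx p := by
  constructor
  · intro h
    have a1 := int_lt b (-1) 0 (2 * A - 2 * k) (by norm_num) (fun q hq => by rw [mem_rightHole] at hq; linarith) h
    have a2 := int_lt b 1 1 (-2 * A + 2 * k - 2) (by norm_num) (fun q hq => by rw [mem_rightHole] at hq; linarith) h
    have a3 := int_lt b 1 (-1) (-2 * A + 2 * k - 2) (by norm_num) (fun q hq => by rw [mem_rightHole] at hq; linarith) h
    refine ⟨?_, ?_, ?_⟩ <;> linarith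
  · intro h
    have h1 := cont_xx
    have h2 := cont_yy b
    have ho : IsOpen {p : Pt | 2 * A - 2 * k < xx p ∧ yy b p < 2 * A - 2 * k + 2 - xx p ∧ -yy b p < 2 * A - 2 * k + 2 - xx p} :=
      IsOpen.and (isOpen_lt (by fun_prop) (by fun_prop)) <|
      IsOpen.and (isOpen_lt (by fun_prop) (by fun_prop)) (isOpen_lt (by fun_prop) (by fun_prop))
    refine interior_maximal (fun q hq => ?_) ho h
    rw [mem_rightHole]
    exact ⟨hq.1.le, hq.2.1.le, hq.2.2.le⟩

/-- The region in the integer-friendly coordinates. -/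
def inH (a b : ℕ) (KZ : ℤ → Prop) (x y : ℝ) : Prop :=
  0 ≤ x ∧ x ≤ 2 * a ∧ y ≤ 2 * b + x ∧ -y ≤ 2 * b + x ∧ y ≤ 2 * b + 2 * a - x ∧ -y ≤ 2 * b + 2 * a - x ∧
  (∀ z : ℤ, KZ z → ¬ (x < z ∧ y < x - z + 2 ∧ -y < x - z + 2)) ∧
  (∀ z : ℤ, KZ z → ¬ (2 * a - z < x ∧ y < 2 * a - z + 2 - x ∧ -y < 2 * a - z + 2 - x))

theorem mem_Hreg (a b s : ℕ) (ha : 0 < a) (k : Fin s → ℕ) (p : Pt) :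
    p ∈ Hreg a b s k ↔ inH a b (fun z => ∃ i, z = 2 * (k i : ℤ)) (xx p) (yy b p) := by
  unfold Hreg inH
  rw [Set.mem_diff, mem_hexagon a b ha, Set.mem_iUnion]
  simp only [Set.mem_union, mem_int_left, mem_int_right, not_exists, not_or]
  constructor
  · rintro ⟨⟨h1, h2, h3, h4, h5, h6⟩, h7⟩
    refine ⟨h1, h2, h3, h4, h5, h6, ?_, ?_⟩
    · rintro z ⟨i, rfl⟩; push_cast; exact (h7 i).1
    · rintro z ⟨i, rfl⟩; push_cast; exact (h7 i).2
  · rintro ⟨h1, h2, h3, h4, h5, h6, h7, h8⟩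
    refine ⟨⟨h1, h2, h3, h4, h5, h6⟩, fun i => ⟨?_, ?_⟩⟩
    · have := h7 _ ⟨i, rfl⟩; push_cast at this; exact this
    · have := h8 _ ⟨i, rfl⟩; push_cast at this; exact this

theorem inH_rot' {a b : ℕ} {KZ : ℤ → Prop} {x y : ℝ} (h : inH a b KZ x y) : inH a b KZ (2 * a - x) (-y) := by
  obtain ⟨h1, h2, h3, h4, h5, h6, h7, h8⟩ := h
  refine ⟨by linarith, by linarith, by linarith, by linarith, by linarith, by linarith, ?_, ?_⟩
  · rintro z hz ⟨q1, q2, q3⟩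
    exact h8 z hz ⟨by linarith, by linarith, by linarith⟩
  · rintro z hz ⟨q1, q2, q3⟩
    exact h7 z hz ⟨by linarith, by linarith, by linarith⟩

theorem inH_flip {a b : ℕ} {KZ : ℤ → Prop} {x y : ℝ} (h : inH a b KZ x y) : inH a b KZ x (-y) := by
  obtain ⟨h1, h2, h3, h4, h5, h6, h7, h8⟩ := h
  refine ⟨by linarith, by linarith, by linarith, by linarith, by linarith, by linarith, ?_, ?_⟩
  · rintro z hz ⟨q1, q2, q3⟩
    exact h7 z hz ⟨by linarith, by linarith, by linarith⟩
  · rintro z hz ⟨q1, q2, q3⟩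
    exact h8 z hz ⟨by linarith, by linarith, by linarith⟩
end Fock

end

section
open Finset
namespace Fock
open Code PP

def triR (m w : ℤ) (x y : ℝ) : Prop := m ≤ x ∧ y - w + (x - m) ≤ 1 ∧ -(y - w) + (x - m) ≤ 1
def triL (m w : ℤ) (x y : ℝ) : Prop := x ≤ m ∧ y - w + (m - x) ≤ 1 ∧ -(y - w) + (m - x) ≤ 1

theorem triL_rot (a : ℕ) (m w : ℤ) (x y : ℝ) : triR (2 * a - m) (-w) (2 * a - x) (-y) ↔ triL m w x y := by
  unfold triR triL; push_cast
  constructor <;> rintro ⟨h1, h2, h3⟩ <;> refine ⟨?_, ?_, ?_⟩ <;> linarith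

theorem triR_rot (a : ℕ) (m w : ℤ) (x y : ℝ) : triL (2 * a - m) (-w) (2 * a - x) (-y) ↔ triR m w x y := by
  unfold triR triL; push_cast
  constructor <;> rintro ⟨h1, h2, h3⟩ <;> refine ⟨?_, ?_, ?_⟩ <;> linarith

theorem triR_flip (m w : ℤ) (x y : ℝ) : triR m (-w) x (-y) ↔ triR m w x y := by
  unfold triR; push_cast
  constructor <;> rintro ⟨h1, h2, h3⟩ <;> refine ⟨?_, ?_, ?_⟩ <;> linarith

theorem triL_flip (m w : ℤ) (x y : ℝ) : triL m (-w) x (-y) ↔ triL m w x y := by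
  unfold triL; push_cast
  constructor <;> rintro ⟨h1, h2, h3⟩ <;> refine ⟨?_, ?_, ?_⟩ <;> linarith

section
variable {a b : ℕ} {KZ : ℤ → Prop}

theorem RR_of_inH {m w : ℤ} (hp : (m + w) % 2 = 1) (h : inH a b KZ (m + 1 / 3) w) : RR a b KZ m w := by
  obtain ⟨h1, h2, h3, h4, h5, h6, h7, h8⟩ := h
  have i1 : 0 ≤ 3 * m + 1 := by
    have : (0 : ℝ) ≤ 3 * m + 1 := by linarith
    exact_mod_cast this
  have i2 : 3 * m + 1 ≤ 6 * a := by
    have : 3 * (m : ℝ) + 1 ≤ 6 * a := by linarith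
    exact_mod_cast this
  have i3 : 3 * w ≤ 6 * b + 3 * m + 1 := by
    have : 3 * (w : ℝ) ≤ 6 * b + 3 * m + 1 := by linarith
    exact_mod_cast this
  have i4 : -3 * w ≤ 6 * b + 3 * m + 1 := by
    have : -3 * (w : ℝ) ≤ 6 * b + 3 * m + 1 := by linarith
    exact_mod_cast this
  have i5 : 3 * w ≤ 6 * b + 6 * a - 3 * m - 1 := by
    have : 3 * (w : ℝ) ≤ 6 * b + 6 * a - 3 * m - 1 := by linarith
    exact_mod_cast this
  have i6 : -3 * w ≤ 6 * b + 6 * a - 3 * m - 1 := by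
    have : -3 * (w : ℝ) ≤ 6 * b + 6 * a - 3 * m - 1 := by linarith
    exact_mod_cast this
  refine ⟨hp, by omega, by omega, by omega, by omega, by omega, by omega, ?_, ?_, ?_⟩
  · rintro ⟨rfl, hz⟩
    apply h7 _ hz
    push_cast
    refine ⟨?_, ?_, ?_⟩ <;> linarith
  · rintro ⟨rfl | rfl, hz⟩
    · apply h8 _ hz
      push_cast
      refine ⟨?_, ?_, ?_⟩ <;> linarith
    · apply h8 _ hz
      push_cast
      refine ⟨?_, ?_, ?_⟩ <;> linarith
  · rintro ⟨rfl, hz⟩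
    apply h8 _ hz
    push_cast
    refine ⟨?_, ?_, ?_⟩ <;> linarith

theorem LL_of_inH {m w : ℤ} (hp : (m + w) % 2 = 1) (h : inH a b KZ (m - 1 / 3) w) : LL a b KZ m w := by
  rw [← RR_rot]
  apply RR_of_inH (by omega)
  have := inH_rot' h
  convert this using 1
  · push_cast; ring
  · push_cast; ring

theorem inH_of_RR (hK : ∀ z, KZ z → z % 2 = 0) {m w : ℤ} (h : RR a b KZ m w) {x y : ℝ} (ht : triR m w x y) :
    inH a b KZ x y := by
  obtain ⟨hp, h1, h2, h3, h4, h5, h6, h7, h8, h9⟩ := h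
  obtain ⟨t1, t2, t3⟩ := ht
  have h1 : (0 : ℝ) ≤ m := by exact_mod_cast h1
  have h2 : (m : ℝ) + 1 ≤ 2 * a := by exact_mod_cast h2
  have h3 : (w : ℝ) ≤ 2 * b - 1 + m := by exact_mod_cast h3
  have h4 : -(w : ℝ) ≤ 2 * b - 1 + m := by exact_mod_cast h4
  have h5 : (w : ℝ) ≤ 2 * b - 1 + (2 * a - m) := by exact_mod_cast h5
  have h6 : -(w : ℝ) ≤ 2 * b - 1 + (2 * a - m) := by exact_mod_cast h6
  refine ⟨by linarith, by linarith, by linarith, by linarith, by linarith, by linarith, ?_, ?_⟩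
  · rintro z hz ⟨q1, q2, q3⟩
    have hz2 := hK z hz
    have j1 : m < z := by
      have : (m : ℝ) < z := by linarith
      exact_mod_cast this
    have j2 : z < m + 3 := by
      have : (z : ℝ) < m + 3 := by linarith
      exact_mod_cast this
    have j3 : w < m - z + 3 := by
      have : (w : ℝ) < m - z + 3 := by linarith
      exact_mod_cast this
    have j4 : -w < m - z + 3 := by
      have : -(w : ℝ) < m - z + 3 := by linarith
      exact_mod_cast this
    have e1 : z = m + 1 := by omega
    exact h7 ⟨by omega, e1 ▸ hz⟩
  · rintro z hz ⟨q1, q2, q3⟩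
    have hz2 := hK z hz
    have j1 : m < 2 * a - z + 2 := by
      have : (m : ℝ) < 2 * a - z + 2 := by linarith
      exact_mod_cast this
    have j2 : 2 * a - z < m + 1 := by
      have : 2 * (a : ℝ) - z < m + 1 := by linarith
      exact_mod_cast this
    have j3 : w < 3 := by
      have : (w : ℝ) < 3 := by linarith
      exact_mod_cast this
    have j4 : -w < 3 := by
      have : -(w : ℝ) < 3 := by linarith
      exact_mod_cast this
    have j5 : w < 2 * a - z + 2 + m + 1 - 2 * m := by
      have : (w : ℝ) < 2 * a - z + 2 + m + 1 - 2 * m := by linarith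
      exact_mod_cast this
    have j6 : -w < 2 * a - z + 2 + m + 1 - 2 * m := by
      have : -(w : ℝ) < 2 * a - z + 2 + m + 1 - 2 * m := by linarith
      exact_mod_cast this
    rcases (by omega : z = 2 * a - m ∨ z = 2 * a - m + 1) with e | e
    · exact h8 ⟨by omega, e ▸ hz⟩
    · exact h9 ⟨by omega, e ▸ hz⟩

theorem inH_of_LL (hK : ∀ z, KZ z → z % 2 = 0) {m w : ℤ} (h : LL a b KZ m w) {x y : ℝ} (ht : triL m w x y) :
    inH a b KZ x y := by
  rw [← RR_rot] at h
  rw [← triL_rot a] at ht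
  have := inH_rot' (inH_of_RR hK h ht)
  simpa using this

theorem cover_left (ha : 0 < a) (hb : 0 < b) (hKZ : ∀ m, KZ m → 0 < m ∧ m < a ∧ m % 2 = 0)
    {x y : ℝ} (h : inH a b KZ x y) (hx : x ≤ a) (hy : 0 ≤ y) :
    ∃ m w, (RR a b KZ m w ∧ triR m w x y) ∨ (LL a b KZ m w ∧ triL m w x y) := by
  obtain ⟨h1, h2, h3, h4, h5, h6, h7, h8⟩ := h
  obtain ⟨m, hm⟩ : ∃ m, m = ⌊x⌋ := ⟨_, rfl⟩
  have m1 : (m : ℝ) ≤ x := hm ▸ Int.floor_le x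
  have m2 : x < m + 1 := hm ▸ Int.lt_floor_add_one x
  obtain ⟨w, hwp, w1, w2⟩ : ∃ w : ℤ, (m + w) % 2 = 1 ∧ (w : ℝ) ≤ y + 1 - (x - m) ∧ y + 1 - (x - m) < w + 2 := by
    refine ⟨2 * ⌊(y + 1 - (x - m) - (m + 1)) / 2⌋ + m + 1, by omega, ?_, ?_⟩
    · have := Int.floor_le ((y + 1 - (x - m) - (m + 1)) / 2)
      push_cast; linarith
    · have := Int.lt_floor_add_one ((y + 1 - (x - m) - (m + 1)) / 2)
      push_cast; linarith
  have j1 : 0 ≤ m := by rw [hm]; exact Int.floor_nonneg.2 h1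
  have j2 : m ≤ a := by
    have : (m : ℝ) ≤ a := by linarith
    exact_mod_cast this
  have j3 : -2 < w := by
    have : (-2 : ℝ) < w := by linarith
    exact_mod_cast this
  have j4 : w ≤ 2 * b + m + 1 := by
    have : (w : ℝ) ≤ 2 * b + m + 1 := by linarith
    exact_mod_cast this
  by_cases hc : y ≤ w + 1 - (x - m)
  · by_cases hw : w = 2 * b + m + 1
    · have hw' : (w : ℝ) = 2 * b + m + 1 := by exact_mod_cast hw
      have hyy : y = 2 * b + x := by linarith
      by_cases hma : m < a
      · refine ⟨m + 1, 2 * b + m, Or.inr ⟨?_, ?_⟩⟩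
        · rw [LL_left ha hKZ (by omega), RR_left ha hKZ (by omega)]
          refine ⟨⟨by omega, by omega, by omega, by omega, ?_⟩, by omega, ?_⟩
          · rintro ⟨h, -⟩; omega
          · rintro ⟨h | h, -⟩ <;> omega
        · refine ⟨?_, ?_, ?_⟩ <;> push_cast <;> linarith
      · have hme : m = a := by omega
        have hme' : (m : ℝ) = a := by exact_mod_cast hme
        refine ⟨m, 2 * b + m - 1, Or.inl ⟨?_, ?_⟩⟩
        · rw [RR_left ha hKZ (by omega)]
          refine ⟨by omega, by omega, by omega, by omega, ?_⟩
          rintro ⟨h, -⟩; omega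
        · refine ⟨?_, ?_, ?_⟩ <;> push_cast <;> linarith
    · refine ⟨m, w, Or.inl ⟨?_, ?_⟩⟩
      · rw [RR_left ha hKZ (by omega)]
        refine ⟨by omega, by omega, by omega, by omega, ?_⟩
        rintro ⟨rfl, hz⟩
        apply h7 _ hz
        push_cast at *
        refine ⟨?_, ?_, ?_⟩ <;> linarith
      · refine ⟨?_, ?_, ?_⟩ <;> linarith
  · push Not at hc
    have j5 : m < a := by
      have : (m : ℝ) < a := by linarith
      exact_mod_cast this
    have j6 : w < 2 * b + m + 1 := by
      have : (w : ℝ) < 2 * b + m + 1 := by linarith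
      exact_mod_cast this
    have j7 : -1 ≤ w := by omega
    refine ⟨m + 1, w + 1, Or.inr ⟨?_, ?_⟩⟩
    · rw [LL_left ha hKZ (by omega), RR_left ha hKZ (by omega)]
      refine ⟨⟨by omega, by omega, by omega, by omega, ?_⟩, by omega, ?_⟩
      · rintro ⟨e, hz⟩
        have e' : (w : ℝ) + 1 = 0 := by exact_mod_cast e
        apply h7 _ hz
        push_cast
        refine ⟨?_, ?_, ?_⟩ <;> linarith
      · rintro ⟨e | e, hz⟩
        · have e' : (w : ℝ) + 1 = 1 := by exact_mod_cast e
          apply h7 _ hz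
          push_cast
          refine ⟨?_, ?_, ?_⟩ <;> linarith
        · omega
    · refine ⟨?_, ?_, ?_⟩ <;> push_cast <;> linarith

theorem cover_left' (ha : 0 < a) (hb : 0 < b) (hKZ : ∀ m, KZ m → 0 < m ∧ m < a ∧ m % 2 = 0)
    {x y : ℝ} (h : inH a b KZ x y) (hx : x ≤ a) :
    ∃ m w, (RR a b KZ m w ∧ triR m w x y) ∨ (LL a b KZ m w ∧ triL m w x y) := by
  rcases le_total 0 y with hy | hy
  · exact cover_left ha hb hKZ h hx hy
  · obtain ⟨m, w, h⟩ := cover_left ha hb hKZ (inH_flip h) hx (by linarith)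
    refine ⟨m, -w, ?_⟩
    rw [RR_flip, LL_flip, ← triR_flip, ← triL_flip, neg_neg]
    exact h

theorem cover (ha : 0 < a) (hb : 0 < b) (hKZ : ∀ m, KZ m → 0 < m ∧ m < a ∧ m % 2 = 0)
    {x y : ℝ} (h : inH a b KZ x y) :
    ∃ m w, (RR a b KZ m w ∧ triR m w x y) ∨ (LL a b KZ m w ∧ triL m w x y) := by
  rcases le_total x a with hy | hy
  · exact cover_left' ha hb hKZ h hy
  · obtain ⟨m, w, h⟩ := cover_left' ha hb hKZ (inH_rot' h) (by linarith)
    refine ⟨2 * a - m, -w, ?_⟩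
    have e1 := triL_rot a m w (2 * a - x) (-y)
    have e2 := triR_rot a m w (2 * a - x) (-y)
    rw [neg_neg, sub_sub_cancel] at e1 e2
    rw [RR_rot, LL_rot, e1, e2]
    exact h.symm

end

/-- Barycenters. -/
def trR : Code → ℤ × ℤ
  | up m w => (m, w)
  | dn m w => (m, w)
  | hz m w => (m, w)
def trL : Code → ℤ × ℤ
  | up m w => (m + 1, w + 1)
  | dn m w => (m + 1, w - 1)
  | hz m w => (m, w)
def bR (b : ℕ) (q : ℤ × ℤ) : Pt := pt b (q.1 + 1 / 3) q.2
def bL (b : ℕ) (q : ℤ × ℤ) : Pt := pt b (q.1 - 1 / 3) q.2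

theorem bR_mem (b : ℕ) (c : Code) : bR b (trR c) ∈ tileo b c := by
  rcases c with ⟨m, w⟩ | ⟨m, w⟩ | ⟨m, w⟩ <;> simp only [trR, bR, tileo, Set.mem_setOf_eq, xx_pt, yy_pt] <;>
    refine ⟨?_, ?_, ?_, ?_⟩ <;> linarith
theorem bL_mem (b : ℕ) (c : Code) : bL b (trL c) ∈ tileo b c := by
  rcases c with ⟨m, w⟩ | ⟨m, w⟩ | ⟨m, w⟩ <;> simp only [trL, bL, tileo, Set.mem_setOf_eq, xx_pt, yy_pt] <;>
    push_cast <;> refine ⟨?_, ?_, ?_, ?_⟩ <;> linarith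

theorem tileo_sub (b : ℕ) (c : Code) : tileo b c ⊆ tile b c := by
  rw [← tile_int]; exact interior_subset

theorem good_R {c : Code} : good c ↔ ((trR c).1 + (trR c).2) % 2 = 1 := by
  cases c <;> rfl
theorem good_L {c : Code} : good c ↔ ((trL c).1 + (trL c).2) % 2 = 1 := by
  cases c <;> simp only [good, trL] <;> omega

theorem cs {x y : ℤ} (h : (x : ℝ) ≤ y) : x ≤ y := by exact_mod_cast h

theorem bR_inv {b : ℕ} {c : Code} (hc : good c) {m w : ℤ} (hp : (m + w) % 2 = 1) (h : bR b (m, w) ∈ tile b c) :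
    trR c = (m, w) := by
  rcases c with ⟨n, v⟩ | ⟨n, v⟩ | ⟨n, v⟩ <;> simp only [bR, tile, Set.mem_setOf_eq, xx_pt, yy_pt] at h <;>
    obtain ⟨h1, h2, h3, h4⟩ := h <;> simp only [good] at hc <;> simp only [trR, Prod.mk.injEq]
  · have i1 : 3 * n ≤ 3 * m + 1 := cs (by push_cast; linarith)
    have i2 : 3 * m + 1 ≤ 3 * n + 3 := cs (by push_cast; linarith)
    have i3 : 3 * w - 3 * v - (3 * m + 1 - 3 * n) ≤ 3 := cs (by push_cast; linarith)
    have i4 : -3 ≤ 3 * w - 3 * v - (3 * m + 1 - 3 * n) := cs (by push_cast; linarith)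
    omega
  · have i1 : 3 * n ≤ 3 * m + 1 := cs (by push_cast; linarith)
    have i2 : 3 * m + 1 ≤ 3 * n + 3 := cs (by push_cast; linarith)
    have i3 : 3 * w - 3 * v + (3 * m + 1 - 3 * n) ≤ 3 := cs (by push_cast; linarith)
    have i4 : -3 ≤ 3 * w - 3 * v + (3 * m + 1 - 3 * n) := cs (by push_cast; linarith)
    omega
  · have i1 : 3 * w - 3 * v - (3 * m + 1 - 3 * n) ≤ 3 := cs (by push_cast; linarith)
    have i2 : -3 ≤ 3 * w - 3 * v - (3 * m + 1 - 3 * n) := cs (by push_cast; linarith)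
    have i3 : 3 * w - 3 * v + (3 * m + 1 - 3 * n) ≤ 3 := cs (by push_cast; linarith)
    have i4 : -3 ≤ 3 * w - 3 * v + (3 * m + 1 - 3 * n) := cs (by push_cast; linarith)
    omega

theorem bL_inv {b : ℕ} {c : Code} (hc : good c) {m w : ℤ} (hp : (m + w) % 2 = 1) (h : bL b (m, w) ∈ tile b c) :
    trL c = (m, w) := by
  rcases c with ⟨n, v⟩ | ⟨n, v⟩ | ⟨n, v⟩ <;> simp only [bL, tile, Set.mem_setOf_eq, xx_pt, yy_pt] at h <;>
    obtain ⟨h1, h2, h3, h4⟩ := h <;> simp only [good] at hc <;> simp only [trL, Prod.mk.injEq]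
  · have i1 : 3 * n ≤ 3 * m - 1 := cs (by push_cast; linarith)
    have i2 : 3 * m - 1 ≤ 3 * n + 3 := cs (by push_cast; linarith)
    have i3 : 3 * w - 3 * v - (3 * m - 1 - 3 * n) ≤ 3 := cs (by push_cast; linarith)
    have i4 : -3 ≤ 3 * w - 3 * v - (3 * m - 1 - 3 * n) := cs (by push_cast; linarith)
    omega
  · have i1 : 3 * n ≤ 3 * m - 1 := cs (by push_cast; linarith)
    have i2 : 3 * m - 1 ≤ 3 * n + 3 := cs (by push_cast; linarith)
    have i3 : 3 * w - 3 * v + (3 * m - 1 - 3 * n) ≤ 3 := cs (by push_cast; linarith)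
    have i4 : -3 ≤ 3 * w - 3 * v + (3 * m - 1 - 3 * n) := cs (by push_cast; linarith)
    omega
  · have i1 : 3 * w - 3 * v - (3 * m - 1 - 3 * n) ≤ 3 := cs (by push_cast; linarith)
    have i2 : -3 ≤ 3 * w - 3 * v - (3 * m - 1 - 3 * n) := cs (by push_cast; linarith)
    have i3 : 3 * w - 3 * v + (3 * m - 1 - 3 * n) ≤ 3 := cs (by push_cast; linarith)
    have i4 : -3 ≤ 3 * w - 3 * v + (3 * m - 1 - 3 * n) := cs (by push_cast; linarith)
    omega

theorem tr_inj {c d : Code} (h : trR c = trR d) (h' : trL c = trL d) : c = d := by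
  rcases c with ⟨n, v⟩ | ⟨n, v⟩ | ⟨n, v⟩ <;> rcases d with ⟨m, w⟩ | ⟨m, w⟩ | ⟨m, w⟩ <;>
    simp only [trR, trL, Prod.mk.injEq] at h h' <;> first
      | (obtain ⟨rfl, rfl⟩ := h; rfl)
      | (exfalso; omega)

theorem tile_inj {b : ℕ} {c d : Code} (hc : good c) (hd : good d) (h : tile b c = tile b d) : c = d := by
  apply tr_inj
  · have := bR_mem b d
    exact bR_inv hc (good_R.1 hd) (h ▸ tileo_sub b d this)
  · have := bL_mem b d
    exact bL_inv hc (good_L.1 hd) (h ▸ tileo_sub b d this)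

theorem tile_split (b : ℕ) (c : Code) (p : Pt) : p ∈ tile b c ↔
    triR (trR c).1 (trR c).2 (xx p) (yy b p) ∨ triL (trL c).1 (trL c).2 (xx p) (yy b p) := by
  rcases c with ⟨m, w⟩ | ⟨m, w⟩ | ⟨m, w⟩ <;> simp only [tile, trR, trL, triR, triL, Set.mem_setOf_eq] <;> push_cast
  · constructor
    · rintro ⟨h1, h2, h3, h4⟩
      rcases le_total (yy b p - w + (xx p - m)) 1 with h | h
      · left; refine ⟨?_, ?_, ?_⟩ <;> linarith
      · right; refine ⟨?_, ?_, ?_⟩ <;> linarith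
    · rintro (⟨h1, h2, h3⟩ | ⟨h1, h2, h3⟩) <;> refine ⟨?_, ?_, ?_, ?_⟩ <;> linarith
  · constructor
    · rintro ⟨h1, h2, h3, h4⟩
      rcases le_total (-(yy b p - w) + (xx p - m)) 1 with h | h
      · left; refine ⟨?_, ?_, ?_⟩ <;> linarith
      · right; refine ⟨?_, ?_, ?_⟩ <;> linarith
    · rintro (⟨h1, h2, h3⟩ | ⟨h1, h2, h3⟩) <;> refine ⟨?_, ?_, ?_, ?_⟩ <;> linarith
  · constructor
    · rintro ⟨h1, h2, h3, h4⟩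
      rcases le_total (m : ℝ) (xx p) with h | h
      · left; refine ⟨?_, ?_, ?_⟩ <;> linarith
      · right; refine ⟨?_, ?_, ?_⟩ <;> linarith
    · rintro (⟨h1, h2, h3⟩ | ⟨h1, h2, h3⟩) <;> refine ⟨?_, ?_, ?_, ?_⟩ <;> linarith

theorem cl {x y : ℤ} (h : (x : ℝ) < y) : x < y := by exact_mod_cast h

theorem overlap {b : ℕ} {c d : Code} (hc : good c) (hd : good d) {p : Pt} (h : p ∈ tileo b c) (h' : p ∈ tileo b d) :
    trR c = trR d ∨ trL c = trL d := by
  rcases c with ⟨n, v⟩ | ⟨n, v⟩ | ⟨n, v⟩ <;> rcases d with ⟨m, w⟩ | ⟨m, w⟩ | ⟨m, w⟩ <;>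
    simp only [tileo, Set.mem_setOf_eq] at h h' <;>
    obtain ⟨h1, h2, h3, h4⟩ := h <;> obtain ⟨g1, g2, g3, g4⟩ := h' <;>
    simp only [good] at hc hd <;> simp only [trR, trL, Prod.mk.injEq]
  · have i1 : n < m + 1 := cl (by push_cast; linarith)
    have i2 : m < n + 1 := cl (by push_cast; linarith)
    have i3 : v - n < w - m + 2 := cl (by push_cast; linarith)
    have i4 : w - m < v - n + 2 := cl (by push_cast; linarith)
    omega
  · have i1 : n < m + 1 := cl (by push_cast; linarith)
    have i2 : m < n + 1 := cl (by push_cast; linarith)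
    have i3 : v < w + 2 := cl (by push_cast; linarith)
    have i4 : w < v + 4 := cl (by push_cast; linarith)
    omega
  · have i1 : n < m + 1 := cl (by push_cast; linarith)
    have i2 : m < n + 2 := cl (by push_cast; linarith)
    have i3 : v - n < w - m + 2 := cl (by push_cast; linarith)
    have i4 : w - m < v - n + 2 := cl (by push_cast; linarith)
    omega
  · have i1 : n < m + 1 := cl (by push_cast; linarith)
    have i2 : m < n + 1 := cl (by push_cast; linarith)
    have i3 : w < v + 2 := cl (by push_cast; linarith)
    have i4 : v < w + 4 := cl (by push_cast; linarith)
    omega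
  · have i1 : n < m + 1 := cl (by push_cast; linarith)
    have i2 : m < n + 1 := cl (by push_cast; linarith)
    have i3 : v + n < w + m + 2 := cl (by push_cast; linarith)
    have i4 : w + m < v + n + 2 := cl (by push_cast; linarith)
    omega
  · have i1 : n < m + 1 := cl (by push_cast; linarith)
    have i2 : m < n + 2 := cl (by push_cast; linarith)
    have i3 : v + n < w + m + 2 := cl (by push_cast; linarith)
    have i4 : w + m < v + n + 2 := cl (by push_cast; linarith)
    omega
  · have i1 : m < n + 1 := cl (by push_cast; linarith)
    have i2 : n < m + 2 := cl (by push_cast; linarith)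
    have i3 : v - n < w - m + 2 := cl (by push_cast; linarith)
    have i4 : w - m < v - n + 2 := cl (by push_cast; linarith)
    omega
  · have i1 : m < n + 1 := cl (by push_cast; linarith)
    have i2 : n < m + 2 := cl (by push_cast; linarith)
    have i3 : v + n < w + m + 2 := cl (by push_cast; linarith)
    have i4 : w + m < v + n + 2 := cl (by push_cast; linarith)
    omega
  · have i1 : v - n < w - m + 2 := cl (by push_cast; linarith)
    have i2 : w - m < v - n + 2 := cl (by push_cast; linarith)
    have i3 : v + n < w + m + 2 := cl (by push_cast; linarith)
    have i4 : w + m < v + n + 2 := cl (by push_cast; linarith)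
    omega
end Fock

end

section
open Finset
namespace Fock
open Code PP

theorem trR_eq {c : Code} {m w : ℤ} : trR c = (m, w) ↔ c = up m w ∨ c = dn m w ∨ c = hz m w := by
  cases c <;> simp [trR]
theorem trL_eq {c : Code} {m w : ℤ} : trL c = (m, w) ↔ c = up (m - 1) (w - 1) ∨ c = dn (m - 1) (w + 1) ∨ c = hz m w := by
  cases c <;> simp [trL] <;> omega

theorem ex1_of {α : Type*} {C : Set α} {x y z : α} (h : x ∈ C ∨ y ∈ C ∨ z ∈ C)
    (h2 : ∀ c ∈ C, ∀ d ∈ C, (c = x ∨ c = y ∨ c = z) → (d = x ∨ d = y ∨ d = z) → c = d)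
    (hxy : x ≠ y) (hxz : x ≠ z) (hyz : y ≠ z) : ex1 (x ∈ C) (y ∈ C) (z ∈ C) :=
  ⟨h, fun q => hxy (h2 _ q.1 _ q.2 (by simp) (by simp)), fun q => hxz (h2 _ q.1 _ q.2 (by simp) (by simp)),
    fun q => hyz (h2 _ q.1 _ q.2 (by simp) (by simp))⟩

theorem ex1_uniq {α : Type*} {C : Set α} {x y z c d : α} (h : ex1 (x ∈ C) (y ∈ C) (z ∈ C))
    (hc : c ∈ C) (hd : d ∈ C) (h1 : c = x ∨ c = y ∨ c = z) (h2 : d = x ∨ d = y ∨ d = z) : c = d := by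
  obtain ⟨-, a1, a2, a3⟩ := h
  rcases h1 with rfl | rfl | rfl <;> rcases h2 with rfl | rfl | rfl
  · rfl
  · exact absurd ⟨hc, hd⟩ a1
  · exact absurd ⟨hc, hd⟩ a2
  · exact absurd ⟨hd, hc⟩ a1
  · rfl
  · exact absurd ⟨hc, hd⟩ a3
  · exact absurd ⟨hd, hc⟩ a2
  · exact absurd ⟨hd, hc⟩ a3
  · rfl

section
variable {a b : ℕ} {KZ : ℤ → Prop}

theorem cov_mem {C : Set Code} (h : Cov a b KZ C) {c : Code} (hc : c ∈ C) :
    RR a b KZ (trR c).1 (trR c).2 ∧ LL a b KZ (trL c).1 (trL c).2 := by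
  rcases c with ⟨m, w⟩ | ⟨m, w⟩ | ⟨m, w⟩
  · exact h.hup _ _ hc
  · exact h.hdn _ _ hc
  · exact h.hhz _ _ hc

theorem cov_good {C : Set Code} (h : Cov a b KZ C) {c : Code} (hc : c ∈ C) : good c :=
  good_R.2 (cov_mem h hc).1.1

theorem cov_R {C : Set Code} (h : Cov a b KZ C) {m w : ℤ} (hr : RR a b KZ m w) : ∃ c ∈ C, trR c = (m, w) := by
  simp only [trR_eq]
  rcases (h.hR m w hr).1 with h | h | h
  · exact ⟨_, h, by simp⟩
  · exact ⟨_, h, by simp⟩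
  · exact ⟨_, h, by simp⟩

theorem cov_L {C : Set Code} (h : Cov a b KZ C) {m w : ℤ} (hr : LL a b KZ m w) : ∃ c ∈ C, trL c = (m, w) := by
  simp only [trL_eq]
  rcases (h.hL m w hr).1 with h | h | h
  · exact ⟨_, h, by simp⟩
  · exact ⟨_, h, by simp⟩
  · exact ⟨_, h, by simp⟩

theorem cov_uniq {C : Set Code} (h : Cov a b KZ C) {c d : Code} (hc : c ∈ C) (hd : d ∈ C)
    (e : trR c = trR d ∨ trL c = trL d) : c = d := by
  rcases e with e | e
  · exact ex1_uniq (h.hR _ _ (cov_mem h hc).1) hc hd (trR_eq.1 rfl) (trR_eq.1 e.symm)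
  · exact ex1_uniq (h.hL _ _ (cov_mem h hc).2) hc hd (trL_eq.1 rfl) (trL_eq.1 e.symm)

theorem tiling_of_cov (ha : 0 < a) (hb : 0 < b) (hKZ : ∀ m, KZ m → 0 < m ∧ m < a ∧ m % 2 = 0)
    {R : Set Pt} (hR : ∀ p, p ∈ R ↔ inH a b KZ (xx p) (yy b p)) {C : Set Code} (h : Cov a b KZ C) :
    IsLozengeTiling R (tile b '' C) := by
  have hK : ∀ z, KZ z → z % 2 = 0 := fun z hz => (hKZ z hz).2.2
  refine ⟨?_, ?_, ?_⟩
  · rintro _ ⟨c, hc, rfl⟩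
    exact (lozenge_iff b _).2 ⟨c, cov_good h hc, rfl⟩
  · ext p
    rw [hR, Set.mem_sUnion]
    constructor
    · rintro ⟨_, ⟨c, hc, rfl⟩, hp⟩
      rw [tile_split] at hp
      rcases hp with hp | hp
      · exact inH_of_RR hK (cov_mem h hc).1 hp
      · exact inH_of_LL hK (cov_mem h hc).2 hp
    · intro hp
      obtain ⟨m, w, ⟨h1, h2⟩ | ⟨h1, h2⟩⟩ := cover ha hb hKZ hp
      · obtain ⟨c, hc, e⟩ := cov_R h h1
        refine ⟨_, ⟨c, hc, rfl⟩, ?_⟩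
        rw [tile_split, e]
        exact Or.inl h2
      · obtain ⟨c, hc, e⟩ := cov_L h h1
        refine ⟨_, ⟨c, hc, rfl⟩, ?_⟩
        rw [tile_split, e]
        exact Or.inr h2
  · rintro _ ⟨c, hc, rfl⟩ _ ⟨d, hd, rfl⟩ hne
    rw [tile_int, tile_int, Set.eq_empty_iff_forall_notMem]
    rintro p ⟨h1, h2⟩
    exact hne (by rw [cov_uniq h hc hd (overlap (cov_good h hc) (cov_good h hd) h1 h2)])

def codes (b : ℕ) (T : Set (Set Pt)) : Set Code := {c | good c ∧ tile b c ∈ T}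

theorem codes_img {R : Set Pt} {T : Set (Set Pt)} (h : IsLozengeTiling R T) : tile b '' codes b T = T := by
  ext L
  constructor
  · rintro ⟨c, ⟨h1, h2⟩, rfl⟩; exact h2
  · intro hL
    obtain ⟨c, hc, rfl⟩ := (lozenge_iff b L).1 (h.1 L hL)
    exact ⟨c, ⟨hc, hL⟩, rfl⟩

theorem codes_mem {R : Set Pt} (hR : ∀ p, p ∈ R ↔ inH a b KZ (xx p) (yy b p)) {T : Set (Set Pt)}
    (h : IsLozengeTiling R T) {c : Code} (hc : c ∈ codes b T) :
    RR a b KZ (trR c).1 (trR c).2 ∧ LL a b KZ (trL c).1 (trL c).2 := by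
  have hs : tile b c ⊆ R := h.2.1 ▸ Set.subset_sUnion_of_mem hc.2
  constructor
  · apply RR_of_inH (good_R.1 hc.1)
    have := (hR _).1 (hs (tileo_sub b c (bR_mem b c)))
    rw [bR, xx_pt, yy_pt] at this
    exact this
  · apply LL_of_inH (good_L.1 hc.1)
    have := (hR _).1 (hs (tileo_sub b c (bL_mem b c)))
    rw [bL, xx_pt, yy_pt] at this
    exact this

theorem codes_uniq {R : Set Pt} {T : Set (Set Pt)}
    (h : IsLozengeTiling R T) {c d : Code} (hc : c ∈ codes b T) (hd : d ∈ codes b T)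
    (e : trR c = trR d ∨ trL c = trL d) : c = d := by
  by_contra hne
  have := h.2.2 _ hc.2 _ hd.2 (fun e => hne (tile_inj hc.1 hd.1 e))
  rw [tile_int, tile_int, Set.eq_empty_iff_forall_notMem] at this
  rcases e with e | e
  · exact this _ ⟨bR_mem b c, e ▸ bR_mem b d⟩
  · exact this _ ⟨bL_mem b c, e ▸ bL_mem b d⟩

theorem cov_codes (hK : ∀ z, KZ z → z % 2 = 0) {R : Set Pt} (hR : ∀ p, p ∈ R ↔ inH a b KZ (xx p) (yy b p)) {T : Set (Set Pt)}
    (h : IsLozengeTiling R T) : Cov a b KZ (codes b T) := by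
  have hcov : ∀ p ∈ R, ∃ c ∈ codes b T, p ∈ tile b c := by
    intro p hp
    rw [← h.2.1, ← codes_img (b := b) h] at hp
    obtain ⟨_, ⟨c, hc, rfl⟩, hp⟩ := hp
    exact ⟨c, hc, hp⟩
  refine ⟨fun m w hc => codes_mem hR h hc, fun m w hc => codes_mem hR h hc, fun m w hc => codes_mem hR h hc, ?_, ?_⟩
  · intro m w hr
    refine ex1_of ?_ (fun c hc d hd e1 e2 => codes_uniq h hc hd (Or.inl ?_)) (by simp) (by simp) (by simp)
    · have h1 : bR b (m, w) ∈ R := by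
        rw [hR]
        apply inH_of_RR hK hr
        rw [bR, xx_pt, yy_pt]
        refine ⟨?_, ?_, ?_⟩ <;> simp only <;> linarith
      obtain ⟨c, hc, hp⟩ := hcov _ h1
      rcases trR_eq.1 (bR_inv hc.1 hr.1 hp) with rfl | rfl | rfl
      · exact Or.inl hc
      · exact Or.inr (Or.inl hc)
      · exact Or.inr (Or.inr hc)
    · rw [trR_eq.2 e1, trR_eq.2 e2]
  · intro m w hr
    refine ex1_of ?_ (fun c hc d hd e1 e2 => codes_uniq h hc hd (Or.inr ?_)) (by simp) (by simp) (by simp)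
    · have h1 : bL b (m, w) ∈ R := by
        rw [hR]
        apply inH_of_LL hK hr
        rw [bL, xx_pt, yy_pt]
        refine ⟨?_, ?_, ?_⟩ <;> simp only <;> linarith
      obtain ⟨c, hc, hp⟩ := hcov _ h1
      rcases trL_eq.1 (bL_inv hc.1 hr.1 hp) with rfl | rfl | rfl
      · exact Or.inl hc
      · exact Or.inr (Or.inl hc)
      · exact Or.inr (Or.inr hc)
    · rw [trL_eq.2 e1, trL_eq.2 e2]

theorem xx_rot (a b : ℕ) (p : Pt) : xx (rot180 a b p) = 2 * a - xx p := by
  have := s3_pos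
  simp only [xx, rot180]; field_simp
theorem yy_rot (a b : ℕ) (p : Pt) : yy b (rot180 a b p) = -yy b p := by
  simp only [yy, rot180]; ring
theorem xx_refl (a : ℕ) (p : Pt) : xx (reflV a p) = 2 * a - xx p := by
  have := s3_pos
  simp only [xx, reflV]; field_simp
theorem yy_refl (a b : ℕ) (p : Pt) : yy b (reflV a p) = yy b p := by
  simp only [yy, reflV]

theorem img_of {f : Pt → Pt} (hf : ∀ p, f (f p) = p) {S S' : Set Pt} (h : ∀ p, f p ∈ S' ↔ p ∈ S) : f '' S = S' := by
  ext p
  constructor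
  · rintro ⟨q, hq, rfl⟩; exact (h q).2 hq
  · intro hp; exact ⟨f p, (h _).1 (by rw [hf]; exact hp), hf p⟩

theorem rot_tile (a b : ℕ) (c : Code) : rot180 a b '' tile b c = tile b (rotc a c) := by
  apply img_of
  · intro p; simp only [rot180]; ext <;> simp
  · intro p
    rcases c with ⟨m, w⟩ | ⟨m, w⟩ | ⟨m, w⟩ <;> simp only [tile, rotc, Set.mem_setOf_eq, xx_rot, yy_rot] <;> push_cast <;>
      constructor <;> rintro ⟨h1, h2, h3, h4⟩ <;> refine ⟨?_, ?_, ?_, ?_⟩ <;> linarith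

theorem refl_tile (a b : ℕ) (c : Code) : reflV a '' tile b c = tile b (reflc a c) := by
  apply img_of
  · intro p; simp only [reflV]; ext <;> simp
  · intro p
    rcases c with ⟨m, w⟩ | ⟨m, w⟩ | ⟨m, w⟩ <;> simp only [tile, reflc, Set.mem_setOf_eq, xx_refl, yy_refl a b] <;> push_cast <;>
      constructor <;> rintro ⟨h1, h2, h3, h4⟩ <;> refine ⟨?_, ?_, ?_, ?_⟩ <;> linarith

theorem good_rot {a : ℕ} {c : Code} (h : good c) : good (rotc a c) := by
  cases c <;> simp only [good, rotc] at * <;> omega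
theorem good_refl {a : ℕ} {c : Code} (h : good c) : good (reflc a c) := by
  cases c <;> simp only [good, reflc] at * <;> omega

theorem mem_img {C : Set Code} (hC : ∀ c ∈ C, good c) {c : Code} (hc : good c) : tile b c ∈ tile b '' C ↔ c ∈ C := by
  constructor
  · rintro ⟨d, hd, e⟩
    rw [← tile_inj (hC d hd) hc e]; exact hd
  · intro h; exact ⟨c, h, rfl⟩

theorem rot_iff {C : Set Code} (hC : ∀ c ∈ C, good c) : RotInvariant a b (tile b '' C) ↔ Rot a C := by
  constructor
  · intro h c hc
    rw [← mem_img (b := b) hC (good_rot (hC c hc)), ← rot_tile]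
    exact h _ ⟨c, hc, rfl⟩
  · rintro h _ ⟨c, hc, rfl⟩
    rw [rot_tile]
    exact ⟨_, h c hc, rfl⟩

theorem refl_iff {C : Set Code} (hC : ∀ c ∈ C, good c) : ReflInvariant a (tile b '' C) ↔ Refl a C := by
  constructor
  · intro h c hc
    rw [← mem_img (b := b) hC (good_refl (hC c hc)), ← refl_tile]
    exact h _ ⟨c, hc, rfl⟩
  · rintro h _ ⟨c, hc, rfl⟩
    rw [refl_tile]
    exact ⟨_, h c hc, rfl⟩

theorem img_inj {C D : Set Code} (hC : ∀ c ∈ C, good c) (hD : ∀ c ∈ D, good c) (h : tile b '' C = tile b '' D) : C = D := by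
  ext c
  constructor
  · intro hc; rw [← mem_img (b := b) hD (hC c hc), ← h]; exact ⟨c, hc, rfl⟩
  · intro hc; rw [← mem_img (b := b) hC (hD c hc), h]; exact ⟨c, hc, rfl⟩

theorem card_tilings (ha : 0 < a) (hb : 0 < b) (hKZ : ∀ m, KZ m → 0 < m ∧ m < a ∧ m % 2 = 0)
    {R : Set Pt} (hR : ∀ p, p ∈ R ↔ inH a b KZ (xx p) (yy b p))
    (P : Set (Set Pt) → Prop) (Q : Set Code → Prop)
    (hPQ : ∀ C, (∀ c ∈ C, good c) → (P (tile b '' C) ↔ Q C)) :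
    Nat.card {T : Set (Set Pt) // IsLozengeTiling R T ∧ P T} = Nat.card {C : Set Code // Cov a b KZ C ∧ Q C} := by
  symm
  have hK : ∀ z, KZ z → z % 2 = 0 := fun z hz => (hKZ z hz).2.2
  refine Nat.card_congr (Equiv.ofBijective (fun C => ⟨tile b '' C.1, tiling_of_cov ha hb hKZ hR C.2.1,
    (hPQ C.1 (fun c => cov_good C.2.1)).2 C.2.2⟩) ⟨?_, ?_⟩)
  · rintro ⟨C, hC, hq⟩ ⟨D, hD, hq'⟩ e
    exact Subtype.ext (img_inj (fun c => cov_good hC) (fun c => cov_good hD) (congrArg Subtype.val e))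
  · rintro ⟨T, hT, hp⟩
    refine ⟨⟨codes b T, cov_codes hK hR hT, ?_⟩, Subtype.ext (codes_img hT)⟩
    rw [← hPQ _ (fun c hc => hc.1), codes_img hT]
    exact hp

theorem no_tiling (hb : 0 < b) (hKZ : ∀ m, KZ m → 0 < m ∧ m ≤ a ∧ m % 2 = 0) (hKa : KZ a)
    {R : Set Pt} (hR : ∀ p, p ∈ R ↔ inH a b KZ (xx p) (yy b p)) {T : Set (Set Pt)} : ¬ IsLozengeTiling R T := by
  intro h
  have hb' : (1 : ℝ) ≤ b := by exact_mod_cast hb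
  have ha0 : (0 : ℝ) ≤ a := by positivity
  have hp : pt b a (1 / 2) ∈ R := by
    rw [hR, xx_pt, yy_pt]
    refine ⟨by linarith, by linarith, by linarith, by linarith, by linarith, by linarith, ?_, ?_⟩
    · rintro z hz ⟨q, -⟩
      have : (z : ℝ) ≤ a := by exact_mod_cast (hKZ z hz).2.1
      linarith
    · rintro z hz ⟨q, -⟩
      have : (z : ℝ) ≤ a := by exact_mod_cast (hKZ z hz).2.1
      linarith
  rw [← h.2.1, ← codes_img (b := b) h] at hp
  obtain ⟨_, ⟨c, hc, rfl⟩, hp⟩ := hp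
  obtain ⟨h1, h2⟩ := codes_mem hR h hc
  have hpar := (hKZ a hKa).2.2
  rw [tile_split, xx_pt, yy_pt] at hp
  rcases hp with ⟨t1, t2, t3⟩ | ⟨t1, t2, t3⟩
  · generalize (trR c).1 = m at *
    generalize (trR c).2 = w at *
    have i1 : m ≤ (a : ℤ) := by exact_mod_cast t1
    have i2 : 1 + 2 * (a - m) - 2 * w ≤ 2 := cs (by push_cast; linarith)
    have i3 : -1 + 2 * (a - m) + 2 * w ≤ 2 := cs (by push_cast; linarith)
    have i4 := h1.1
    have e1 : m = a := by omega
    have e2 : w = 1 := by omega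
    subst e1 e2
    exact h1.2.2.2.2.2.2.2.2.1 ⟨Or.inl rfl, by rw [show 2 * (a : ℤ) - a = a by ring]; exact hKa⟩
  · generalize (trL c).1 = m at *
    generalize (trL c).2 = w at *
    have i1 : (a : ℤ) ≤ m := by exact_mod_cast t1
    have i2 : 1 + 2 * (m - a) - 2 * w ≤ 2 := cs (by push_cast; linarith)
    have i3 : -1 + 2 * (m - a) + 2 * w ≤ 2 := cs (by push_cast; linarith)
    have i4 := h2.1
    have e1 : m = a := by omega
    have e2 : w = 1 := by omega
    subst e1 e2
    exact h2.2.2.2.2.2.2.2.2.1 ⟨Or.inl rfl, hKa⟩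
end

theorem final (a b s : ℕ) (ha : 0 < a) (hb : 0 < b)
    (k : Fin s → ℕ) (hpos : ∀ i, 0 < k i)
    (hbound : ∀ i, 2 * k i ≤ a) :
    Mrot a b (Hreg a b s k) = MrotRefl a b (Hreg a b s k) ^ 2 := by
  have hR := mem_Hreg a b s ha k
  unfold Mrot MrotRefl
  by_cases hE : ∃ i, 2 * k i = a
  · obtain ⟨i, hi⟩ := hE
    have hno : ∀ T, ¬ IsLozengeTiling (Hreg a b s k) T := fun T => no_tiling hb (by
      rintro m ⟨j, rfl⟩
      have := hpos j
      have := hbound j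
      omega) ⟨i, by omega⟩ hR
    have : IsEmpty {T : Set (Set Pt) // IsLozengeTiling (Hreg a b s k) T ∧ RotInvariant a b T} :=
      ⟨fun T => hno _ T.2.1⟩
    have : IsEmpty {T : Set (Set Pt) // IsLozengeTiling (Hreg a b s k) T ∧ RotInvariant a b T ∧ ReflInvariant a T} :=
      ⟨fun T => hno _ T.2.1⟩
    rw [Nat.card_of_isEmpty, Nat.card_of_isEmpty]
    norm_num
  · have hKZ : ∀ m : ℤ, (∃ i, m = 2 * (k i : ℤ)) → 0 < m ∧ m < a ∧ m % 2 = 0 := by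
      rintro m ⟨j, rfl⟩
      have := hpos j
      have := hbound j
      have : 2 * k j ≠ a := fun h => hE ⟨j, h⟩
      omega
    rw [card_tilings ha hb hKZ hR (RotInvariant a b) (Rot a) (fun C hC => rot_iff hC),
      card_tilings ha hb hKZ hR (fun T => RotInvariant a b T ∧ ReflInvariant a T) (fun C => Rot a C ∧ Refl a C)
        (fun C hC => and_congr (rot_iff hC) (refl_iff hC))]
    exact discrete ha hb hKZ
end Fock

end

open PP in
/-- Theorem 2.1, equation (2.3):
`M_⊙(H_{a,2b}(k_1,…,k_s)) = M_{⊙,|}(H_{a,2b}(k_1,…,k_s))²`. -/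
theorem Mrot_Hreg_eq_MrotRefl_sq (a b s : ℕ) (ha : 0 < a) (hb : 0 < b) (hs : 0 < s)
    (k : Fin s → ℕ) (hmono : StrictMono k) (hpos : ∀ i, 0 < k i)
    (hbound : ∀ i, 2 * k i ≤ a) :
    Mrot a b (Hreg a b s k) = MrotRefl a b (Hreg a b s k) ^ 2 := by
  exact Fock.final a b s ha hb k hpos hbound
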